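/- For all positive integers m, n there exist constants k# and C#, depending only on m and n, with the following property. Let E ⊂ ℝⁿ be finite and let f : E → [0,∞). Suppose that for each subset S ⊆ E with #(S) ≤ k# there exists F^S ∈ C^m(ℝⁿ) with ‖F^S‖_{C^m(ℝⁿ)} ≤ 1, F^S = f on S, and F^S ≥ 0 everywhere on ℝⁿ. Then there exists F ∈ C^m(ℝⁿ) with ‖F‖_{C^m(ℝⁿ)} ≤ C#, F = f on E, and F ≥ 0 everywhere on ℝⁿ. -/

import Mathlib

open scoped BigOperators

noncomputable section

abbrev Euc (n : ℕ) : Type := EuclideanSpace ℝ (Fin n)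
abbrev MPoly (n : ℕ) : Type := MvPolynomial (Fin n) ℝ

/-- Partial derivative in the `i`-th coordinate direction. -/
noncomputable def pD {n : ℕ} (i : Fin n) (F : Euc n → ℝ) : Euc n → ℝ :=
  fun x => fderiv ℝ F x (EuclideanSpace.single i (1 : ℝ))

/-- The multi-index partial derivative `∂^α F`. -/
noncomputable def mD {n : ℕ} (α : Fin n → ℕ) (F : Euc n → ℝ) : Euc n → ℝ :=
  (((List.finRange n).flatMap fun i => List.replicate (α i) i)).foldr pD F

/-- Partial derivative within a set. -/
noncomputable def pDW {n : ℕ} (s : Set (Euc n)) (i : Fin n) (F : Euc n → ℝ) : Euc n → ℝ :=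
  fun x => fderivWithin ℝ F s x (EuclideanSpace.single i (1 : ℝ))

/-- Multi-index partial derivative within a set. -/
noncomputable def mDW {n : ℕ} (s : Set (Euc n)) (α : Fin n → ℕ) (F : Euc n → ℝ) : Euc n → ℝ :=
  (((List.finRange n).flatMap fun i => List.replicate (α i) i)).foldr (pDW s) F

/-- The order `|α|` of a multi-index. -/
def deg {n : ℕ} (α : Fin n → ℕ) : ℕ := ∑ i, α i

/-- Evaluation of an `n`-variable polynomial at a point of `ℝⁿ`. -/
noncomputable def peval {n : ℕ} (P : MPoly n) (x : Euc n) : ℝ :=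
  MvPolynomial.eval (fun i => x i) P

/-- `F ∈ C^m(ℝⁿ)` with `‖F‖_{C^m(ℝⁿ)} ≤ M`. -/
def CmNormLe (m n : ℕ) (F : Euc n → ℝ) (M : ℝ) : Prop :=
  ContDiff ℝ (m : ℕ∞) F ∧ ∀ α : Fin n → ℕ, deg α ≤ m → ∀ x : Euc n, |mD α F x| ≤ M

/-- `F ∈ C^{m-1,1}(ℝⁿ)` with `‖F‖_{C^{m-1,1}(ℝⁿ)} ≤ M`. -/
def CmLipNormLe (m n : ℕ) (F : Euc n → ℝ) (M : ℝ) : Prop :=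
  ContDiff ℝ ((m - 1 : ℕ) : ℕ∞) F ∧
  (∀ α : Fin n → ℕ, deg α ≤ m - 1 → ∀ x : Euc n, |mD α F x| ≤ M) ∧
  (∀ α : Fin n → ℕ, deg α = m - 1 → ∀ i : Fin n, ∀ x : Euc n, ∀ t : ℝ,
    |mD α F (x + t • EuclideanSpace.single i (1 : ℝ)) - mD α F x| ≤ M * |t|)

/-- `J_x(F) = P`, i.e. `P` is the `(m-1)`-st order Taylor polynomial of `F` at `x`. -/
def IsJetAt (m n : ℕ) (F : Euc n → ℝ) (x : Euc n) (P : MPoly n) : Prop :=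
  P.totalDegree ≤ m - 1 ∧
  ∀ α : Fin n → ℕ, deg α ≤ m - 1 → mD α (peval P) x = mD α F x

/-- `J_x^+(F) = P`, i.e. `P` is the `m`-th order Taylor polynomial of `F` at `x`. -/
def IsJetPlusAt (m n : ℕ) (F : Euc n → ℝ) (x : Euc n) (P : MPoly n) : Prop :=
  P.totalDegree ≤ m ∧
  ∀ α : Fin n → ℕ, deg α ≤ m → mD α (peval P) x = mD α F x

/-- Truncation of a polynomial: keep the monomials of total degree `≤ d`. -/
noncomputable def truncLE {n : ℕ} (d : ℕ) (P : MPoly n) : MPoly n :=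
  ∑ s ∈ P.support.filter (fun s => (s.sum fun _ e => e) ≤ d),
    MvPolynomial.monomial s (P.coeff s)

/-- Substitution `y ↦ y + v` in a polynomial. -/
noncomputable def polyShift {n : ℕ} (v : Fin n → ℝ) (P : MPoly n) : MPoly n :=
  MvPolynomial.aeval (fun i => (MvPolynomial.X i + MvPolynomial.C (v i) : MPoly n)) P

/-- The `(m-1)`-st order Taylor polynomial of a polynomial `P` at `x`. -/
noncomputable def jetTrunc (m n : ℕ) (x : Euc n) (P : MPoly n) : MPoly n :=
  polyShift (fun i => -(x i)) (truncLE (m - 1) (polyShift (fun i => x i) P))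

/-- Multiplication of `(m-1)`-jets at `x`: `P ⊙_x Q = J_x(PQ)`. -/
noncomputable def jmul (m n : ℕ) (x : Euc n) (P Q : MPoly n) : MPoly n :=
  jetTrunc m n x (P * Q)

/-- `Γ*(x,M)`. -/
def GammaStar (m n : ℕ) (x : Euc n) (M : ℝ) : Set (MPoly n) :=
  {P | ∃ F : Euc n → ℝ, CmNormLe m n F M ∧ (∀ y, 0 ≤ F y) ∧ IsJetAt m n F x P}

/-- `Γ_f(x,M)`. -/
def GammaF (m n : ℕ) (f : Euc n → ℝ) (x : Euc n) (M : ℝ) : Set (MPoly n) :=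
  {P ∈ GammaStar m n x M | peval P x = f x}

/-- `Γ'*(x,M)` (the `C^{m-1,1}` version). -/
def GammaStar' (m n : ℕ) (x : Euc n) (M : ℝ) : Set (MPoly n) :=
  {P | ∃ F : Euc n → ℝ, CmLipNormLe m n F M ∧ (∀ y, 0 ≤ F y) ∧ IsJetAt m n F x P}

/-- `Γ'_f(x,M)`. -/
def GammaF' (m n : ℕ) (f : Euc n → ℝ) (x : Euc n) (M : ℝ) : Set (MPoly n) :=
  {P ∈ GammaStar' m n x M | peval P x = f x}

/-- `Γ₀⁺`. -/
def Gamma0plus (m n : ℕ) : Set (MPoly n) :=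
  {P | P.totalDegree ≤ m ∧
    (∀ β : Fin n → ℕ, deg β ≤ m → |mD β (peval P) 0| ≤ 1) ∧
    (∀ x : Euc n, 0 ≤ peval P x + ‖x‖ ^ m) ∧
    (∀ ε : ℝ, 0 < ε → ∃ δ : ℝ, 0 < δ ∧ ∀ x : Euc n, ‖x‖ ≤ δ → 0 ≤ peval P x + ε * ‖x‖ ^ m)}

/-- `Γ̃₀'`. -/
def GammaTilde0' (m n : ℕ) : Set (MPoly n) :=
  {P | P.totalDegree ≤ m - 1 ∧
    (∀ β : Fin n → ℕ, deg β ≤ m - 1 → |mD β (peval P) 0| ≤ 1) ∧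
    ∀ x : Euc n, 0 ≤ peval P x + ‖x‖ ^ m}

/-- The closed axis-parallel cube with center `c` and sidelength `δ`. -/
def cube {n : ℕ} (c : Euc n) (δ : ℝ) : Set (Euc n) :=
  {y | ∀ i, |y i - c i| ≤ δ / 2}

/-- `F ∈ C^{m-1,1}(Q)` with `‖F‖_{C^{m-1,1}(Q)} ≤ M`, for the cube `Q` of center `c`,
sidelength `δ`. -/
def CmLipOnCubeLe (m n : ℕ) (c : Euc n) (δ : ℝ) (F : Euc n → ℝ) (M : ℝ) : Prop :=
  ContDiffOn ℝ ((m - 1 : ℕ) : ℕ∞) F (cube c δ) ∧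
  (∀ α : Fin n → ℕ, deg α ≤ m - 1 → ∀ x ∈ cube c δ, |mDW (cube c δ) α F x| ≤ M) ∧
  (∀ α : Fin n → ℕ, deg α = m - 1 → ∀ i : Fin n, ∀ x ∈ cube c δ, ∀ t : ℝ,
    x + t • EuclideanSpace.single i (1 : ℝ) ∈ cube c δ →
    |mDW (cube c δ) α F (x + t • EuclideanSpace.single i (1 : ℝ)) - mDW (cube c δ) α F x|
      ≤ M * |t|)

noncomputable section
open scoped BigOperators

/-- Iterated partial derivative along a list of coordinate directions. -/
def pL {n : ℕ} (l : List (Fin n)) (F : Euc n → ℝ) : Euc n → ℝ := l.foldr pD F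

/-- The list of coordinate directions attached to a multi-index. -/
def mL {n : ℕ} (α : Fin n → ℕ) : List (Fin n) :=
  (List.finRange n).flatMap fun i => List.replicate (α i) i

lemma mD_eq_pL {n : ℕ} (α : Fin n → ℕ) (F : Euc n → ℝ) : mD α F = pL (mL α) F := rfl

lemma count_mL {n : ℕ} (α : Fin n → ℕ) (i : Fin n) : (mL α).count i = α i := by
  unfold mL
  rw [List.count_flatMap, ← List.ofFn_eq_map, List.sum_ofFn]
  rw [Finset.sum_eq_single i]
  · simp
  · intro j _ hj
    simp [List.count_replicate, hj]
  · simp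

lemma length_mL {n : ℕ} (α : Fin n → ℕ) : (mL α).length = deg α := by
  unfold mL deg
  rw [List.length_flatMap, ← List.ofFn_eq_map, List.sum_ofFn]
  simp

lemma pD_contDiff {n k : ℕ} {F : Euc n → ℝ} (h : ContDiff ℝ ((k + 1 : ℕ)) F) (i : Fin n) :
    ContDiff ℝ (k : ℕ) (pD i F) := by
  unfold pD
  exact (h.fderiv_right (m := (k : ℕ)) (by norm_cast)).clm_apply contDiff_const

lemma pL_contDiff {n : ℕ} (l : List (Fin n)) : ∀ {k : ℕ} {F : Euc n → ℝ},
    ContDiff ℝ ((k + l.length : ℕ)) F → ContDiff ℝ (k : ℕ) (pL l F) := by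
  induction l with
  | nil => intro k F h; simpa [pL] using h
  | cons a l ih =>
    intro k F h
    have : ContDiff ℝ ((k + 1 : ℕ)) (pL l F) := by
      apply ih
      convert h using 2
      simp; ring
    exact pD_contDiff this a

lemma pL_eq_iter {n : ℕ} (l : List (Fin n)) : ∀ {F : Euc n → ℝ},
    ContDiff ℝ ((l.length : ℕ)) F → ∀ x, pL l F x = iteratedFDeriv ℝ l.length F x
      (fun j => EuclideanSpace.single (l.get j) (1 : ℝ)) := by
  induction l with
  | nil => intro F h x; simp [pL]
  | cons a l ih =>
    intro F h x
    have h1 : ContDiff ℝ ((l.length : ℕ)) F := h.of_le (by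
      simp only [List.length_cons]; exact_mod_cast Nat.le_succ _)
    have h2 : pL l F = fun y => iteratedFDeriv ℝ l.length F y
      (fun j => EuclideanSpace.single (l.get j) (1 : ℝ)) := funext (ih h1)
    have h3 : DifferentiableAt ℝ (iteratedFDeriv ℝ l.length F) x :=
      (h.differentiable_iteratedFDeriv (by
        simp only [List.length_cons]; exact_mod_cast Nat.lt_succ_self _)).differentiableAt
    show pD a (pL l F) x = _
    simp only [List.length_cons]
    rw [iteratedFDeriv_succ_apply_left, h2]
    unfold pD
    have := (h3.hasFDerivAt.continuousMultilinear_apply_const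
      (fun j => EuclideanSpace.single (l.get j) (1 : ℝ))).fderiv
    rw [this]
    rfl

lemma pD_comm {n : ℕ} {G : Euc n → ℝ} (h : ContDiff ℝ (2 : ℕ) G) (a b : Fin n) :
    pD a (pD b G) = pD b (pD a G) := by
  funext x
  have hs : IsSymmSndFDerivAt ℝ G x := (h.contDiffAt).isSymmSndFDerivAt (by simp)
  have hd : DifferentiableAt ℝ (fderiv ℝ G) x :=
    ((h.fderiv_right (m := (1 : ℕ)) (by norm_num)).differentiable (by simp)).differentiableAt
  unfold pD
  rw [fderiv_clm_apply hd (by fun_prop), fderiv_clm_apply hd (by fun_prop)]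
  simp [hs.eq]

lemma pL_perm {n : ℕ} {l l' : List (Fin n)} (hp : l.Perm l') : ∀ {F : Euc n → ℝ},
    ContDiff ℝ ((l.length : ℕ)) F → pL l F = pL l' F := by
  induction hp with
  | nil => intros; rfl
  | cons a hp ih =>
    intro F h
    have := ih (F := F) (h.of_le (by simp only [List.length_cons]; exact_mod_cast Nat.le_succ _))
    show pD a (pL _ F) = pD a (pL _ F)
    rw [this]
  | swap a b l =>
    intro F h
    show pD b (pD a (pL l F)) = pD a (pD b (pL l F))
    apply pD_comm
    apply pL_contDiff
    convert h using 2
    simp; ring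
  | trans h1 h2 ih1 ih2 =>
    intro F h
    rw [ih1 h]
    apply ih2
    rwa [← h1.length_eq]

lemma pL_eq_mD {n : ℕ} (l : List (Fin n)) {F : Euc n → ℝ}
    (h : ContDiff ℝ ((l.length : ℕ)) F) : pL l F = mD (fun i => l.count i) F := by
  rw [mD_eq_pL]
  apply pL_perm _ h
  rw [List.perm_iff_count]
  intro a
  rw [count_mL]

lemma deg_count {n : ℕ} (l : List (Fin n)) : deg (fun i => l.count i) = l.length := by
  rw [← length_mL]
  apply List.Perm.length_eq
  rw [List.perm_iff_count]
  intro a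
  rw [count_mL]

lemma mD_eq_iter {n : ℕ} (α : Fin n → ℕ) {F : Euc n → ℝ} (h : ContDiff ℝ ((deg α : ℕ)) F)
    (x : Euc n) : mD α F x = iteratedFDeriv ℝ (deg α) F x
      (fun j => EuclideanSpace.single ((mL α).get (j.cast (length_mL α).symm)) (1 : ℝ)) := by
  rw [mD_eq_pL, pL_eq_iter _ (by rwa [length_mL])]
  have key : ∀ (k : ℕ) (hk : (mL α).length = k), iteratedFDeriv ℝ (mL α).length F x
      (fun j => EuclideanSpace.single ((mL α).get j) (1 : ℝ)) = iteratedFDeriv ℝ k F x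
      (fun j => EuclideanSpace.single ((mL α).get (j.cast hk.symm)) (1 : ℝ)) := by
    rintro k rfl; rfl
  exact key _ (length_mL α)

lemma abs_mD_le {n : ℕ} (α : Fin n → ℕ) {F : Euc n → ℝ} (h : ContDiff ℝ ((deg α : ℕ)) F)
    (x : Euc n) : |mD α F x| ≤ ‖iteratedFDeriv ℝ (deg α) F x‖ := by
  rw [mD_eq_iter α h, ← Real.norm_eq_abs]
  refine (ContinuousMultilinearMap.le_opNorm _ _).trans ?_
  simp

lemma norm_multilinear_le {n k : ℕ} (f : ContinuousMultilinearMap ℝ (fun _ : Fin k => Euc n) ℝ)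
    (K : ℝ) (hK : 0 ≤ K)
    (h : ∀ t : Fin k → Fin n, |f (fun j => EuclideanSpace.single (t j) (1 : ℝ))| ≤ K) :
    ‖f‖ ≤ (n : ℝ) ^ k * K := by
  refine f.opNorm_le_bound (by positivity) ?_
  intro v
  have hv : v = fun j => ∑ i : Fin n, (v j i) • (EuclideanSpace.single i (1 : ℝ) : Euc n) := by
    funext j
    ext i
    simp [Finset.sum_apply, Pi.single_apply]
  have h1 : f v = ∑ t : Fin k → Fin n, (∏ j, v j (t j)) *
      f (fun j => EuclideanSpace.single (t j) (1 : ℝ)) := by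
    conv_lhs => rw [hv]
    rw [f.map_sum]
    refine Finset.sum_congr rfl fun t _ => ?_
    rw [f.map_smul_univ]
    simp
  rw [h1]
  refine (norm_sum_le _ _).trans ?_
  have h2 : ∀ t : Fin k → Fin n, ‖(∏ j, v j (t j)) *
      f (fun j => EuclideanSpace.single (t j) (1 : ℝ))‖ ≤ (∏ j, ‖v j‖) * K := by
    intro t
    rw [norm_mul]
    apply mul_le_mul _ (h t) (abs_nonneg _) (by positivity)
    rw [norm_prod]
    exact Finset.prod_le_prod (fun _ _ => norm_nonneg _) (fun j _ => PiLp.norm_apply_le (v j) (t j))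
  refine (Finset.sum_le_sum fun t _ => h2 t).trans ?_
  simp
  apply le_of_eq
  ring

lemma norm_iter_le {n k : ℕ} {F : Euc n → ℝ} (hF : ContDiff ℝ (k : ℕ) F) (x : Euc n) (K : ℝ)
    (hK : 0 ≤ K) (h : ∀ α : Fin n → ℕ, deg α = k → |mD α F x| ≤ K) :
    ‖iteratedFDeriv ℝ k F x‖ ≤ (n : ℝ) ^ k * K := by
  apply norm_multilinear_le _ _ hK
  intro t
  have h1 := pL_eq_iter (List.ofFn t) (F := F) (by simpa using hF) x
  have h2 : iteratedFDeriv ℝ (List.ofFn t).length F x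
      (fun j => EuclideanSpace.single ((List.ofFn t).get j) (1 : ℝ)) = iteratedFDeriv ℝ k F x
      (fun j => EuclideanSpace.single (t j) (1 : ℝ)) := by
    have key : ∀ (l : List (Fin n)) (k' : ℕ) (hk : l.length = k') (t : Fin k' → Fin n)
      (ht : ∀ j, l.get (j.cast hk.symm) = t j), iteratedFDeriv ℝ l.length F x
      (fun j => EuclideanSpace.single (l.get j) (1 : ℝ)) = iteratedFDeriv ℝ k' F x
      (fun j => EuclideanSpace.single (t j) (1 : ℝ)) := by
      rintro l k' rfl t ht
      congr 1
      funext j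
      rw [← ht]; rfl
    apply key _ _ (by simp)
    intro j; simp
  rw [← h2, ← h1, pL_eq_mD _ (by simpa using hF)]
  apply h
  rw [deg_count]; simp

/-- Taylor type bound. -/
lemma taylor_bound {n m : ℕ} {G : Euc n → ℝ} (hG : ContDiff ℝ (m : ℕ) G) (x : Euc n) {K r : ℝ}
    (hK : 0 ≤ K) (hr : 0 < r)
    (h0 : ∀ k < m, ‖iteratedFDeriv ℝ k G x‖ ≤ K * r ^ (m - k))
    (h1 : ∀ z ∈ Metric.closedBall x r, ‖iteratedFDeriv ℝ m G z‖ ≤ K) :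
    ∀ k ≤ m, ∀ z ∈ Metric.closedBall x r, ‖iteratedFDeriv ℝ k G z‖ ≤ 2 ^ m * K * r ^ (m - k) := by
  have key : ∀ j ≤ m, ∀ z ∈ Metric.closedBall x r,
      ‖iteratedFDeriv ℝ (m - j) G z‖ ≤ 2 ^ j * K * r ^ j := by
    intro j
    induction j with
    | zero => intro _ z hz; simpa using h1 z hz
    | succ j ih =>
      intro hj z hz
      have hlt : m - (j + 1) < m := by omega
      have e1 : m - (j + 1) + 1 = m - j := by omega
      have hd : Differentiable ℝ (iteratedFDeriv ℝ (m - (j + 1)) G) :=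
        hG.differentiable_iteratedFDeriv (by exact_mod_cast hlt)
      have hmv := (convex_closedBall x r).norm_image_sub_le_of_norm_fderiv_le (𝕜 := ℝ)
        (f := iteratedFDeriv ℝ (m - (j + 1)) G) (C := 2 ^ j * K * r ^ j)
        (fun y _ => hd y) (fun y hy => by
          rw [norm_fderiv_iteratedFDeriv, e1]; exact ih (by omega) y hy)
        (Metric.mem_closedBall_self hr.le) hz
      have h2 := h0 _ hlt
      have e2 : m - (m - (j + 1)) = j + 1 := by omega
      rw [e2] at h2
      have h3 : ‖z - x‖ ≤ r := by simpa [dist_eq_norm] using hz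
      have h4 : 2 ^ j * K * r ^ j * ‖z - x‖ ≤ 2 ^ j * K * r ^ j * r := by gcongr
      have h5 : ‖iteratedFDeriv ℝ (m - (j + 1)) G z‖ ≤ ‖iteratedFDeriv ℝ (m - (j + 1)) G x‖ +
          ‖iteratedFDeriv ℝ (m - (j + 1)) G z - iteratedFDeriv ℝ (m - (j + 1)) G x‖ := by
        have := norm_add_le (iteratedFDeriv ℝ (m - (j + 1)) G x)
          (iteratedFDeriv ℝ (m - (j + 1)) G z - iteratedFDeriv ℝ (m - (j + 1)) G x)
        simpa using this
      have h6 : K * r ^ (j + 1) ≤ 2 ^ j * K * r ^ (j + 1) := by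
        have : (1 : ℝ) ≤ 2 ^ j := one_le_pow₀ (by norm_num)
        have : 0 ≤ K * r ^ (j + 1) := by positivity
        nlinarith
      calc _ ≤ K * r ^ (j + 1) + 2 ^ j * K * r ^ j * r := by linarith
        _ ≤ _ := by rw [pow_succ 2 j, pow_succ r j] at *; linarith
  intro k hk z hz
  have := key (m - k) (by omega) z hz
  have e : m - (m - k) = k := by omega
  rw [e] at this
  refine this.trans ?_
  gcongr
  · norm_num
  · omega

/-- Product bound. -/
lemma mul_bound {n m : ℕ} {φ G : Euc n → ℝ} (hφ : ContDiff ℝ (m : ℕ) φ)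
    (hG : ContDiff ℝ (m : ℕ) G) (x : Euc n) {K C r : ℝ} (hK : 0 ≤ K) (hC : 0 ≤ C) (hr : 0 < r)
    (h0 : ∀ k ≤ m, ‖iteratedFDeriv ℝ k φ x‖ ≤ C / r ^ k)
    (h1 : ∀ k ≤ m, ‖iteratedFDeriv ℝ k G x‖ ≤ K * r ^ (m - k)) :
    ∀ k ≤ m, ‖iteratedFDeriv ℝ k (fun y => φ y * G y) x‖ ≤ 2 ^ m * C * K * r ^ (m - k) := by
  intro k hk
  refine (norm_iteratedFDeriv_mul_le hφ hG x (by exact_mod_cast hk)).trans ?_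
  have : ∀ i ∈ Finset.range (k + 1), (k.choose i : ℝ) * ‖iteratedFDeriv ℝ i φ x‖ *
      ‖iteratedFDeriv ℝ (k - i) G x‖ ≤ (k.choose i : ℝ) * (C * K * r ^ (m - k)) := by
    intro i hi
    have hi' : i ≤ k := by simpa [Nat.lt_succ_iff] using hi
    rw [mul_assoc]
    refine mul_le_mul_of_nonneg_left ?_ (by positivity)
    calc _ ≤ (C / r ^ i) * (K * r ^ (m - (k - i))) :=
          mul_le_mul (h0 i (by omega)) (h1 _ (by omega)) (norm_nonneg _) (by positivity)
      _ = _ := by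
        have : m - (k - i) = (m - k) + i := by omega
        rw [this, pow_add]; field_simp
  refine (Finset.sum_le_sum this).trans ?_
  rw [← Finset.sum_mul]
  have h2 : (∑ i ∈ Finset.range (k + 1), (k.choose i : ℝ)) = 2 ^ k := by
    exact_mod_cast Nat.sum_range_choose k
  rw [h2]
  have : (2 : ℝ) ^ k ≤ 2 ^ m := pow_le_pow_right₀ (by norm_num) hk
  calc _ ≤ 2 ^ m * (C * K * r ^ (m - k)) := by gcongr
    _ = _ := by ring
end

noncomputable section
open scoped BigOperators

/-! ### Multi-index combinatorics -/

/-- Multi-indices of order `< m`. -/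
def idx (m n : ℕ) : Finset (Fin n → ℕ) :=
  (Fintype.piFinset fun _ : Fin n => Finset.range m).filter fun α => deg α < m

/-- Injective additive key of multi-indices. -/
def kap (m : ℕ) {n : ℕ} (α : Fin n → ℕ) : ℕ := ∑ i, α i * (m ^ n + m ^ (i : ℕ))

lemma le_deg {n : ℕ} (α : Fin n → ℕ) (i : Fin n) : α i ≤ deg α :=
  Finset.single_le_sum (f := α) (fun _ _ => Nat.zero_le _) (Finset.mem_univ i)

lemma mem_idx {m n : ℕ} {α : Fin n → ℕ} : α ∈ idx m n ↔ deg α < m := by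
  unfold idx
  simp only [Finset.mem_filter, Fintype.mem_piFinset, Finset.mem_range, and_iff_right_iff_imp]
  intro h i
  exact (le_deg α i).trans_lt h

lemma kap_eq {m n : ℕ} (α : Fin n → ℕ) :
    kap m α = deg α * m ^ n + ∑ i, α i * m ^ (i : ℕ) := by
  unfold kap deg
  rw [Finset.sum_mul, ← Finset.sum_add_distrib]
  exact Finset.sum_congr rfl fun i _ => by ring

lemma low_lt {m n : ℕ} {α : Fin n → ℕ} (h : α ∈ idx m n) :
    ∑ i, α i * m ^ (i : ℕ) < m ^ n := by
  have h' := mem_idx.1 h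
  have := (finFunctionFinEquiv (m := m) (n := n)
    (fun i => ⟨α i, (le_deg α i).trans_lt h'⟩)).2
  simpa [finFunctionFinEquiv_apply] using this

lemma deg_le_of_kap {m n : ℕ} {α β : Fin n → ℕ} (hβ : β ∈ idx m n)
    (h : kap m α ≤ kap m β) : deg α ≤ deg β := by
  by_contra hc
  push Not at hc
  have h1 := low_lt hβ
  rw [kap_eq, kap_eq] at h
  have : (deg β + 1) * m ^ n ≤ deg α * m ^ n := Nat.mul_le_mul_right _ hc
  rw [add_mul, one_mul] at this
  have h3 : 0 ≤ ∑ i, α i * m ^ (i : ℕ) := Nat.zero_le _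
  linarith

lemma kap_inj {m n : ℕ} {α β : Fin n → ℕ} (hα : α ∈ idx m n) (hβ : β ∈ idx m n)
    (h : kap m α = kap m β) : α = β := by
  have hd : deg α = deg β := le_antisymm (deg_le_of_kap hβ h.le) (deg_le_of_kap hα h.ge)
  have hα' := mem_idx.1 hα
  have hβ' := mem_idx.1 hβ
  rw [kap_eq, kap_eq, hd] at h
  have h2 := Nat.add_left_cancel h
  have h3 : (finFunctionFinEquiv (m := m) (n := n) (fun i => ⟨α i, (le_deg α i).trans_lt hα'⟩)) =
    (finFunctionFinEquiv (m := m) (n := n) (fun i => ⟨β i, (le_deg β i).trans_lt hβ'⟩)) := by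
    apply Fin.ext
    simpa [finFunctionFinEquiv_apply] using h2
  have h4 := finFunctionFinEquiv.injective h3
  funext i
  have := congrFun h4 i
  simpa using this

lemma kap_add {m n : ℕ} (α β : Fin n → ℕ) : kap m (α + β) = kap m α + kap m β := by
  unfold kap
  rw [← Finset.sum_add_distrib]
  exact Finset.sum_congr rfl fun i _ => by simp; ring

lemma deg_add {n : ℕ} (α β : Fin n → ℕ) : deg (α + β) = deg α + deg β := by
  unfold deg
  rw [← Finset.sum_add_distrib]; rfl

lemma deg_single {n : ℕ} (i : Fin n) : deg (Pi.single i 1 : Fin n → ℕ) = 1 := by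
  unfold deg
  simp

lemma sub_single_add {n : ℕ} {β : Fin n → ℕ} {i : Fin n} (h : 0 < β i) :
    β - Pi.single i 1 + Pi.single i 1 = β := by
  funext j
  by_cases hj : j = i
  · subst hj; simp; omega
  · simp [hj]

/-- Largest key. -/
def kmax (m n : ℕ) : ℕ := (idx m n).sup (kap m)

/-- Weight of a set of multi-indices. -/
def wt (m : ℕ) {n : ℕ} (A : Finset (Fin n → ℕ)) : ℕ := ∑ α ∈ A, 2 ^ (kmax m n - kap m α)

/-- New label obtained by inserting `b`. -/
def swp (m : ℕ) {n : ℕ} (A : Finset (Fin n → ℕ)) (b : Fin n → ℕ) : Finset (Fin n → ℕ) :=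
  insert b (A.filter fun γ => kap m γ < kap m b)

lemma swp_sub {m n : ℕ} {A : Finset (Fin n → ℕ)} {b : Fin n → ℕ} (hA : A ⊆ idx m n)
    (hb : b ∈ idx m n) : swp m A b ⊆ idx m n := by
  intro γ hγ
  unfold swp at hγ
  rw [Finset.mem_insert, Finset.mem_filter] at hγ
  rcases hγ with rfl | h
  · exact hb
  · exact hA h.1

lemma sum_two_pow_lt {s : Finset ℕ} {N : ℕ} (h : ∀ a ∈ s, a < N) : ∑ a ∈ s, 2 ^ a < 2 ^ N :=
  Nat.geomSum_lt le_rfl h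

lemma wt_swp {m n : ℕ} {A : Finset (Fin n → ℕ)} {b : Fin n → ℕ} (hA : A ⊆ idx m n)
    (hb : b ∈ idx m n) (hbA : b ∉ A) : wt m A < wt m (swp m A b) := by
  have hk : ∀ α ∈ idx m n, kap m α ≤ kmax m n := fun α h => Finset.le_sup (f := kap m) h
  unfold wt swp
  rw [Finset.sum_insert (by simp)]
  rw [← Finset.sum_filter_add_sum_filter_not A (fun γ => kap m γ < kap m b)]
  have : ∑ α ∈ A.filter (fun γ => ¬ kap m γ < kap m b), 2 ^ (kmax m n - kap m α)
      < 2 ^ (kmax m n - kap m b) := by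
    rw [← Finset.sum_image (s := A.filter (fun γ => ¬ kap m γ < kap m b))
      (g := fun α => kmax m n - kap m α) (f := fun a => 2 ^ a)]
    · apply sum_two_pow_lt
      intro a ha
      rw [Finset.mem_image] at ha
      obtain ⟨γ, hγ, rfl⟩ := ha
      rw [Finset.mem_filter] at hγ
      have h1 : kap m γ ≠ kap m b := fun h => hbA (kap_inj (hA hγ.1) hb h ▸ hγ.1)
      have := hk _ (hA hγ.1)
      have := hγ.2
      omega
    · intro α hα β hβ h
      simp only [Finset.coe_filter, Set.mem_ofPred_eq] at hα hβ
      have h1 := hk _ (hA hα.1)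
      have h2 := hk _ (hA hβ.1)
      apply kap_inj (hA hα.1) (hA hβ.1)
      simp only at h
      omega
  omega

lemma wt_le {m n : ℕ} {A : Finset (Fin n → ℕ)} (hA : A ⊆ idx m n) : wt m A ≤ wt m (idx m n) :=
  Finset.sum_le_sum_of_subset hA

/-- Monotone labels. -/
def Mono (m : ℕ) {n : ℕ} (A : Finset (Fin n → ℕ)) : Prop :=
  ∀ α ∈ A, ∀ i, α + Pi.single i 1 ∈ idx m n → α + Pi.single i 1 ∈ A

/-! ### Abstract linear algebra -/

section abs
variable {V : Type*} [AddCommGroup V] [Module ℝ V]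

/-- Symmetric part of a family of convex sets around a point. -/
def TT (G : ℝ → Set V) (P : V) (C : ℝ) : Set V := {Q | P + Q ∈ G C ∧ P - Q ∈ G C}

/-- A monotone family of convex sets. -/
structure CF (G : ℝ → Set V) : Prop where
  conv : ∀ C, Convex ℝ (G C)
  mono : ∀ C C', C ≤ C' → G C ⊆ G C'

variable {G : ℝ → Set V}

lemma TT_mono (hG : CF G) {P : V} {C C' : ℝ} (h : C ≤ C') : TT G P C ⊆ TT G P C' :=
  fun _ hQ => ⟨hG.mono _ _ h hQ.1, hG.mono _ _ h hQ.2⟩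

lemma TT_conv (hG : CF G) (P : V) (C : ℝ) : Convex ℝ (TT G P C) := by
  intro x hx y hy a b ha hb hab
  constructor
  · have := hG.conv C hx.1 hy.1 ha hb hab
    convert this using 1
    have h : P = a • P + b • P := by rw [← add_smul, hab, one_smul]
    nth_rw 1 [h]; simp only [smul_add]; abel
  · have := hG.conv C hx.2 hy.2 ha hb hab
    convert this using 1
    have h : P = a • P + b • P := by rw [← add_smul, hab, one_smul]
    nth_rw 1 [h]; simp only [smul_sub]; abel

lemma TT_neg {P Q : V} {C : ℝ} (h : Q ∈ TT G P C) : -Q ∈ TT G P C :=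
  ⟨by simpa [sub_eq_add_neg] using h.2, by simpa using h.1⟩

lemma TT_zero {P : V} {C : ℝ} (h : P ∈ G C) : (0 : V) ∈ TT G P C := by
  constructor <;> simpa using h

lemma TT_smul (hG : CF G) {P Q : V} {C : ℝ} (hP : P ∈ G C) (h : Q ∈ TT G P C) {t : ℝ}
    (ht : |t| ≤ 1) : t • Q ∈ TT G P C := by
  rcases abs_cases t with ⟨h1, h2⟩ | ⟨h1, h2⟩
  · exact (TT_conv hG P C).smul_mem_of_zero_mem (TT_zero hP) h ⟨h2, by linarith⟩
  · have := (TT_conv hG P C).smul_mem_of_zero_mem (TT_zero hP) (TT_neg h)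
      (t := -t) ⟨by linarith, by linarith⟩
    simpa using this

lemma conv_sum_mem {s : Set V} (hs : Convex ℝ s) (h0 : (0 : V) ∈ s) {ι : Type*} (t : Finset ι)
    (w : ι → ℝ) (z : ι → V) (hw : ∀ i ∈ t, 0 ≤ w i) (hw1 : ∑ i ∈ t, w i ≤ 1)
    (hz : ∀ i ∈ t, z i ∈ s) : ∑ i ∈ t, w i • z i ∈ s := by
  rcases (Finset.sum_nonneg hw).eq_or_lt with h | h
  · have : ∀ i ∈ t, w i = 0 := (Finset.sum_eq_zero_iff_of_nonneg hw).1 h.symm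
    rw [Finset.sum_eq_zero (fun i hi => by rw [this i hi, zero_smul])]
    exact h0
  · have h1 := hs.centerMass_mem hw h hz
    have := hs.smul_mem_of_zero_mem h0 h1 ⟨h.le, hw1⟩
    rwa [Finset.centerMass, smul_smul, mul_inv_cancel₀ h.ne', one_smul] at this

lemma TT_sum (hG : CF G) {P : V} {C : ℝ} (hP : P ∈ G C) {ι : Type*} (s : Finset ι)
    (t : ι → ℝ) (Q : ι → V) (hQ : ∀ i ∈ s, Q i ∈ TT G P C) (ht : ∑ i ∈ s, |t i| ≤ 1) :
    ∑ i ∈ s, t i • Q i ∈ TT G P C := by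
  have := conv_sum_mem (TT_conv hG P C) (TT_zero hP) s (fun i => |t i|)
    (fun i => (SignType.sign (t i) : ℝ) • Q i) (fun i _ => abs_nonneg _) ht (fun i hi => by
      apply TT_smul hG hP (hQ i hi)
      rcases lt_trichotomy (t i) 0 with h | h | h <;> simp [h])
  convert this using 2 with i
  rw [smul_smul, mul_comm, sign_mul_abs]

/-- two-term version, with scaled generators. -/
lemma TT_add (hG : CF G) {P Q R : V} {C a b s t : ℝ} (hP : P ∈ G C) (ha : 0 < a) (hb : 0 < b)
    (hQ : a⁻¹ • Q ∈ TT G P C) (hR : b⁻¹ • R ∈ TT G P C) (h : |s| * a + |t| * b ≤ 1) :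
    s • Q + t • R ∈ TT G P C := by
  have := TT_sum hG hP (Finset.univ : Finset (Fin 2)) ![s * a, t * b] ![a⁻¹ • Q, b⁻¹ • R]
    (by intro i _; fin_cases i <;> simpa) (by
      simp [Fin.sum_univ_two, abs_mul, abs_of_pos ha, abs_of_pos hb, h])
  simpa [Fin.sum_univ_two, smul_smul, ha.ne', hb.ne'] using this

variable {m n : ℕ}

/-- Weak basis. -/
structure WB (m : ℕ) {n : ℕ} (G : ℝ → Set V) (c : (Fin n → ℕ) → V →ₗ[ℝ] ℝ)
    (A : Finset (Fin n → ℕ)) (P : V) (C : ℝ) (Q : (Fin n → ℕ) → V) : Prop where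
  sub : A ⊆ idx m n
  one : 1 ≤ C
  mem : P ∈ G C
  tt : ∀ α ∈ A, C⁻¹ • Q α ∈ TT G P C
  del : ∀ α ∈ A, ∀ β ∈ A, c β (Q α) = if β = α then 1 else 0
  bd : ∀ α ∈ A, ∀ β ∈ idx m n, kap m α ≤ kap m β → |c β (Q α)| ≤ C

/-- All coefficients of the basis are bounded. -/
def SBd (m : ℕ) {n : ℕ} (c : (Fin n → ℕ) → V →ₗ[ℝ] ℝ)
    (A : Finset (Fin n → ℕ)) (C : ℝ) (Q : (Fin n → ℕ) → V) : Prop :=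
  ∀ α ∈ A, ∀ β ∈ idx m n, |c β (Q α)| ≤ C

variable {c : (Fin n → ℕ) → V →ₗ[ℝ] ℝ} {A : Finset (Fin n → ℕ)} {P : V} {C : ℝ}
  {Q : (Fin n → ℕ) → V}

lemma WB.mono (hG : CF G) (h : WB m G c A P C Q) {C' : ℝ} (hC : C ≤ C') : WB m G c A P C' Q where
  sub := h.sub
  one := h.one.trans hC
  mem := hG.mono _ _ hC h.mem
  tt := fun α hα => by
    have h1 := TT_mono hG hC (h.tt α hα)
    have hc := h.one
    have h2 := TT_smul hG (hG.mono _ _ hC h.mem) h1 (t := C'⁻¹ * C) (by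
      rw [abs_of_nonneg (by have := hc.trans hC; positivity)]
      rw [inv_mul_le_iff₀ (by linarith)]; linarith)
    rwa [smul_smul, mul_assoc, mul_inv_cancel₀ (by linarith), mul_one] at h2
  del := h.del
  bd := fun α hα β hβ hk => (h.bd α hα β hβ hk).trans hC

/-- Swap lemma. -/
lemma WB.swap (hG : CF G) (h : WB m G c A P C Q) {H : V} {b : Fin n → ℕ} {K : ℝ}
    (hb : b ∈ idx m n) (hK : 1 ≤ K) (hH1 : c b H = 1)
    (hH0 : ∀ γ ∈ A, kap m γ < kap m b → c γ H = 0) (hHb : ∀ β ∈ idx m n, |c β H| ≤ K)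
    (hHT : K⁻¹ • H ∈ TT G P K) :
    ∃ Q', WB m G c (swp m A b) P (C + K + C * K) Q' := by
  classical
  have hC := h.one
  have hmem : P ∈ G (C + K + C * K) := hG.mono _ _ (by nlinarith) h.mem
  have key : ∀ γ ∈ swp m A b, γ = b ∨ (γ ≠ b ∧ γ ∈ A ∧ kap m γ < kap m b) := by
    intro γ hγ
    unfold swp at hγ
    rw [Finset.mem_insert, Finset.mem_filter] at hγ
    rcases hγ with h | h
    · exact Or.inl h
    · exact Or.inr ⟨fun e => by rw [e] at h; exact lt_irrefl _ h.2, h.1, h.2⟩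
  refine ⟨fun γ => if γ = b then H else Q γ - c b (Q γ) • H, swp_sub h.sub hb, by nlinarith, hmem,
    ?_, ?_, ?_⟩
  · intro γ hγ
    have hH' := TT_mono hG (by nlinarith : K ≤ C + K + C * K) hHT
    rcases key γ hγ with rfl | ⟨hne, hA, hk⟩
    · simp only [if_true]
      have h2 := TT_smul hG hmem hH' (t := (C + K + C * K)⁻¹ * K) (by
        rw [abs_of_nonneg (by positivity)]
        rw [inv_mul_le_iff₀ (by positivity)]; nlinarith)
      rwa [smul_smul, mul_assoc, mul_inv_cancel₀ (by linarith), mul_one] at h2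
    · simp only [if_neg hne]
      have hQ' := TT_mono hG (by nlinarith : C ≤ C + K + C * K) (h.tt γ hA)
      have h3 := h.bd γ hA b hb hk.le
      have := TT_add hG hmem (by linarith) (by linarith) hQ' hH'
        (s := (C + K + C * K)⁻¹) (t := -((C + K + C * K)⁻¹ * c b (Q γ))) (by
          rw [abs_neg, abs_mul, abs_of_nonneg (by positivity : 0 ≤ (C + K + C * K)⁻¹)]
          rw [mul_assoc, ← mul_add, inv_mul_le_iff₀ (by positivity)]
          nlinarith)
      convert this using 1
      module
  · intro γ hγ β hβ
    rcases key γ hγ with rfl | ⟨hne, hA, hk⟩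
    · simp only [if_true]
      rcases key β hβ with rfl | ⟨hne', hA', hk'⟩
      · simp [hH1]
      · simp [hne', hH0 β hA' hk']
    · simp only [if_neg hne, map_sub, map_smul, smul_eq_mul]
      rcases key β hβ with rfl | ⟨hne', hA', hk'⟩
      · simp [hH1, hne.symm]
      · simp [hH0 β hA' hk', h.del γ hA β hA']
  · intro γ hγ β hβ hkk
    rcases key γ hγ with rfl | ⟨hne, hA, hk⟩
    · simp only [if_true]
      have := hHb β hβ
      nlinarith
    · simp only [if_neg hne, map_sub, map_smul, smul_eq_mul]
      have h1 := h.bd γ hA β hβ hkk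
      have h2 := h.bd γ hA b hb hk.le
      have h3 := hHb β hβ
      have h4 : |c b (Q γ) * c β H| ≤ C * K := by
        rw [abs_mul]; exact mul_le_mul h2 h3 (abs_nonneg _) (by linarith)
      have := abs_sub (c β (Q γ)) (c b (Q γ) * c β H)
      linarith

/-- R1. -/
lemma WB.R1 (hG : CF G) (h : WB m G c A P C Q) {ε : ℝ} (hε : 0 < ε) (hε1 : ε ≤ 1) :
    (∀ α ∈ A, ∀ β ∈ idx m n, kap m β < kap m α → |c β (Q α)| ≤ ε) ∨
    ∃ A' Q', A' ⊆ idx m n ∧ wt m A < wt m A' ∧ WB m G c A' P (C + C / ε + C * (C / ε)) Q' := by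
  classical
  by_contra hcon
  push Not at hcon
  obtain ⟨⟨α, hα, β0, hβ0, hk0, hlt0⟩, hno⟩ := hcon
  have hC := h.one
  have hCK : C ≤ C / ε := by rw [le_div_iff₀ hε]; nlinarith
  obtain ⟨b, hb, hmax⟩ := ((idx m n).filter fun β => kap m β < kap m α).exists_max_image
    (fun β => |c β (Q α)|) ⟨β0, by simp [hβ0, hk0]⟩
  rw [Finset.mem_filter] at hb
  have hbε : ε < |c b (Q α)| := hlt0.trans_le (hmax β0 (by simp [hβ0, hk0]))
  have hne : c b (Q α) ≠ 0 := by
    intro h0; rw [h0, abs_zero] at hbε; linarith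
  have hbA : b ∉ A := by
    intro hbA
    apply hne
    rw [h.del α hα b hbA, if_neg]
    rintro rfl
    exact lt_irrefl _ hb.2
  obtain ⟨Q', hQ'⟩ := h.swap hG (H := (c b (Q α))⁻¹ • Q α) (b := b) (K := C / ε) hb.1
    (hC.trans hCK) (by simp [hne]) (by
      intro γ hγ hk
      have : γ ≠ α := by rintro rfl; exact lt_asymm hk hb.2
      simp [h.del α hα γ hγ, this]) (by
      intro β hβ
      rw [map_smul, smul_eq_mul, abs_mul, abs_inv, inv_mul_le_iff₀ (hε.trans hbε)]
      by_cases hk : kap m β < kap m α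
      · have := hmax β (by simp [hβ, hk])
        have h1 := hC.trans hCK
        nlinarith [abs_nonneg (c b (Q α))]
      · have := h.bd α hα β hβ (not_lt.1 hk)
        refine this.trans ?_
        have h2 : ε * (C / ε) = C := by field_simp
        have h3 : 0 ≤ C / ε := by positivity
        nlinarith) (by
      have h1 := TT_mono hG hCK (h.tt α hα)
      have h2 := TT_smul hG (hG.mono _ _ hCK h.mem) h1 (t := ε * (c b (Q α))⁻¹) (by
        rw [abs_mul, abs_inv, abs_of_pos hε, ← div_eq_mul_inv, div_le_one (hε.trans hbε)]
        exact hbε.le)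
      convert h2 using 1
      rw [smul_smul, smul_smul]
      congr 1
      field_simp)
  exact hno _ Q' (swp_sub h.sub hb.1) (wt_swp h.sub hb.1 hbA) hQ'

def MulX (m : ℕ) {n : ℕ} (G : ℝ → Set V) (c : (Fin n → ℕ) → V →ₗ[ℝ] ℝ) (P : V)
    (g : ℝ → ℝ) : Prop :=
  ∀ C, 1 ≤ C → ∀ Q ∈ TT G P C, (∀ β ∈ idx m n, |c β Q| ≤ 1) → ∀ i,
    ∃ Q', (∀ β ∈ idx m n, c β Q' = β i * c (β - Pi.single i 1) Q) ∧
      (2⁻¹ : ℝ) • Q' ∈ TT G P (g C)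

end abs
end

noncomputable section
open scoped BigOperators

section abs
variable {V : Type*} [AddCommGroup V] [Module ℝ V] {G : ℝ → Set V} {m n : ℕ}
  {c : (Fin n → ℕ) → V →ₗ[ℝ] ℝ} {A : Finset (Fin n → ℕ)} {P : V} {C : ℝ}
  {Q : (Fin n → ℕ) → V}

/-- one plus number of multi-indices -/
def LL (m n : ℕ) : ℝ := (idx m n).card + 1

lemma LL_one (m n : ℕ) : 1 ≤ LL m n := by unfold LL; simp

lemma card_le_LL {A : Finset (Fin n → ℕ)} (hA : A ⊆ idx m n) : (A.card : ℝ) + 1 ≤ LL m n := by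
  unfold LL
  have := Finset.card_le_card hA
  have : (A.card : ℝ) ≤ (idx m n).card := by exact_mod_cast this
  linarith

lemma sum_le_LL {A : Finset (Fin n → ℕ)} (hA : A ⊆ idx m n) {g : (Fin n → ℕ) → ℝ} {B : ℝ}
    (hB : 0 ≤ B) (h : ∀ α ∈ A, g α ≤ B) : ∑ α ∈ A, g α ≤ LL m n * B := by
  refine (Finset.sum_le_card_nsmul A g B h).trans ?_
  rw [nsmul_eq_mul]
  have := card_le_LL hA
  exact mul_le_mul_of_nonneg_right (by linarith) hB

lemma sub_single_idx {β : Fin n → ℕ} (hβ : β ∈ idx m n) (i : Fin n) :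
    β - Pi.single i 1 ∈ idx m n := by
  rw [mem_idx] at *
  refine lt_of_le_of_lt ?_ hβ
  unfold deg
  exact Finset.sum_le_sum fun j _ => by simp

/-- epsilon for label change -/
def epsR (m n : ℕ) (C : ℝ) : ℝ := (2 * LL m n * (m + 1) * C)⁻¹
/-- constant for label change -/
def KR (m : ℕ) (g : ℝ → ℝ) (C : ℝ) : ℝ := 2 * (m * C + 1) + 4 * C + 2 + |g C|
/-- constant for label change -/
def gR (m n : ℕ) (g : ℝ → ℝ) (C : ℝ) : ℝ :=
  (C + C / epsR m n C + C * (C / epsR m n C)) + (C + KR m g C + C * KR m g C)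

lemma WB.R2 (hG : CF G) (h : WB m G c A P C Q) {g : ℝ → ℝ} (hX : MulX m G c P g)
    (hs : SBd m c A C Q)
    (hε : ∀ α ∈ A, ∀ β ∈ idx m n, kap m β < kap m α → |c β (Q α)| ≤ epsR m n C) :
    Mono m A ∨
    ∃ A' Q', A' ⊆ idx m n ∧ wt m A < wt m A' ∧
      WB m G c A' P (C + KR m g C + C * KR m g C) Q' := by
  classical
  by_contra hcon
  push Not at hcon
  obtain ⟨hM, hno⟩ := hcon
  unfold Mono at hM
  push Not at hM
  obtain ⟨α, hα, i, hbI, hbA⟩ := hM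
  have hC := h.one
  have hC0 : 0 < C := by linarith
  have hL := LL_one m n
  have hαI := h.sub hα
  have hm0 : (0 : ℝ) ≤ m := Nat.cast_nonneg m
  obtain ⟨Q', hQ'c, hQ'T⟩ := hX C hC _ (h.tt α hα) (by
    intro β hβ
    rw [map_smul, smul_eq_mul, abs_mul, abs_inv, abs_of_pos hC0, inv_mul_le_iff₀ hC0, mul_one]
    exact hs α hα β hβ) i
  set b := α + Pi.single i 1 with hbdef
  set ε := epsR m n C with hεdef
  have hεpos : 0 < ε := by rw [hεdef]; unfold epsR; positivity
  have hεval : LL m n * (m * ε * C) ≤ 1 / 2 := by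
    have : ε * (2 * LL m n * (m + 1) * C) = 1 := by
      rw [hεdef]; unfold epsR; exact inv_mul_cancel₀ (by positivity)
    have h2 : 0 ≤ ε * LL m n * C := by positivity
    nlinarith
  set a : ℝ := (α i : ℝ) + 1 with ha
  have ha1 : 1 ≤ a := by rw [ha]; have : (0 : ℝ) ≤ α i := Nat.cast_nonneg _; linarith
  set H0 : V := (C / a) • Q' with hH0
  have hcH0 : ∀ β ∈ idx m n, c β H0 = (β i / a) * c (β - Pi.single i 1) (Q α) := by
    intro β hβ
    rw [hH0, map_smul, hQ'c β hβ, map_smul, smul_eq_mul, smul_eq_mul]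
    field_simp
  have hβm : ∀ β ∈ idx m n, (β i : ℝ) / a ≤ m := by
    intro β hβ
    have h1 : β i ≤ m := (le_deg β i).trans (mem_idx.1 hβ).le
    have h2 : (β i : ℝ) ≤ m := by exact_mod_cast h1
    rw [div_le_iff₀ (by linarith)]; nlinarith
  have hH0b : c b H0 = 1 := by
    rw [hcH0 b hbI]
    have e1 : b - Pi.single i 1 = α := by rw [hbdef]; simp
    rw [e1, h.del α hα α hα, if_pos rfl, mul_one]
    have e2 : ((b i : ℕ) : ℝ) = a := by rw [hbdef, ha]; simp
    rw [e2, div_self (by linarith)]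
  have hH0C : ∀ β ∈ idx m n, |c β H0| ≤ m * C := by
    intro β hβ
    rw [hcH0 β hβ, abs_mul, abs_of_nonneg (by positivity)]
    exact mul_le_mul (hβm β hβ) (hs α hα _ (sub_single_idx hβ i)) (abs_nonneg _) hm0
  have hH0e : ∀ β ∈ idx m n, kap m β < kap m b → |c β H0| ≤ m * ε := by
    intro β hβ hk
    rw [hcH0 β hβ, abs_mul, abs_of_nonneg (by positivity)]
    rcases Nat.eq_zero_or_pos (β i) with h0 | h0
    · rw [h0]; simp; positivity
    refine mul_le_mul (hβm β hβ) (hε α hα _ (sub_single_idx hβ i) ?_) (abs_nonneg _) hm0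
    rw [← sub_single_add h0, hbdef, kap_add, kap_add] at hk
    omega
  set Af := A.filter fun γ => kap m γ < kap m b with hAf
  have hAfI : Af ⊆ idx m n := (Finset.filter_subset _ _).trans h.sub
  have hAfm : ∀ γ ∈ Af, γ ∈ A ∧ kap m γ < kap m b := fun γ hγ => by simpa [hAf] using hγ
  set H1 : V := H0 - ∑ γ ∈ Af, c γ H0 • Q γ with hH1
  have hsum : ∀ β ∈ idx m n, |∑ γ ∈ Af, c γ H0 * c β (Q γ)| ≤ 1 / 2 := by
    intro β hβ
    refine (Finset.abs_sum_le_sum_abs _ _).trans (le_trans ?_ hεval)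
    apply sum_le_LL hAfI (by positivity)
    intro γ hγ
    rw [abs_mul]
    exact mul_le_mul (hH0e γ (hAfI hγ) (hAfm γ hγ).2) (hs γ (hAfm γ hγ).1 β hβ) (abs_nonneg _)
      (by positivity)
  have hcH1 : ∀ β, c β H1 = c β H0 - ∑ γ ∈ Af, c γ H0 * c β (Q γ) := by
    intro β; rw [hH1]; simp
  have hb2 : 1 / 2 ≤ c b H1 := by
    rw [hcH1, hH0b]
    have := (abs_le.1 (hsum b hbI)).2
    linarith
  have hb0 : 0 < c b H1 := by linarith
  have hKC : C ≤ KR m g C := by unfold KR; have := abs_nonneg (g C); nlinarith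
  have hKg : g C ≤ KR m g C := by unfold KR; have := le_abs_self (g C); nlinarith
  have hK1 : 1 ≤ KR m g C := hC.trans hKC
  have hPK := hG.mono _ _ hKC h.mem
  obtain ⟨Q'', hQ''⟩ := h.swap hG (H := (c b H1)⁻¹ • H1) (b := b) (K := KR m g C) hbI hK1
    (by simp [hb0.ne']) (by
      intro γ hγ hk
      have hγf : γ ∈ Af := by rw [hAf]; simp [hγ, hk]
      rw [map_smul, hcH1 γ, Finset.sum_eq_single γ]
      · rw [h.del γ hγ γ hγ]; simp
      · intro δ hδ hne
        rw [h.del δ (hAfm δ hδ).1 γ hγ, if_neg hne.symm, mul_zero]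
      · exact fun h => absurd hγf h) (by
      intro β hβ
      rw [map_smul, smul_eq_mul, abs_mul, abs_inv, abs_of_pos hb0, inv_mul_le_iff₀ hb0, hcH1]
      have h1 := hH0C β hβ
      have h2 := hsum β hβ
      have h3 := abs_sub (c β H0) (∑ γ ∈ Af, c γ H0 * c β (Q γ))
      have h4 : 2 * (m * C + 1) ≤ KR m g C := by unfold KR; have := abs_nonneg (g C); nlinarith
      have : (1 / 2) * KR m g C ≤ c b H1 * KR m g C := by
        apply mul_le_mul_of_nonneg_right hb2; linarith
      linarith) (by
      have t1 := TT_mono hG hKg hQ'T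
      have t2 : (1 : ℝ)⁻¹ • (∑ γ ∈ Af, c γ H0 • Q γ) ∈ TT G P (KR m g C) := by
        have := TT_sum hG hPK Af (fun γ => c γ H0 * C) (fun γ => C⁻¹ • Q γ)
          (fun γ hγ => TT_mono hG hKC (h.tt γ (hAfm γ hγ).1)) (by
            refine le_trans ?_ (hεval.trans (by norm_num))
            apply sum_le_LL hAfI (by positivity)
            intro γ hγ
            rw [abs_mul, abs_of_pos hC0]
            exact mul_le_mul_of_nonneg_right (hH0e γ (hAfI hγ) (hAfm γ hγ).2) hC0.le)
        rw [inv_one, one_smul]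
        convert this using 2 with γ
        rw [smul_smul, mul_assoc, mul_inv_cancel₀ hC0.ne', mul_one]
      have t3 := TT_add hG hPK (by norm_num) (by norm_num) t1 t2
        (s := (KR m g C)⁻¹ * (c b H1)⁻¹ * (C / a)) (t := - ((KR m g C)⁻¹ * (c b H1)⁻¹)) (by
          have hK0 : 0 < KR m g C := by linarith
          have hca : C / a ≤ C := by rw [div_le_iff₀ (by linarith)]; nlinarith
          rw [abs_neg, abs_mul _ (C / a), abs_of_nonneg (by positivity : 0 ≤ C / a),
            abs_of_nonneg (by positivity : 0 ≤ (KR m g C)⁻¹ * (c b H1)⁻¹)]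
          rw [← mul_inv]
          rw [mul_assoc, ← mul_add, inv_mul_le_iff₀ (by positivity), mul_one]
          have h4 : 4 * C + 2 ≤ KR m g C := by unfold KR; have := abs_nonneg (g C); nlinarith
          have : KR m g C * (1 / 2) ≤ KR m g C * c b H1 :=
            mul_le_mul_of_nonneg_left hb2 hK0.le
          linarith)
      convert t3 using 1
      rw [hH1, hH0]
      module)
  exact hno _ Q'' (swp_sub h.sub hbI) (wt_swp h.sub hbI hbA) hQ''

lemma WB.chgLabel1 (hG : CF G) (h : WB m G c A P C Q) {g : ℝ → ℝ} (hX : MulX m G c P g) :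
    (Mono m A ∧ SBd m c A C Q) ∨
    ∃ A' Q', A' ⊆ idx m n ∧ wt m A < wt m A' ∧ WB m G c A' P (gR m n g C) Q' := by
  have hC := h.one
  have hL := LL_one m n
  have hm0 : (0 : ℝ) ≤ m := Nat.cast_nonneg m
  have hεpos : 0 < epsR m n C := by unfold epsR; positivity
  have hε1 : epsR m n C ≤ 1 := by
    unfold epsR
    apply inv_le_one_of_one_le₀
    have : 1 ≤ LL m n * (m + 1) := by nlinarith
    nlinarith
  have hKR : 0 ≤ KR m g C := by unfold KR; positivity
  rcases h.R1 hG hεpos hε1 with h1 | ⟨A', Q', hA', hw, hWB⟩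
  · have hs : SBd m c A C Q := by
      intro α hα β hβ
      by_cases hk : kap m β < kap m α
      · exact (h1 α hα β hβ hk).trans (hε1.trans hC)
      · exact h.bd α hα β hβ (not_lt.1 hk)
    rcases h.R2 hG hX hs h1 with h2 | ⟨A', Q', hA', hw, hWB⟩
    · exact Or.inl ⟨h2, hs⟩
    · refine Or.inr ⟨A', Q', hA', hw, hWB.mono hG ?_⟩
      unfold gR
      have : 0 ≤ C / epsR m n C := by positivity
      nlinarith
  · refine Or.inr ⟨A', Q', hA', hw, hWB.mono hG ?_⟩
    unfold gR
    nlinarith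

/-- Iterated label change. The constant depends only on `m, n, g, C`. -/
lemma chgLabel (m n : ℕ) (g : ℝ → ℝ) (N : ℕ) : ∀ C : ℝ, ∃ C' : ℝ,
    ∀ (V : Type) [AddCommGroup V] [Module ℝ V] (G : ℝ → Set V)
      (c : (Fin n → ℕ) → V →ₗ[ℝ] ℝ) (A : Finset (Fin n → ℕ)) (P : V) (Q : (Fin n → ℕ) → V),
      CF G → MulX m G c P g → WB m G c A P C Q → wt m (idx m n) ≤ wt m A + N →
      ∃ A' Q', Mono m A' ∧ wt m A ≤ wt m A' ∧ WB m G c A' P C' Q' ∧ SBd m c A' C' Q' := by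
  induction N with
  | zero =>
    intro C
    refine ⟨C, ?_⟩
    intro V _ _ G c A P Q hG hX h hw
    rcases h.chgLabel1 hG hX with ⟨h1, h2⟩ | ⟨A', Q', hA', hw', hWB⟩
    · exact ⟨A, Q, h1, le_rfl, h, h2⟩
    · have := wt_le hA'
      omega
  | succ N ih =>
    intro C
    obtain ⟨C1, hC1⟩ := ih (gR m n g C)
    refine ⟨max C C1, ?_⟩
    intro V _ _ G c A P Q hG hX h hw
    rcases h.chgLabel1 hG hX with ⟨h1, h2⟩ | ⟨A', Q', hA', hw', hWB⟩
    · exact ⟨A, Q, h1, le_rfl, h.mono hG (le_max_left _ _),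
        fun α hα β hβ => (h2 α hα β hβ).trans (le_max_left _ _)⟩
    · obtain ⟨A'', Q'', h1, h2, h3, h4⟩ := hC1 V G c A' P Q' hG hX hWB (by omega)
      exact ⟨A'', Q'', h1, by omega, h3.mono hG (le_max_right _ _),
        fun α hα β hβ => (h4 α hα β hβ).trans (le_max_right _ _)⟩

/-- Bound in the alternative `Z`. -/
def NZ (m n : ℕ) (C : ℝ) : ℝ := C + LL m n * (C * C) + 2 * LL m n * C ^ 2
/-- Constant in the alternative `Z`. -/
def CZ (C : ℝ) : ℝ := (C + C + C * C) + (2 * C + 2 * C + 2 * C * (2 * C))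

/-- Dichotomy lemma. -/
lemma WB.Z (hG : CF G) (h : WB m G c A P C Q) {R Ph : V} (hR : R ∈ G C)
    (h0 : ∀ α ∈ A, c α (Ph - P) = 0) (hPR : ∀ β ∈ idx m n, |c β (Ph - R)| ≤ C) :
    (∀ β ∈ idx m n, |c β (Ph - P)| ≤ NZ m n C) ∨
    ∃ A' b Q', A' ⊆ idx m n ∧ wt m A < wt m A' ∧ WB m G c A' b (CZ C) Q' ∧
      (∀ α ∈ A, c α (b - P) = 0) ∧ (∀ β ∈ idx m n, |c β (b - P)| ≤ 1) := by
  classical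
  have hC := h.one
  have hC0 : 0 < C := by linarith
  have hL := LL_one m n
  rcases h.R1 hG one_pos le_rfl with h1 | ⟨A', Q', hA', hw, hWB⟩
  swap
  · refine Or.inr ⟨A', P, Q', hA', hw, hWB.mono hG ?_, ?_, ?_⟩
    · unfold CZ; rw [div_one]; nlinarith
    · intro α _; simp
    · intro α _; simp
  have hs : SBd m c A C Q := by
    intro α hα β hβ
    by_cases hk : kap m β < kap m α
    · exact (h1 α hα β hβ hk).trans hC
    · exact h.bd α hα β hβ (not_lt.1 hk)
  set S : V := ∑ α ∈ A, c α (Ph - R) • Q α with hS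
  set U : V := R + S - P with hU
  have hcS : ∀ β, c β S = ∑ α ∈ A, c α (Ph - R) * c β (Q α) := by intro β; rw [hS]; simp
  have hcSb : ∀ β ∈ idx m n, |c β S| ≤ LL m n * (C * C) := by
    intro β hβ
    rw [hcS]
    refine (Finset.abs_sum_le_sum_abs _ _).trans (sum_le_LL h.sub (by positivity) ?_)
    intro γ hγ
    rw [abs_mul]
    exact mul_le_mul (hPR γ (h.sub hγ)) (hs γ hγ β hβ) (abs_nonneg _) (by positivity)
  have hcU0 : ∀ α ∈ A, c α U = 0 := by
    intro α hα
    have e : c α S = c α (Ph - R) := by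
      rw [hcS, Finset.sum_eq_single α]
      · rw [h.del α hα α hα]; simp
      · intro δ hδ hne
        rw [h.del δ hδ α hα, if_neg hne.symm, mul_zero]
      · exact fun h => absurd hα h
    have := h0 α hα
    rw [hU]
    rw [map_sub] at this
    rw [map_sub, map_add, e, map_sub]
    linarith
  by_cases hbig : ∀ β ∈ idx m n, |c β U| ≤ 2 * LL m n * C ^ 2
  · left
    intro β hβ
    have e : Ph - P = (Ph - R) - S + U := by rw [hU]; abel
    rw [e, map_add, map_sub]
    have h2 := abs_add_le (c β (Ph - R) - c β S) (c β U)
    have h3 := abs_sub (c β (Ph - R)) (c β S)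
    have := hPR β hβ
    have := hcSb β hβ
    have := hbig β hβ
    unfold NZ
    linarith
  · right
    push Not at hbig
    obtain ⟨β0, hβ0, hlt⟩ := hbig
    obtain ⟨b, hb, hmax⟩ := (idx m n).exists_max_image (fun β => |c β U|) ⟨β0, hβ0⟩
    set u := |c b U| with hu
    have hub : 2 * LL m n * C ^ 2 < u := hlt.trans_le (hmax β0 hβ0)
    have hu2 : 2 ≤ u := by
      have : 1 ≤ C ^ 2 := one_le_pow₀ hC
      nlinarith
    have hu0 : 0 < u := by linarith
    have hne : c b U ≠ 0 := by intro h; rw [hu, h, abs_zero] at hu0; exact lt_irrefl _ hu0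
    have hbA : b ∉ A := fun hh => hne (hcU0 b hh)
    have hT : ∑ α ∈ A, (2 * u⁻¹ * c α (Ph - R) * C) • (C⁻¹ • Q α) ∈ TT G P C := by
      apply TT_sum hG h.mem A _ _ h.tt
      have : ∑ α ∈ A, |2 * u⁻¹ * c α (Ph - R) * C| ≤ LL m n * (2 * u⁻¹ * C * C) := by
        apply sum_le_LL h.sub (by positivity)
        intro γ hγ
        rw [abs_mul, abs_mul, abs_of_pos hC0, abs_of_nonneg (by positivity : 0 ≤ 2 * u⁻¹)]
        have := hPR γ (h.sub hγ)
        gcongr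
      refine this.trans ?_
      rw [show LL m n * (2 * u⁻¹ * C * C) = (2 * LL m n * C ^ 2) / u by field_simp,
        div_le_one hu0]
      exact hub.le
    have hT2 : P + (2 * u⁻¹) • S ∈ G C := by
      convert hT.1 using 2
      rw [hS, Finset.smul_sum]
      refine Finset.sum_congr rfl fun α _ => ?_
      rw [smul_smul, smul_smul]
      congr 1
      field_simp
    have hT3 : P + (2 * u⁻¹) • (R - P) ∈ G C := by
      have h2u : 2 * u⁻¹ ≤ 1 := by rw [← div_eq_mul_inv, div_le_one hu0]; exact hu2
      have := hG.conv C h.mem hR (a := 1 - 2 * u⁻¹) (b := 2 * u⁻¹) (by linarith) (by positivity)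
        (by ring)
      convert this using 1
      module
    have hPU : P + u⁻¹ • U ∈ G C := by
      have := hG.conv C hT2 hT3 (a := 1 / 2) (b := 1 / 2) (by norm_num) (by norm_num)
        (by norm_num)
      convert this using 1
      rw [hU]
      module
    set b' : V := P + (u⁻¹ / 2) • U with hb'
    have hb'G : b' ∈ G C := by
      have := hG.conv C h.mem hPU (a := 1 / 2) (b := 1 / 2) (by norm_num) (by norm_num)
        (by norm_num)
      convert this using 1
      rw [hb']
      module
    have hTU : (u⁻¹ / 2) • U ∈ TT G b' C := by
      constructor
      · convert hPU using 1; rw [hb']; module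
      · convert h.mem using 1; rw [hb']; module
    have hC2 : C ≤ 2 * C := by linarith
    have hWB : WB m G c A b' (2 * C) Q := by
      refine ⟨h.sub, by linarith, hG.mono _ _ hC2 hb'G, ?_, h.del, ?_⟩
      · intro α hα
        apply TT_mono hG hC2
        have hq := h.tt α hα
        constructor
        · have := hG.conv C hq.1 hPU (a := 1 / 2) (b := 1 / 2) (by norm_num) (by norm_num)
            (by norm_num)
          convert this using 1
          rw [hb', mul_inv]
          module
        · have := hG.conv C hq.2 hPU (a := 1 / 2) (b := 1 / 2) (by norm_num) (by norm_num)
            (by norm_num)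
          convert this using 1
          rw [hb', mul_inv]
          module
      · intro α hα β hβ hk
        exact (h.bd α hα β hβ hk).trans hC2
    have hb'P : b' - P = (u⁻¹ / 2) • U := by rw [hb']; abel
    obtain ⟨Q', hQ'⟩ := hWB.swap hG (H := (c b U)⁻¹ • U) (b := b) (K := 2 * C) hb (by linarith)
      (by simp [hne]) (by
        intro γ hγ _
        rw [map_smul, hcU0 γ hγ, smul_zero]) (by
        intro β hβ
        rw [map_smul, smul_eq_mul, abs_mul, abs_inv, ← hu, inv_mul_le_iff₀ hu0]
        have := hmax β hβ
        nlinarith) (by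
        have := TT_smul hG hb'G hTU (t := (2 * C)⁻¹ * (2 * (u * (c b U)⁻¹))) (by
          rw [abs_mul, abs_mul, abs_mul, abs_inv, abs_inv (c b U), ← hu, abs_of_pos hu0,
            mul_inv_cancel₀ hu0.ne', abs_of_pos (by positivity : 0 < 2 * C),
            inv_mul_le_iff₀ (by positivity)]
          norm_num
          linarith)
        apply TT_mono hG hC2
        convert this using 1
        rw [smul_smul, smul_smul]
        congr 1
        field_simp)
    refine ⟨_, b', Q', swp_sub h.sub hb, wt_swp h.sub hb hbA, hQ'.mono hG ?_, ?_, ?_⟩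
    · unfold CZ; nlinarith
    · intro α hα
      rw [hb'P, map_smul, hcU0 α hα, smul_zero]
    · intro β hβ
      rw [hb'P, map_smul, smul_eq_mul, abs_mul, abs_of_nonneg (by positivity)]
      have := hmax β hβ
      calc u⁻¹ / 2 * |c β U| ≤ u⁻¹ / 2 * u := by gcongr
        _ = 1 / 2 := by field_simp
        _ ≤ 1 := by norm_num

end abs
end

noncomputable section
open scoped BigOperators

lemma near_id_inverse {ι : Type*} [Fintype ι] [DecidableEq ι] (M : Matrix ι ι ℝ) {η : ℝ}
    (hη : ∀ i j, |M i j - (if i = j then 1 else 0)| ≤ η)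
    (hc : (Fintype.card ι : ℝ) * η ≤ 1 / 2) :
    ∃ X : Matrix ι ι ℝ, M * X = 1 ∧ ∀ i j, |X i j| ≤ 2 := by
  have claim : ∀ (x : ι → ℝ) (B : ℝ), (∀ i, |(M.mulVec x) i| ≤ B) → ∀ i, |x i| ≤ 2 * B := by
    intro x B hB i
    obtain ⟨i0, _, hmax⟩ := Finset.univ.exists_max_image (fun i => |x i|) ⟨i, Finset.mem_univ i⟩
    have h1 : x i0 = M.mulVec x i0 - ∑ j, (M i0 j - (if i0 = j then 1 else 0)) * x j := by
      simp [Matrix.mulVec, dotProduct, sub_mul, Finset.sum_sub_distrib]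
    have h2 : |∑ j, (M i0 j - (if i0 = j then 1 else 0)) * x j| ≤ (Fintype.card ι : ℝ) * η * |x i0| := by
      refine (Finset.abs_sum_le_sum_abs _ _).trans ?_
      refine (Finset.sum_le_card_nsmul _ _ (η * |x i0|) ?_).trans ?_
      · intro j _
        rw [abs_mul]
        exact mul_le_mul (hη i0 j) (hmax j (Finset.mem_univ _)) (abs_nonneg _)
          ((abs_nonneg _).trans (hη i0 j))
      · rw [nsmul_eq_mul, Finset.card_univ, mul_assoc]
    have h3 : |x i0| ≤ |M.mulVec x i0| + |∑ j, (M i0 j - (if i0 = j then 1 else 0)) * x j| := by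
      conv_lhs => rw [h1]
      exact abs_sub _ _
    have h4 := hB i0
    have h5 := hmax i (Finset.mem_univ _)
    have h6 : (Fintype.card ι : ℝ) * η * |x i0| ≤ 1 / 2 * |x i0| :=
      mul_le_mul_of_nonneg_right hc (abs_nonneg _)
    linarith
  have hdet : M.det ≠ 0 := by
    intro h0
    obtain ⟨v, hv, hMv⟩ := Matrix.exists_mulVec_eq_zero_iff.2 h0
    apply hv
    funext i
    have := claim v 0 (by intro i; simp [hMv]) i
    simpa using this
  refine ⟨M⁻¹, Matrix.mul_nonsing_inv M (isUnit_iff_ne_zero.2 hdet), ?_⟩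
  intro i j
  have := claim (fun k => M⁻¹ k j) 1 (by
    intro k
    have : M.mulVec (fun k => M⁻¹ k j) k = (M * M⁻¹) k j := by
      simp [Matrix.mulVec, dotProduct, Matrix.mul_apply]
    rw [this, Matrix.mul_nonsing_inv M (isUnit_iff_ne_zero.2 hdet), Matrix.one_apply]
    split_ifs <;> simp) i
  simpa using this

set_option maxHeartbeats 1000000 in
/-- Transport of a basis to a nearby point. -/
lemma transport {V : Type*} [AddCommGroup V] [Module ℝ V] {G G' : ℝ → Set V} {m n : ℕ}
    {c c' : (Fin n → ℕ) → V →ₗ[ℝ] ℝ} {A : Finset (Fin n → ℕ)} {P : V} {C : ℝ}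
    {Q : (Fin n → ℕ) → V} (hG' : CF G') (h : WB m G c A P C Q) (hs : SBd m c A C Q) {κ : ℝ}
    (hκ0 : 0 ≤ κ) (hκ : κ * (8 * LL m n ^ 3 * C ^ 2) ≤ 1)
    (hH : ∀ R ∈ G C, ∃ R' ∈ G' C, ∀ β ∈ idx m n, |c' β (R - R')| ≤ κ * C)
    (hcc : ∀ (W : V) (B : ℝ), 0 ≤ B → (∀ β ∈ idx m n, |c β W| ≤ B) →
      ∀ β ∈ idx m n, |c' β W - c β W| ≤ κ * B) :
    ∃ P' Q', WB m G' c' A P' (4 * LL m n ^ 2 * C) Q' ∧ SBd m c' A (4 * LL m n ^ 2 * C) Q' ∧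
      (∀ α ∈ A, c' α (P' - P) = 0) ∧ ∀ β ∈ idx m n, |c' β (P' - P)| ≤ 1 := by
  classical
  have hC := h.one
  have hC0 : 0 < C := by linarith
  set L := LL m n with hLdef
  have hL : 1 ≤ L := LL_one m n
  have hL0 : 0 < L := by linarith
  obtain ⟨R0, hR0, hR0b⟩ := hH P h.mem
  have hplus : ∀ α ∈ A, ∃ R' ∈ G' C, ∀ β ∈ idx m n, |c' β (P + C⁻¹ • Q α - R')| ≤ κ * C :=
    fun α hα => hH _ (h.tt α hα).1
  have hminus : ∀ α ∈ A, ∃ R' ∈ G' C, ∀ β ∈ idx m n, |c' β (P - C⁻¹ • Q α - R')| ≤ κ * C :=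
    fun α hα => hH _ (h.tt α hα).2
  choose! Rp hRp hRpb using hplus
  choose! Rm hRm hRmb using hminus
  set mid : (Fin n → ℕ) → V := fun α => (1 / 2 : ℝ) • Rp α + (1 / 2 : ℝ) • Rm α with hmid
  set W : (Fin n → ℕ) → V := fun α => (C / 2) • (Rp α - Rm α) with hW
  have hmidG : ∀ α ∈ A, mid α ∈ G' C := fun α hα =>
    hG'.conv C (hRp α hα) (hRm α hα) (by norm_num) (by norm_num) (by norm_num)
  clear_value mid W
  set N : ℝ := A.card + 1 with hN
  have hN1 : 1 ≤ N := by rw [hN]; simp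
  have hN0 : 0 < N := by linarith
  have hNL : N ≤ L := card_le_LL h.sub
  have hcard : (A.card : ℝ) ≤ L := by linarith
  set P1 : V := N⁻¹ • (R0 + ∑ α ∈ A, mid α) with hP1
  -- averages
  have havg : ∀ z : (Fin n → ℕ) → V, (∀ α ∈ A, z α ∈ G' C) →
      N⁻¹ • (R0 + ∑ α ∈ A, z α) ∈ G' C := by
    intro z hz
    have := (hG'.conv C).sum_mem (t := A.attach.map ⟨some, Option.some_injective _⟩ ∪ {none})
      (w := fun _ => N⁻¹) (z := fun o : Option A => o.elim R0 (fun a => z a)) (by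
        intro i _; positivity) (by
        rw [Finset.sum_const, Finset.card_union_of_disjoint (by simp), nsmul_eq_mul]
        simp [hN]
        field_simp) (by
        rintro (_ | ⟨a, ha⟩) _
        · exact hR0
        · exact hz a ha)
    rw [Finset.sum_union (by simp)] at this
    simp only [Finset.sum_map, Finset.sum_singleton, Function.Embedding.coeFn_mk,
      Option.elim] at this
    rw [← Finset.smul_sum, ← smul_add, Finset.sum_attach A z] at this
    rwa [add_comm] at this
  have hP1G : P1 ∈ G' C := havg mid hmidG
  have hWT : ∀ α ∈ A, (C * N)⁻¹ • W α ∈ TT G' P1 C := by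
    intro α hα
    have hs1 : ∀ v : V, ∑ β ∈ A, (if β = α then mid β + v else mid β) = ∑ β ∈ A, mid β + v := by
      intro v
      rw [← Finset.add_sum_erase A _ hα, ← Finset.add_sum_erase A mid hα]
      rw [if_pos rfl, Finset.sum_congr rfl (fun β hβ => if_neg (Finset.ne_of_mem_erase hβ))]
      abel
    constructor
    · have := havg (fun β => if β = α then mid β + C⁻¹ • W α else mid β) (by
        intro β hβ
        by_cases hb : β = α
        · subst hb
          simp only [if_true]
          convert hRp β hβ using 1
          simp only [hmid, hW]
          rw [smul_smul, inv_mul_eq_div, div_right_comm, div_self hC0.ne']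
          module
        · simp only [if_neg hb]; exact hmidG β hβ)
      rw [hs1] at this
      convert this using 1
      rw [hP1, mul_inv]
      module
    · have := havg (fun β => if β = α then mid β + (-(C⁻¹ • W α)) else mid β) (by
        intro β hβ
        by_cases hb : β = α
        · subst hb
          simp only [if_true]
          convert hRm β hβ using 1
          simp only [hmid, hW]
          rw [smul_smul, inv_mul_eq_div, div_right_comm, div_self hC0.ne']
          module
        · simp only [if_neg hb]; exact hmidG β hβ)
      rw [hs1] at this
      convert this using 1
      rw [hP1, mul_inv]
      module
  -- closeness
  have hκC : 8 * κ * C ^ 2 * L ^ 3 ≤ 1 := by linarith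
  have hL2 : 1 ≤ L ^ 2 := one_le_pow₀ hL
  have hL3 : 1 ≤ L ^ 3 := one_le_pow₀ hL
  have hk1 : κ * (C ^ 2 + C) ≤ 1 / (4 * L) := by
    rw [le_div_iff₀ (by positivity)]
    have h1 : κ * (C ^ 2 + C) * (4 * L) ≤ κ * (2 * C ^ 2) * (4 * L) := by
      gcongr; nlinarith
    have h2 : κ * (2 * C ^ 2) * (4 * L) * 1 ≤ κ * (2 * C ^ 2) * (4 * L) * L ^ 2 :=
      mul_le_mul_of_nonneg_left hL2 (by positivity)
    have h3 : κ * (2 * C ^ 2) * (4 * L) * L ^ 2 = 8 * κ * C ^ 2 * L ^ 3 := by ring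
    linarith
  have hWc : ∀ α ∈ A, ∀ β ∈ idx m n, |c' β (W α) - c β (Q α)| ≤ 1 / (4 * L) := by
    intro α hα β hβ
    have h1 := hRpb α hα β hβ
    have h2 := hRmb α hα β hβ
    have h3 := hcc (Q α) C hC0.le (hs α hα) β hβ
    have e : c' β (W α) - c β (Q α) = (c' β (Q α) - c β (Q α)) -
        C / 2 * (c' β (P + C⁻¹ • Q α - Rp α) - c' β (P - C⁻¹ • Q α - Rm α)) := by
      simp only [hW, map_smul, map_sub, map_add, smul_eq_mul]
      field_simp
      ring
    have h4 : |C / 2 * (c' β (P + C⁻¹ • Q α - Rp α) - c' β (P - C⁻¹ • Q α - Rm α))|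
        ≤ C / 2 * (κ * C + κ * C) := by
      rw [abs_mul, abs_of_pos (by positivity)]
      gcongr
      exact (abs_sub _ _).trans (add_le_add h1 h2)
    rw [e]
    refine (abs_sub _ _).trans ?_
    have : κ * (C ^ 2 + C) = κ * C + C / 2 * (κ * C + κ * C) := by ring
    linarith
  have hWC : ∀ α ∈ A, ∀ β ∈ idx m n, |c' β (W α)| ≤ 2 * C := by
    intro α hα β hβ
    have h1 := hWc α hα β hβ
    have h2 := hs α hα β hβ
    have h3 : c' β (W α) = (c' β (W α) - c β (Q α)) + c β (Q α) := by ring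
    have h4 : 1 / (4 * L) ≤ 1 := by rw [div_le_one (by positivity)]; linarith
    rw [h3]
    refine (abs_add_le _ _).trans ?_
    linarith
  have hP1P : ∀ β ∈ idx m n, |c' β (P1 - P)| ≤ κ * C := by
    intro β hβ
    have e : c' β (P1 - P) = N⁻¹ * (c' β (R0 - P) + ∑ α ∈ A, c' β (mid α - P)) := by
      have e1 : c' β P = N⁻¹ * (N * c' β P) := by field_simp
      rw [map_sub, e1, hP1]
      simp only [map_smul, map_add, map_sub, map_sum, smul_eq_mul, Finset.sum_sub_distrib,
        Finset.sum_const, nsmul_eq_mul]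
      rw [hN]; ring
    have h0 : |c' β (R0 - P)| ≤ κ * C := by
      rw [← neg_sub, map_neg, abs_neg]; exact hR0b β hβ
    have h1 : ∀ α ∈ A, |c' β (mid α - P)| ≤ κ * C := by
      intro α hα
      have e2 : c' β (mid α - P) = -(1 / 2 * (c' β (P + C⁻¹ • Q α - Rp α) +
          c' β (P - C⁻¹ • Q α - Rm α))) := by
        simp only [hmid, map_smul, map_sub, map_add, smul_eq_mul]
        ring
      rw [e2, abs_neg, abs_mul, abs_of_pos (by norm_num : (0 : ℝ) < 1 / 2)]
      have := abs_add_le (c' β (P + C⁻¹ • Q α - Rp α)) (c' β (P - C⁻¹ • Q α - Rm α))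
      have := hRpb α hα β hβ
      have := hRmb α hα β hβ
      linarith
    rw [e, abs_mul, abs_of_pos (by positivity : 0 < N⁻¹), inv_mul_le_iff₀ hN0]
    refine (abs_add_le _ _).trans ?_
    have h2 : |∑ α ∈ A, c' β (mid α - P)| ≤ A.card * (κ * C) := by
      refine (Finset.abs_sum_le_sum_abs _ _).trans ?_
      refine (Finset.sum_le_card_nsmul _ _ _ h1).trans ?_
      rw [nsmul_eq_mul]
    rw [hN]; linarith
  -- inverse matrix
  obtain ⟨X, hMX, hX2⟩ := near_id_inverse (ι := A)
    (Matrix.of fun β α : A => c' β (W α)) (η := 1 / (4 * L)) (by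
      intro β α
      have := hWc α α.2 β (h.sub β.2)
      rw [h.del α α.2 β β.2] at this
      simp only [Subtype.coe_inj] at this
      exact this) (by
      rw [Fintype.card_coe, mul_one_div, div_le_div_iff₀ (by positivity) (by norm_num)]
      linarith)
  set Q' : (Fin n → ℕ) → V := fun α => if hα : α ∈ A then ∑ γ : A, X γ ⟨α, hα⟩ • W γ else 0
    with hQ'
  have hQ'e : ∀ α (hα : α ∈ A), Q' α = ∑ γ : A, X γ ⟨α, hα⟩ • W γ := fun α hα => by
    simp only [hQ', dif_pos hα]
  have hdel : ∀ α ∈ A, ∀ β ∈ A, c' β (Q' α) = if β = α then 1 else 0 := by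
    intro α hα β hβ
    rw [hQ'e α hα]
    have := congrFun (congrFun hMX ⟨β, hβ⟩) ⟨α, hα⟩
    rw [Matrix.mul_apply, Matrix.one_apply] at this
    simp only [Matrix.of_apply, Subtype.mk.injEq] at this
    rw [← this, map_sum]
    refine Finset.sum_congr rfl fun γ _ => ?_
    rw [map_smul, smul_eq_mul, mul_comm]
  have hQ'b : ∀ α ∈ A, ∀ β ∈ idx m n, |c' β (Q' α)| ≤ 4 * L * C := by
    intro α hα β hβ
    rw [hQ'e α hα, map_sum]
    refine (Finset.abs_sum_le_sum_abs _ _).trans ?_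
    refine (Finset.sum_le_card_nsmul _ _ (2 * (2 * C)) ?_).trans ?_
    · intro γ _
      rw [map_smul, smul_eq_mul, abs_mul]
      exact mul_le_mul (hX2 _ _) (hWC γ γ.2 β hβ) (abs_nonneg _) (by norm_num)
    · rw [nsmul_eq_mul, Finset.card_univ, Fintype.card_coe]
      have := mul_le_mul_of_nonneg_right hcard (by positivity : 0 ≤ 2 * (2 * C))
      linarith
  have hQ'T : ∀ α ∈ A, (2 * L * C * N)⁻¹ • Q' α ∈ TT G' P1 C := by
    intro α hα
    rw [hQ'e α hα]
    have := TT_sum hG' hP1G (Finset.univ : Finset A)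
      (fun γ => (2 * L)⁻¹ * X γ ⟨α, hα⟩) (fun γ => (C * N)⁻¹ • W γ) (fun γ _ => hWT γ γ.2) (by
        refine (Finset.sum_le_card_nsmul _ _ (L⁻¹) ?_).trans ?_
        · intro γ _
          rw [abs_mul, abs_of_pos (by positivity)]
          calc (2 * L)⁻¹ * |X γ ⟨α, hα⟩| ≤ (2 * L)⁻¹ * 2 := by gcongr; exact hX2 _ _
            _ = L⁻¹ := by field_simp
        · rw [nsmul_eq_mul, Finset.card_univ, Fintype.card_coe, ← div_eq_mul_inv,
            div_le_one hL0]
          exact hcard)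
    convert this using 1
    rw [Finset.smul_sum]
    refine Finset.sum_congr rfl fun γ _ => ?_
    rw [smul_smul, smul_smul]
    congr 1
    field_simp
  set t : (Fin n → ℕ) → ℝ := fun α => c' α (P - P1) with ht
  have htb : ∀ α ∈ A, |t α| ≤ κ * C := by
    intro α hα
    simp only [ht]
    rw [← neg_sub, map_neg, abs_neg]; exact hP1P α (h.sub hα)
  set S : V := ∑ α ∈ A, t α • Q' α with hS
  have hST : (1 / 2 : ℝ)⁻¹ • S ∈ TT G' P1 C := by
    have := TT_sum hG' hP1G A (fun α => (1 / 2 : ℝ)⁻¹ * t α * (2 * L * C * N))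
      (fun α => (2 * L * C * N)⁻¹ • Q' α) hQ'T (by
        refine (sum_le_LL (B := (1 / 2 : ℝ)⁻¹ * (κ * C) * (2 * L * C * N)) h.sub (by positivity)
          ?_).trans ?_
        · intro α hα
          rw [abs_mul, abs_mul, abs_of_pos (by positivity : 0 < 2 * L * C * N),
            abs_of_pos (by norm_num : (0 : ℝ) < (1 / 2)⁻¹)]
          have := htb α hα
          gcongr
        · rw [← hLdef]
          have : L * ((1 / 2)⁻¹ * (κ * C) * (2 * L * C * N)) ≤
              L * ((1 / 2)⁻¹ * (κ * C) * (2 * L * C * L)) := by gcongr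
          have e : L * ((1 / 2)⁻¹ * (κ * C) * (2 * L * C * L)) =
            (8 * κ * C ^ 2 * L ^ 3) / 2 := by ring
          linarith)
    convert this using 1
    rw [hS, Finset.smul_sum]
    refine Finset.sum_congr rfl fun γ _ => ?_
    rw [smul_smul, smul_smul]
    congr 1
    field_simp
  have hcS : ∀ β ∈ idx m n, |c' β S| ≤ L * (κ * C * (4 * L * C)) := by
    intro β hβ
    rw [hS, map_sum]
    refine (Finset.abs_sum_le_sum_abs _ _).trans (sum_le_LL h.sub (by positivity) ?_)
    intro γ hγ
    rw [map_smul, smul_eq_mul, abs_mul]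
    exact mul_le_mul (htb γ hγ) (hQ'b γ hγ β hβ) (abs_nonneg _) (by positivity)
  have hmem : P1 + S ∈ G' C := by
    have := (TT_smul hG' hP1G hST (t := 1 / 2) (by norm_num [abs_of_pos])).1
    convert this using 2
    rw [smul_smul]; norm_num
  have hC4 : C ≤ 4 * L ^ 2 * C := by nlinarith
  have hb4 : 4 * L * C ≤ 4 * L ^ 2 * C := by
    have : L ≤ L ^ 2 := by nlinarith
    nlinarith
  refine ⟨P1 + S, Q', ⟨h.sub, by linarith, hG'.mono _ _ hC4 hmem, ?_, hdel, ?_⟩, ?_, ?_, ?_⟩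
  · intro α hα
    apply TT_mono hG' hC4
    have hpos : 0 < 2 * L * C * N := by positivity
    have hle : |(4 * L ^ 2 * C)⁻¹| * (2 * L * C * N) ≤ 1 / 2 := by
      rw [abs_of_pos (by positivity), inv_mul_le_iff₀ (by positivity)]
      have : 2 * L * C * N ≤ 2 * L * C * L := by gcongr
      nlinarith
    have hpl := TT_add hG' hP1G (by norm_num) hpos hST (hQ'T α hα) (s := 1)
      (t := (4 * L ^ 2 * C)⁻¹) (by rw [abs_one]; linarith)
    have hmi := TT_add hG' hP1G (by norm_num) hpos hST (hQ'T α hα) (s := 1)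
      (t := -(4 * L ^ 2 * C)⁻¹) (by rw [abs_one, abs_neg]; linarith)
    constructor
    · convert hpl.1 using 1
      module
    · convert hmi.1 using 1
      module
  · intro α hα β hβ _
    exact (hQ'b α hα β hβ).trans hb4
  · intro α hα β hβ
    exact (hQ'b α hα β hβ).trans hb4
  · intro α hα
    have e : c' α S = t α := by
      rw [hS, map_sum, Finset.sum_eq_single α]
      · rw [map_smul, hdel α hα α hα]; simp
      · intro δ hδ hne
        rw [map_smul, hdel δ hδ α hα, if_neg hne.symm, smul_zero]
      · exact fun h => absurd hα h
    rw [add_sub_right_comm, map_add, e]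
    simp only [ht, map_sub]
    ring
  · intro β hβ
    rw [add_sub_right_comm, map_add]
    refine (abs_add_le _ _).trans ?_
    have h1 := hP1P β hβ
    have h2 := hcS β hβ
    have h3 : κ * C ≤ κ * C ^ 2 * L ^ 3 := by
      have : C ≤ C ^ 2 * L ^ 3 := by nlinarith
      calc κ * C ≤ κ * (C ^ 2 * L ^ 3) := by gcongr
        _ = _ := by ring
    have h4 : L * (κ * C * (4 * L * C)) ≤ 4 * (κ * C ^ 2 * L ^ 3) := by
      have : L ^ 2 ≤ L ^ 3 := pow_le_pow_right₀ hL (by norm_num)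
      calc L * (κ * C * (4 * L * C)) = 4 * (κ * C ^ 2 * L ^ 2) := by ring
        _ ≤ _ := by gcongr
    have h5 : 0 ≤ κ * C ^ 2 * L ^ 3 := by positivity
    linarith
end

noncomputable section
open scoped BigOperators ContDiff

section calc5
variable {m n : ℕ}

lemma cdAdd {F H : Euc n → ℝ} {k : ℕ} (hF : ContDiff ℝ (k : ℕ) F) (hH : ContDiff ℝ (k : ℕ) H) :
    ContDiff ℝ (k : ℕ) (F + H) := hF.add hH

lemma cdSub {F H : Euc n → ℝ} {k : ℕ} (hF : ContDiff ℝ (k : ℕ) F) (hH : ContDiff ℝ (k : ℕ) H) :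
    ContDiff ℝ (k : ℕ) (F - H) := hF.sub hH

lemma cdMul {F H : Euc n → ℝ} {k : ℕ} (hF : ContDiff ℝ (k : ℕ) F) (hH : ContDiff ℝ (k : ℕ) H) :
    ContDiff ℝ (k : ℕ) (F * H) := hF.mul hH

lemma cdSmul {F : Euc n → ℝ} {k : ℕ} (hF : ContDiff ℝ (k : ℕ) F) (a : ℝ) :
    ContDiff ℝ (k : ℕ) (a • F) := contDiff_const.smul hF

lemma it_add {F H : Euc n → ℝ} {k : ℕ} (hF : ContDiff ℝ (k : ℕ) F) (hH : ContDiff ℝ (k : ℕ) H)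
    (x : Euc n) : iteratedFDeriv ℝ k (F + H) x = iteratedFDeriv ℝ k F x + iteratedFDeriv ℝ k H x :=
  iteratedFDeriv_add_apply hF.contDiffAt hH.contDiffAt

lemma it_smul {F : Euc n → ℝ} {k : ℕ} (hF : ContDiff ℝ (k : ℕ) F) (a : ℝ)
    (x : Euc n) : iteratedFDeriv ℝ k (a • F) x = a • iteratedFDeriv ℝ k F x :=
  iteratedFDeriv_const_smul_apply hF.contDiffAt

lemma it_sub {F H : Euc n → ℝ} {k : ℕ} (hF : ContDiff ℝ (k : ℕ) F) (hH : ContDiff ℝ (k : ℕ) H)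
    (x : Euc n) : iteratedFDeriv ℝ k (F - H) x = iteratedFDeriv ℝ k F x - iteratedFDeriv ℝ k H x := by
  have h1 : F - H = F + (-1 : ℝ) • H := by ext; simp [sub_eq_add_neg]
  have h2 : ContDiff ℝ (k : ℕ) ((-1 : ℝ) • H) := contDiff_const.smul hH
  rw [h1, it_add hF h2, it_smul hH]; simp [sub_eq_add_neg]

lemma mD_add {F H : Euc n → ℝ} {α : Fin n → ℕ} (hF : ContDiff ℝ (deg α : ℕ) F)
    (hH : ContDiff ℝ (deg α : ℕ) H) (x : Euc n) : mD α (F + H) x = mD α F x + mD α H x := by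
  rw [mD_eq_iter α hF, mD_eq_iter α hH, mD_eq_iter α (cdAdd hF hH), it_add hF hH]; rfl

lemma mD_smul {F : Euc n → ℝ} {α : Fin n → ℕ} (hF : ContDiff ℝ (deg α : ℕ) F) (a : ℝ)
    (x : Euc n) : mD α (a • F) x = a * mD α F x := by
  rw [mD_eq_iter α hF, mD_eq_iter α (cdSmul hF a),
    it_smul hF]; rfl

lemma mD_sub {F H : Euc n → ℝ} {α : Fin n → ℕ} (hF : ContDiff ℝ (deg α : ℕ) F)
    (hH : ContDiff ℝ (deg α : ℕ) H) (x : Euc n) : mD α (F - H) x = mD α F x - mD α H x := by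
  rw [mD_eq_iter α hF, mD_eq_iter α hH, mD_eq_iter α (cdSub hF hH), it_sub hF hH]; rfl

/-- Scaled derivative bounds at a point. -/
def Bd (m : ℕ) {n : ℕ} (F : Euc n → ℝ) (x : Euc n) (K r : ℝ) : Prop :=
  ∀ k ≤ m, ‖iteratedFDeriv ℝ k F x‖ ≤ K * r ^ (m - k)

lemma cd_le {F : Euc n → ℝ} (hF : ContDiff ℝ (m : ℕ) F) {k : ℕ} (hk : k ≤ m) :
    ContDiff ℝ (k : ℕ) F := hF.of_le (by exact_mod_cast hk)

lemma Bd.add {F H : Euc n → ℝ} {x : Euc n} {K K' r : ℝ} (hF : ContDiff ℝ (m : ℕ) F)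
    (hH : ContDiff ℝ (m : ℕ) H) (h1 : Bd m F x K r) (h2 : Bd m H x K' r) :
    Bd m (F + H) x (K + K') r := by
  intro k hk
  rw [it_add (cd_le hF hk) (cd_le hH hk)]
  refine (norm_add_le _ _).trans ?_
  have := h1 k hk
  have := h2 k hk
  linarith

lemma Bd.smul {F : Euc n → ℝ} {x : Euc n} {K r : ℝ} (hF : ContDiff ℝ (m : ℕ) F)
    (h1 : Bd m F x K r) (a : ℝ) : Bd m (a • F) x (|a| * K) r := by
  intro k hk
  rw [it_smul (cd_le hF hk), norm_smul, Real.norm_eq_abs, mul_assoc]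
  exact mul_le_mul_of_nonneg_left (h1 k hk) (abs_nonneg _)

lemma Bd.sub {F H : Euc n → ℝ} {x : Euc n} {K K' r : ℝ} (hF : ContDiff ℝ (m : ℕ) F)
    (hH : ContDiff ℝ (m : ℕ) H) (h1 : Bd m F x K r) (h2 : Bd m H x K' r) :
    Bd m (F - H) x (K + K') r := by
  intro k hk
  rw [it_sub (cd_le hF hk) (cd_le hH hk)]
  refine (norm_sub_le _ _).trans ?_
  have := h1 k hk
  have := h2 k hk
  linarith

lemma Bd.mono {F : Euc n → ℝ} {x : Euc n} {K K' r : ℝ} (hr : 0 ≤ r)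
    (h1 : Bd m F x K r) (hK : K ≤ K') : Bd m F x K' r := by
  intro k hk
  exact (h1 k hk).trans (mul_le_mul_of_nonneg_right hK (by positivity))

lemma Bd.nonneg {F : Euc n → ℝ} {x : Euc n} {K r : ℝ} (h1 : Bd m F x K r) : 0 ≤ K := by
  have := (norm_nonneg _).trans (h1 m le_rfl)
  simpa using this

lemma Bd.up {F : Euc n → ℝ} {x : Euc n} {K r r' : ℝ} (hr : 0 ≤ r) (hrr : r ≤ r')
    (h1 : Bd m F x K r) : Bd m F x K r' := by
  intro k hk
  have := h1.nonneg
  exact (h1 k hk).trans (by gcongr)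

/-- scale down by a factor at most `l`. -/
lemma Bd.down {F : Euc n → ℝ} {x : Euc n} {K r r' l : ℝ} (hr : 0 ≤ r) (hr' : 0 ≤ r')
    (hl : 1 ≤ l) (hrr : r' ≤ l * r)
    (h1 : Bd m F x K r') : Bd m F x (l ^ m * K) r := by
  intro k hk
  have := h1.nonneg
  refine (h1 k hk).trans ?_
  have h2 : r' ^ (m - k) ≤ l ^ m * r ^ (m - k) := by
    calc r' ^ (m - k) ≤ (l * r) ^ (m - k) := by gcongr
      _ = l ^ (m - k) * r ^ (m - k) := mul_pow _ _ _
      _ ≤ l ^ m * r ^ (m - k) := by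
        gcongr
        omega
  calc K * r' ^ (m - k) ≤ K * (l ^ m * r ^ (m - k)) := by gcongr
    _ = _ := by ring

lemma Bd.taylor {F : Euc n → ℝ} {x : Euc n} {K r : ℝ} (hF : ContDiff ℝ (m : ℕ) F) (hr : 0 < r)
    (h0 : Bd m F x K r)
    (h1 : ∀ z ∈ Metric.closedBall x r, ‖iteratedFDeriv ℝ m F z‖ ≤ K) {y : Euc n}
    (hy : y ∈ Metric.closedBall x r) : Bd m F y (2 ^ m * K) r := fun k hk =>
  taylor_bound hF x h0.nonneg hr (fun k hk => h0 k hk.le) h1 k hk y hy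

/-- dimension constant -/
def NN (m n : ℕ) : ℝ := ((n : ℝ) + 1) ^ m

lemma NN_one (m n : ℕ) : 1 ≤ NN m n := one_le_pow₀ (by simp)

lemma dn_le_NN {F : Euc n → ℝ} {k : ℕ} (hk : k ≤ m) (hF : ContDiff ℝ (k : ℕ) F) (x : Euc n)
    {K : ℝ} (hK : 0 ≤ K) (h : ∀ α : Fin n → ℕ, deg α = k → |mD α F x| ≤ K) :
    ‖iteratedFDeriv ℝ k F x‖ ≤ NN m n * K := by
  refine (norm_iter_le hF x K hK h).trans ?_
  unfold NN
  gcongr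
  calc (n : ℝ) ^ k ≤ ((n : ℝ) + 1) ^ k := by gcongr; simp
    _ ≤ _ := pow_le_pow_right₀ (by simp) hk

/-- Equality of jets of order `< m`. -/
def Jeq (m : ℕ) {n : ℕ} (x : Euc n) (F H : Euc n → ℝ) : Prop :=
  ∀ β ∈ idx m n, mD β F x = mD β H x

lemma Jeq.dn {x : Euc n} {F H : Euc n → ℝ} (h : Jeq m x F H) (hF : ContDiff ℝ (m : ℕ) F)
    (hH : ContDiff ℝ (m : ℕ) H) {k : ℕ} (hk : k < m) :
    iteratedFDeriv ℝ k (F - H) x = 0 := by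
  rw [← norm_le_zero_iff]
  have h1 := cd_le hF hk.le
  have h2 := cd_le hH hk.le
  have := norm_iter_le (cdSub h1 h2) x 0 le_rfl (by
    intro α hα
    subst hα
    rw [mD_sub h1 h2, h α (mem_idx.2 hk), sub_self, abs_zero])
  simpa using this

/-- Polynomials of degree `< m`. -/
def Pol (m n : ℕ) : Submodule ℝ (Euc n → ℝ) where
  carrier := {P | ContDiff ℝ ∞ P ∧ ∀ x, iteratedFDeriv ℝ m P x = 0}
  zero_mem' := ⟨contDiff_const, fun x => by
    have := it_smul (n := n) (F := 0) (k := m) contDiff_const 0 x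
    simpa using this⟩
  add_mem' := by
    intro P Q hP hQ
    refine ⟨hP.1.add hQ.1, fun x => ?_⟩
    rw [it_add (hP.1.of_le (by exact_mod_cast le_top)) (hQ.1.of_le (by exact_mod_cast le_top)),
      hP.2, hQ.2, add_zero]
  smul_mem' := by
    intro a P hP
    refine ⟨contDiff_const.smul hP.1, fun x => ?_⟩
    rw [it_smul (hP.1.of_le (by exact_mod_cast le_top)), hP.2, smul_zero]

lemma pcd (P : Pol m n) (k : ℕ) : ContDiff ℝ (k : ℕ) (P : Euc n → ℝ) :=
  P.2.1.of_le (by exact_mod_cast le_top)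

lemma ptop (P : Pol m n) (x : Euc n) : iteratedFDeriv ℝ m (P : Euc n → ℝ) x = 0 := P.2.2 x

/-- Normalized coefficients. -/
def cf (m : ℕ) {n : ℕ} (x : Euc n) (r : ℝ) (β : Fin n → ℕ) : Pol m n →ₗ[ℝ] ℝ where
  toFun P := mD β P x / r ^ (m - deg β)
  map_add' P Q := by
    rw [Submodule.coe_add, mD_add (pcd P _) (pcd Q _), add_div]
  map_smul' a P := by
    rw [Submodule.coe_smul, mD_smul (pcd P _)]
    simp [mul_div_assoc]

lemma cf_apply (x : Euc n) (r : ℝ) (β : Fin n → ℕ) (P : Pol m n) :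
    cf m x r β P = mD β P x / r ^ (m - deg β) := rfl

lemma cf_zero_iff {x : Euc n} {r : ℝ} (hr : 0 < r) {β : Fin n → ℕ} {P : Pol m n} :
    cf m x r β P = 0 ↔ mD β P x = 0 := by
  rw [cf_apply, div_eq_zero_iff, or_iff_left (by positivity)]

lemma Bd.cf {x : Euc n} {r K : ℝ} (hr : 0 < r) {P : Pol m n} (h : Bd m (P : Euc n → ℝ) x K r)
    {β : Fin n → ℕ} (hβ : β ∈ idx m n) : |cf m x r β P| ≤ K := by
  rw [cf_apply, abs_div, abs_of_pos (by positivity : 0 < r ^ (m - deg β)), div_le_iff₀ (by positivity)]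
  exact (abs_mD_le β (pcd P _) x).trans (h _ (mem_idx.1 hβ).le)

lemma Bd_of_cf {x : Euc n} {r K : ℝ} (hr : 0 < r) (hK : 0 ≤ K) {P : Pol m n}
    (h : ∀ β ∈ idx m n, |cf m x r β P| ≤ K) : Bd m (P : Euc n → ℝ) x (NN m n * K) r := by
  intro k hk
  rcases hk.eq_or_lt with rfl | hk'
  · rw [ptop P, norm_zero]
    have := NN_one k n
    positivity
  rw [mul_assoc]
  apply dn_le_NN hk (pcd P _) x (by positivity)
  rintro α rfl
  have := h α (mem_idx.2 hk')
  rwa [cf_apply, abs_div, abs_of_pos (by positivity : 0 < r ^ (m - deg α)),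
    div_le_iff₀ (by positivity)] at this

/-- moving base point for polynomials -/
lemma Bd.move {x y : Euc n} {r K : ℝ} (hr : 0 < r) {P : Pol m n}
    (h : Bd m (P : Euc n → ℝ) x K r) (hy : dist y x ≤ r) :
    Bd m (P : Euc n → ℝ) y (2 ^ m * K) r :=
  h.taylor (pcd P m) hr (fun z _ => by rw [ptop P, norm_zero]; exact h.nonneg) hy

lemma cf_diff {x y : Euc n} {r K κ : ℝ} (hr : 0 < r) {P : Pol m n} (hK : 0 ≤ K)
    (h : ∀ β ∈ idx m n, |cf m x r β P| ≤ K) (hκ1 : κ ≤ 1) (hy : dist y x ≤ κ * r)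
    {β : Fin n → ℕ} (hβ : β ∈ idx m n) :
    |cf m y r β P - cf m x r β P| ≤ (2 ^ m * NN m n * κ) * K := by
  have hB := Bd_of_cf hr hK h
  have hβ' := mem_idx.1 hβ
  have hyr : dist y x ≤ r := hy.trans (by nlinarith)
  have hN := NN_one m n
  have hd : Differentiable ℝ (iteratedFDeriv ℝ (deg β) (P : Euc n → ℝ)) :=
    (pcd P (deg β + 1)).differentiable_iteratedFDeriv (by exact_mod_cast Nat.lt_succ_self _)
  have hmv := (convex_closedBall x r).norm_image_sub_le_of_norm_fderiv_le (𝕜 := ℝ)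
    (f := iteratedFDeriv ℝ (deg β) (P : Euc n → ℝ))
    (C := 2 ^ m * (NN m n * K) * r ^ (m - (deg β + 1)))
    (fun y _ => hd y) (fun z hz => by
      rw [norm_fderiv_iteratedFDeriv]; exact (hB.move hr hz) _ hβ')
    (Metric.mem_closedBall_self hr.le) (Metric.mem_closedBall.2 hyr)
  have h1 : |mD β P y - mD β P x| ≤
      ‖iteratedFDeriv ℝ (deg β) (P : Euc n → ℝ) y - iteratedFDeriv ℝ (deg β) (P : Euc n → ℝ) x‖ := by
    rw [mD_eq_iter β (pcd P _), mD_eq_iter β (pcd P _), ← Real.norm_eq_abs]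
    refine ((iteratedFDeriv ℝ (deg β) (P : Euc n → ℝ) y -
      iteratedFDeriv ℝ (deg β) (P : Euc n → ℝ) x).le_opNorm _).trans ?_
    simp
  rw [cf_apply, cf_apply, ← sub_div, abs_div, abs_of_pos (by positivity : 0 < r ^ (m - deg β)),
    div_le_iff₀ (by positivity)]
  refine h1.trans (hmv.trans ?_)
  rw [dist_eq_norm] at hy
  calc _ ≤ 2 ^ m * (NN m n * K) * r ^ (m - (deg β + 1)) * (κ * r) := by gcongr
    _ = 2 ^ m * NN m n * κ * K * (r ^ (m - (deg β + 1)) * r) := by ring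
    _ = _ := by
      rw [← pow_succ]
      congr 2
      omega

/-- All `A`-derivatives vanish identically. -/
def VA {m n : ℕ} (A : Finset (Fin n → ℕ)) (P : Pol m n) : Prop := ∀ α ∈ A, ∀ z, mD α P z = 0

lemma pD_mD {F : Euc n → ℝ} {α : Fin n → ℕ} (i : Fin n) (hF : ContDiff ℝ (deg α + 1 : ℕ) F) :
    pD i (mD α F) = mD (α + Pi.single i 1) F := by
  have h1 : pD i (mD α F) = pL (i :: mL α) F := rfl
  rw [h1, pL_eq_mD _ (by simpa [length_mL] using hF)]
  congr 1
  funext j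
  rw [List.count_cons, count_mL]
  by_cases hj : i = j
  · subst hj; simp
  · simp [hj, Ne.symm hj]

lemma fderiv_zero_of_pD {F : Euc n → ℝ} {x : Euc n} (h : ∀ i, pD i F x = 0) :
    fderiv ℝ F x = 0 := by
  apply ContinuousLinearMap.coe_injective
  apply (EuclideanSpace.basisFun (Fin n) ℝ).toBasis.ext
  intro i
  have := h i
  unfold pD at this
  simpa using this

lemma VA_of_point {A : Finset (Fin n → ℕ)} (hA : Mono m A) (hAI : A ⊆ idx m n) {P : Pol m n}
    {x : Euc n} (h : ∀ α ∈ A, mD α P x = 0) : VA A P := by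
  have key : ∀ d, ∀ α ∈ A, m ≤ deg α + d → ∀ z, mD α P z = 0 := by
    intro d
    induction d with
    | zero =>
      intro α hα hd
      have := mem_idx.1 (hAI hα)
      omega
    | succ d ih =>
      intro α hα hd z
      have hdiff : Differentiable ℝ (mD α P) := by
        have : ContDiff ℝ (1 : ℕ) (pL (mL α) (P : Euc n → ℝ)) := pL_contDiff (mL α) (pcd P _)
        exact this.differentiable (by simp)
      have hf : ∀ w, fderiv ℝ (mD α P) w = 0 := by
        intro w
        apply fderiv_zero_of_pD
        intro i
        rw [pD_mD i (pcd P _)]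
        by_cases hi : α + Pi.single i 1 ∈ idx m n
        · exact ih _ (hA α hα i hi) (by rw [deg_add, deg_single]; omega) w
        · rw [mem_idx, not_lt, deg_add, deg_single] at hi
          have h1 := mem_idx.1 (hAI hα)
          have h2 : deg (α + Pi.single i 1) = m := by rw [deg_add, deg_single]; omega
          have h3 := abs_mD_le (α + Pi.single i 1) (pcd P _) w
          rw [h2, ptop P, norm_zero] at h3
          exact abs_nonpos_iff.1 h3
      rw [is_const_of_fderiv_eq_zero hdiff hf z x]
      exact h α hα
  intro α hα
  exact key m α hα (by omega)

lemma VA.sub {A : Finset (Fin n → ℕ)} {P Q : Pol m n} (hP : VA A P) (hQ : VA A Q) :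
    VA A (P - Q) := by
  intro α hα z
  rw [Submodule.coe_sub, mD_sub (pcd P _) (pcd Q _), hP α hα, hQ α hα, sub_self]

lemma VA.add {A : Finset (Fin n → ℕ)} {P Q : Pol m n} (hP : VA A P) (hQ : VA A Q) :
    VA A (P + Q) := by
  intro α hα z
  rw [Submodule.coe_add, mD_add (pcd P _) (pcd Q _), hP α hα, hQ α hα, add_zero]

end calc5
end

noncomputable section
open scoped BigOperators ContDiff

section leib
variable {m n : ℕ}

/-- centred coordinate function -/
def xi {n : ℕ} (i : Fin n) (x : Euc n) : Euc n → ℝ := fun y => y i - x i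

lemma xi_contDiff (i : Fin n) (x : Euc n) {k : WithTop ℕ∞} : ContDiff ℝ k (xi i x) := by
  unfold xi
  fun_prop

lemma xi_self (i : Fin n) (x : Euc n) : xi i x x = 0 := by simp [xi]

lemma pD_xi (i a : Fin n) (x y : Euc n) : pD a (xi i x) y = if a = i then 1 else 0 := by
  unfold pD
  have h : HasFDerivAt (xi i x) (EuclideanSpace.proj i : Euc n →L[ℝ] ℝ) y := by
    exact ((EuclideanSpace.proj i : Euc n →L[ℝ] ℝ).hasFDerivAt).sub_const (x i)
  rw [h.fderiv]
  simp [EuclideanSpace.single_apply, eq_comm]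

lemma pD_mul {F H : Euc n → ℝ} {a : Fin n} {y : Euc n} (hF : DifferentiableAt ℝ F y)
    (hH : DifferentiableAt ℝ H y) : pD a (F * H) y = pD a F y * H y + F y * pD a H y := by
  unfold pD
  rw [fderiv_mul hF hH]
  simp
  ring

lemma pD_add' {F H : Euc n → ℝ} {a : Fin n} {y : Euc n} (hF : DifferentiableAt ℝ F y)
    (hH : DifferentiableAt ℝ H y) : pD a (F + H) y = pD a F y + pD a H y := by
  unfold pD
  rw [fderiv_add hF hH]
  simp

lemma pD_smul' {F : Euc n → ℝ} {a : Fin n} {y : Euc n} (c : ℝ) (hF : DifferentiableAt ℝ F y) :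
    pD a (c • F) y = c * pD a F y := by
  unfold pD
  rw [fderiv_const_smul hF]
  simp

lemma pL_leib (i : Fin n) (x : Euc n) (l : List (Fin n)) : ∀ {F : Euc n → ℝ},
    ContDiff ℝ (l.length : ℕ) F →
    pL l (xi i x * F) = xi i x * pL l F + (l.count i : ℝ) • pL (l.erase i) F := by
  induction l with
  | nil => intro F hF; simp [pL]
  | cons a l ih =>
    intro F hF
    have hF' : ContDiff ℝ (1 + l.length : ℕ) F := by
      have : 1 + l.length = (a :: l).length := by simp [add_comm]
      rw [this]; exact hF
    have h1 : pL (a :: l) (xi i x * F) = pD a (pL l (xi i x * F)) := rfl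
    have hd1 : ContDiff ℝ (1 : ℕ) (pL l F) := pL_contDiff l hF'
    have hle : (l.erase i).length ≤ l.length := List.length_erase_le
    have hd2 : ContDiff ℝ (1 : ℕ) (pL (l.erase i) F) :=
      pL_contDiff (l.erase i) (cd_le hF' (by omega))
    have d1 : Differentiable ℝ (pL l F) := hd1.differentiable (by simp)
    have d2 : Differentiable ℝ (pL (l.erase i) F) := hd2.differentiable (by simp)
    have d3 : Differentiable ℝ (xi i x) := (xi_contDiff i x (k := 1)).differentiable (by simp)
    rw [h1, ih (cd_le hF' (by omega))]
    funext y
    rw [pD_add' ((d3 y).mul (d1 y)) ((d2 y).const_smul _), pD_mul (d3 y) (d1 y),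
      pD_smul' _ (d2 y), pD_xi]
    have h2 : pD a (pL l F) = pL (a :: l) F := rfl
    rw [h2]
    by_cases ha : a = i
    · subst ha
      have h3 : (l.count a : ℝ) * pD a (pL (l.erase a) F) y = (l.count a : ℝ) * pL l F y := by
        by_cases hm : a ∈ l
        · have h4 : pD a (pL (l.erase a) F) = pL (a :: l.erase a) F := rfl
          rw [h4, pL_perm (List.perm_cons_erase hm).symm (cd_le hF' (by
            rw [(List.perm_cons_erase hm).symm.length_eq]; omega))]
        · rw [List.count_eq_zero.2 hm]; simp
      rw [h3]
      simp
      ring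
    · have h4 : pD a (pL (l.erase i) F) = pL (a :: l.erase i) F := rfl
      rw [h4]
      simp [ha, List.erase_cons]

lemma mD_xi_mul (i : Fin n) (x : Euc n) (β : Fin n → ℕ) {F : Euc n → ℝ}
    (hF : ContDiff ℝ (deg β : ℕ) F) (y : Euc n) :
    mD β (xi i x * F) y = xi i x y * mD β F y + (β i : ℝ) * mD (β - Pi.single i 1) F y := by
  rw [mD_eq_pL, pL_leib i x (mL β) (by rw [length_mL]; exact hF)]
  have hle : ((mL β).erase i).length ≤ (mL β).length := List.length_erase_le
  rw [length_mL] at hle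
  rw [pL_eq_mD ((mL β).erase i) (cd_le hF hle)]
  have : (fun j => List.count j ((mL β).erase i)) = β - Pi.single i 1 := by
    funext j
    by_cases hj : j = i
    · subst hj; simp [count_mL]
    · rw [List.count_erase_of_ne hj]; simp [count_mL, hj]
  rw [this, count_mL]
  simp [mD_eq_pL]

end leib
end

noncomputable section
open scoped BigOperators ContDiff

section polex
variable {m n : ℕ}

lemma mon_exists (x : Euc n) (d : ℕ) : ∀ β : Fin n → ℕ, deg β = d →
    ∃ P : Euc n → ℝ, ContDiff ℝ ∞ P ∧ (∃ K : ℝ, K ≠ 0 ∧ ∀ α, mD α P x = if α = β then K else 0) ∧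
      ∀ α, d < deg α → ∀ y, mD α P y = 0 := by
  induction d with
  | zero =>
    intro β hβ
    have hβ0 : β = 0 := by
      funext i
      have : β i ≤ deg β := Finset.single_le_sum (f := β) (fun _ _ => Nat.zero_le _) (Finset.mem_univ i)
      simp; omega
    subst hβ0
    have hz : ∀ α : Fin n → ℕ, α ≠ 0 → ∀ y, mD α (fun _ : Euc n => (1 : ℝ)) y = 0 := by
      intro α hα y
      have h1 := abs_mD_le α (F := fun _ : Euc n => (1 : ℝ)) contDiff_const y
      have h2 : deg α ≠ 0 := by
        intro h
        apply hα
        funext i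
        have : α i ≤ deg α := Finset.single_le_sum (f := α) (fun _ _ => Nat.zero_le _) (Finset.mem_univ i)
        simp; omega
      rw [iteratedFDeriv_const_of_ne h2] at h1
      simpa using h1
    refine ⟨fun _ => 1, contDiff_const, ⟨1, one_ne_zero, fun α => ?_⟩, ?_⟩
    · split_ifs with h
      · subst h
        have : mL (0 : Fin n → ℕ) = [] := List.length_eq_zero_iff.1 (by rw [length_mL, hβ])
        rw [mD_eq_pL, this]; rfl
      · exact hz α h x
    · intro α hα
      exact hz α (by rintro rfl; omega)
  | succ d ih =>
    intro β hβ
    obtain ⟨i, hi⟩ : ∃ i, 0 < β i := by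
      by_contra h
      push Not at h
      have : deg β = 0 := Finset.sum_eq_zero fun i _ => Nat.le_zero.1 (h i)
      omega
    have hγ := sub_single_add hi
    have hγd : deg (β - Pi.single i 1) = d := by
      have := congrArg deg hγ
      rw [deg_add, deg_single] at this
      omega
    obtain ⟨P, hP, ⟨K, hK, hP1⟩, hP2⟩ := ih _ hγd
    have hcd : ∀ k : ℕ, ContDiff ℝ (k : ℕ) P := fun k => hP.of_le (by exact_mod_cast le_top)
    refine ⟨xi i x * P, (xi_contDiff i x).mul hP, ⟨β i * K, by positivity, fun α => ?_⟩, ?_⟩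
    · rw [mD_xi_mul i x α (hcd _), xi_self, zero_mul, zero_add, hP1]
      by_cases hα : α i = 0
      · rw [if_neg (show ¬ α = β by rintro rfl; omega), hα]; simp
      · have h3 := sub_single_add (Nat.pos_of_ne_zero hα)
        by_cases h4 : α = β
        · subst h4; simp
        · rw [if_neg, if_neg h4, mul_zero]
          intro h
          apply h4
          rw [← h3, ← hγ, h]
    · intro α hα y
      rw [mD_xi_mul i x α (hcd _), hP2 α (by omega), mul_zero, zero_add]
      by_cases h0 : α i = 0
      · rw [h0]; simp
      · have h3 := congrArg deg (sub_single_add (Nat.pos_of_ne_zero h0))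
        rw [deg_add, deg_single] at h3
        rw [hP2 _ (by omega), mul_zero]

lemma mon_pol (x : Euc n) {β : Fin n → ℕ} (hβ : β ∈ idx m n) :
    ∃ P : Pol m n, ∀ α, mD α P x = if α = β then 1 else 0 := by
  obtain ⟨P, hP, ⟨K, hK, hP1⟩, hP2⟩ := mon_exists x _ β rfl
  have hcd : ∀ k : ℕ, ContDiff ℝ (k : ℕ) P := fun k => hP.of_le (by exact_mod_cast le_top)
  have hmem : P ∈ Pol m n := by
    refine ⟨hP, fun y => ?_⟩
    rw [← norm_le_zero_iff]
    have := norm_iter_le (hcd m) y 0 le_rfl (by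
      intro α hα
      rw [hP2 α (by rw [hα]; exact mem_idx.1 hβ), abs_zero])
    simpa using this
  refine ⟨K⁻¹ • ⟨P, hmem⟩, fun α => ?_⟩
  rw [Submodule.coe_smul, mD_smul (hcd _), hP1]
  split_ifs <;> simp [hK]

lemma pol_exists (x : Euc n) (v : (Fin n → ℕ) → ℝ) :
    ∃ P : Pol m n, ∀ β ∈ idx m n, mD β P x = v β := by
  have h : ∀ β : Fin n → ℕ, ∃ P : Pol m n, β ∈ idx m n → ∀ α, mD α P x = if α = β then 1 else 0 := by
    intro β
    by_cases hβ : β ∈ idx m n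
    · obtain ⟨P, hP⟩ := mon_pol x hβ
      exact ⟨P, fun _ => hP⟩
    · exact ⟨0, fun h => absurd h hβ⟩
  choose P hP using h
  refine ⟨∑ β ∈ idx m n, v β • P β, fun β hβ => ?_⟩
  have h1 : mD β (∑ β ∈ idx m n, v β • P β : Pol m n) x =
      cf m x 1 β (∑ β ∈ idx m n, v β • P β) := by rw [cf_apply]; simp
  rw [h1, map_sum]
  have h2 : ∀ γ ∈ idx m n, cf m x 1 β (v γ • P γ) = if β = γ then v γ else 0 := by
    intro γ hγ
    rw [map_smul, cf_apply, hP γ hγ]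
    split_ifs <;> simp
  rw [Finset.sum_congr rfl h2]
  simp [hβ]

lemma jet_exists (x : Euc n) (F : Euc n → ℝ) : ∃ P : Pol m n, Jeq m x F P := by
  obtain ⟨P, hP⟩ := pol_exists (m := m) x (fun β => mD β F x)
  exact ⟨P, fun β hβ => (hP β hβ).symm⟩

end polex

section cut
variable {n : ℕ}

/-- A scaled cutoff. -/
structure Cut (m : ℕ) {n : ℕ} (C : ℝ) (x : Euc n) (r : ℝ) (φ : Euc n → ℝ) : Prop where
  cd : ContDiff ℝ (m : ℕ) φ
  nn : ∀ y, 0 ≤ φ y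
  le : ∀ y, φ y ≤ 1
  one : ∀ y, dist y x ≤ r → φ y = 1
  zero : ∀ y, 2 * r ≤ dist y x → φ y = 0
  bd : ∀ k ≤ m, ∀ y, ‖iteratedFDeriv ℝ k φ y‖ ≤ C / r ^ k

lemma cut_exists (m n : ℕ) : ∃ C : ℝ, 1 ≤ C ∧ ∀ (x : Euc n) (r : ℝ), 0 < r → ∃ φ, Cut m C x r φ := by
  let b : ContDiffBump (0 : Euc n) := ⟨1, 2, by norm_num, by norm_num⟩
  have hb : ∀ k : ℕ, ContDiff ℝ (k : ℕ) b := fun k => b.contDiff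
  have h1 : ∀ k : ℕ, ∃ C, ∀ y, ‖iteratedFDeriv ℝ k b y‖ ≤ C := by
    intro k
    exact ((b.hasCompactSupport.iteratedFDeriv k).exists_bound_of_continuous
      ((hb k).continuous_iteratedFDeriv le_rfl))
  choose Ck hCk using h1
  have hCn : ∀ k, 0 ≤ Ck k := fun k => (norm_nonneg _).trans (hCk k 0)
  refine ⟨1 + ∑ k ∈ Finset.range (m + 1), Ck k, ?_, ?_⟩
  · have : 0 ≤ ∑ k ∈ Finset.range (m + 1), Ck k := Finset.sum_nonneg fun k _ => hCn k
    linarith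
  intro x r hr
  let g : Euc n →L[ℝ] Euc n := r⁻¹ • ContinuousLinearMap.id ℝ (Euc n)
  have hg : ∀ y, g y = r⁻¹ • y := fun y => rfl
  have hgn : ‖g‖ ≤ r⁻¹ := by
    refine ContinuousLinearMap.opNorm_le_bound _ (by positivity) fun y => ?_
    rw [hg, norm_smul, Real.norm_of_nonneg (by positivity)]
  have hdist : ∀ y, ‖g (y - x)‖ = dist y x / r := by
    intro y
    rw [hg, norm_smul, Real.norm_of_nonneg (by positivity), dist_eq_norm]; ring
  refine ⟨fun y => b (g (y - x)), ?_, fun y => b.nonneg, fun y => b.le_one, ?_, ?_, ?_⟩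
  · exact (hb m).comp (g.contDiff.comp (contDiff_id.sub contDiff_const))
  · intro y hy
    apply b.one_of_mem_closedBall
    rw [mem_closedBall_zero_iff, hdist]
    exact (div_le_one hr).2 hy
  · intro y hy
    apply b.zero_of_le_dist
    rw [dist_zero_right, hdist]
    exact (le_div_iff₀ hr).2 hy
  · intro k hk y
    have h2 : iteratedFDeriv ℝ k (fun y => b (g (y - x))) y =
        iteratedFDeriv ℝ k (b ∘ g) (y - x) := iteratedFDeriv_comp_sub (f := b ∘ g) k x y
    rw [h2, g.iteratedFDeriv_comp_right (hb k) _ le_rfl]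
    refine (ContinuousMultilinearMap.norm_compContinuousLinearMap_le _ _).trans ?_
    rw [Finset.prod_const, Finset.card_univ, Fintype.card_fin, div_eq_mul_inv, ← inv_pow]
    have h3 : Ck k ≤ 1 + ∑ k ∈ Finset.range (m + 1), Ck k := by
      have := Finset.single_le_sum (f := Ck) (fun k _ => hCn k) (Finset.mem_range.2 (Nat.lt_succ_of_le hk))
      linarith
    gcongr
    · exact (norm_nonneg _).trans ((hCk k 0).trans h3)
    · exact (hCk k _).trans h3

end cut
end

noncomputable section
open scoped BigOperators ContDiff

section gam
variable {m n : ℕ}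

/-- Nonnegative interpolants with bounded derivatives. -/
structure Wit (m : ℕ) {n : ℕ} (f : Euc n → ℝ) (S : Set (Euc n)) (C : ℝ) (F : Euc n → ℝ) : Prop where
  cd : ContDiff ℝ (m : ℕ) F
  bd : ∀ j ≤ m, ∀ y, ‖iteratedFDeriv ℝ j F y‖ ≤ C
  nn : ∀ y, 0 ≤ F y
  eq : ∀ y ∈ S, F y = f y

lemma Wit.combo {f : Euc n → ℝ} {S : Set (Euc n)} {C : ℝ} {F H : Euc n → ℝ} (hF : Wit m f S C F)
    (hH : Wit m f S C H) {a b : ℝ} (ha : 0 ≤ a) (hb : 0 ≤ b) (hab : a + b = 1) :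
    Wit m f S C (a • F + b • H) where
  cd := cdAdd (cdSmul hF.cd a) (cdSmul hH.cd b)
  bd := by
    intro j hj y
    have h1 := cd_le hF.cd hj
    have h2 := cd_le hH.cd hj
    rw [it_add (cdSmul h1 a) (cdSmul h2 b), it_smul h1, it_smul h2]
    refine (norm_add_le _ _).trans ?_
    rw [norm_smul, norm_smul, Real.norm_of_nonneg ha, Real.norm_of_nonneg hb]
    have h3 := mul_le_mul_of_nonneg_left (hF.bd j hj y) ha
    have h4 := mul_le_mul_of_nonneg_left (hH.bd j hj y) hb
    have : C = a * C + b * C := by rw [← add_mul, hab, one_mul]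
    linarith
  nn := by
    intro y
    have := hF.nn y
    have := hH.nn y
    simp only [Pi.add_apply, Pi.smul_apply, smul_eq_mul]
    positivity
  eq := by
    intro y hy
    simp only [Pi.add_apply, Pi.smul_apply, smul_eq_mul, hF.eq y hy, hH.eq y hy]
    rw [← add_mul, hab, one_mul]

lemma Wit.mono {f : Euc n → ℝ} {S S' : Set (Euc n)} {C C' : ℝ} {F : Euc n → ℝ} (hF : Wit m f S C F)
    (hS : S' ⊆ S) (hC : C ≤ C') : Wit m f S' C' F :=
  ⟨hF.cd, fun j hj y => (hF.bd j hj y).trans hC, hF.nn, fun y hy => hF.eq y (hS hy)⟩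

lemma Wit.nonneg {f : Euc n → ℝ} {S : Set (Euc n)} {C : ℝ} {F : Euc n → ℝ} (hF : Wit m f S C F) :
    0 ≤ C := (norm_nonneg _).trans (hF.bd 0 (Nat.zero_le _) 0)

/-- The approximating convex sets. -/
def Gam (m : ℕ) {n : ℕ} (E : Set (Euc n)) (f : Euc n → ℝ) (k : ℕ) (x : Euc n) (C : ℝ) :
    Set (Pol m n) :=
  {P | ∀ S ⊆ E, S.ncard ≤ k → ∃ F, Wit m f S C F ∧ Jeq m x F P}

lemma mD_combo {F H : Euc n → ℝ} (hF : ContDiff ℝ (m : ℕ) F) (hH : ContDiff ℝ (m : ℕ) H)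
    (a b : ℝ) (x : Euc n) {β : Fin n → ℕ} (hβ : β ∈ idx m n) :
    mD β (a • F + b • H) x = a * mD β F x + b * mD β H x := by
  have h1 := cd_le hF (mem_idx.1 hβ).le
  have h2 := cd_le hH (mem_idx.1 hβ).le
  rw [mD_add (cdSmul h1 a) (cdSmul h2 b), mD_smul h1, mD_smul h2]

lemma Gam_CF (E : Set (Euc n)) (f : Euc n → ℝ) (k : ℕ) (x : Euc n) : CF (Gam m E f k x) where
  conv := by
    intro C P hP Q hQ a b ha hb hab S hS hk
    obtain ⟨F, hF, hFP⟩ := hP S hS hk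
    obtain ⟨H, hH, hHQ⟩ := hQ S hS hk
    refine ⟨a • F + b • H, hF.combo hH ha hb hab, fun β hβ => ?_⟩
    rw [mD_combo hF.cd hH.cd _ _ _ hβ, Submodule.coe_add, Submodule.coe_smul, Submodule.coe_smul,
      mD_combo (pcd P m) (pcd Q m) _ _ _ hβ, hFP β hβ, hHQ β hβ]
  mono := by
    intro C C' h P hP S hS hk
    obtain ⟨F, hF, hFP⟩ := hP S hS hk
    exact ⟨F, hF.mono le_rfl h, hFP⟩

lemma Gam_anti {E : Set (Euc n)} {f : Euc n → ℝ} {k k' : ℕ} (h : k' ≤ k) (x : Euc n) (C : ℝ) :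
    Gam m E f k x C ⊆ Gam m E f k' x C := fun _ hP S hS hk => hP S hS (hk.trans h)

/-- Helly number. -/
def Dn (m n : ℕ) : ℕ := (idx m n).card + 1

lemma helly_jet {E : Set (Euc n)} (hE : E.Finite) (f : Euc n → ℝ) (Cls : (Euc n → ℝ) → Prop)
    (hcd : ∀ F, Cls F → ContDiff ℝ (m : ℕ) F)
    (hcx : ∀ F H, Cls F → Cls H → ∀ a b : ℝ, 0 ≤ a → 0 ≤ b → a + b = 1 → Cls (a • F + b • H))
    (k' : ℕ) (y : Euc n)
    (h : ∀ S ⊆ E, S.ncard ≤ Dn m n * k' → ∃ F, Cls F ∧ ∀ z ∈ S, F z = f z) :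
    ∃ R : Pol m n, ∀ S ⊆ E, S.ncard ≤ k' → ∃ F, Cls F ∧ (∀ z ∈ S, F z = f z) ∧ Jeq m y F R := by
  classical
  let K : Set (Euc n) → Set (↥(idx m n) → ℝ) := fun S =>
    {v | ∃ F, Cls F ∧ (∀ z ∈ S, F z = f z) ∧ ∀ β, mD β.1 F y = v β}
  let s : Finset (Set (Euc n)) := hE.finite_subsets.toFinset.filter (fun S => S.ncard ≤ k')
  have hs : ∀ S, S ∈ s ↔ S ⊆ E ∧ S.ncard ≤ k' := by
    intro S; simp [s]
  have hne : (⋂ S ∈ s, K S).Nonempty := by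
    apply Convex.helly_theorem' (𝕜 := ℝ)
    · rintro S hS v ⟨F, hF, hFS, hFv⟩ w ⟨H, hH, hHS, hHw⟩ a b ha hb hab
      refine ⟨a • F + b • H, hcx F H hF hH a b ha hb hab, fun z hz => ?_, fun β => ?_⟩
      · simp only [Pi.add_apply, Pi.smul_apply, smul_eq_mul, hFS z hz, hHS z hz]
        rw [← add_mul, hab, one_mul]
      · rw [mD_combo (hcd F hF) (hcd H hH) _ _ _ β.2, hFv, hHw]; rfl
    · intro I hI hcard
      have hfr : Module.finrank ℝ (↥(idx m n) → ℝ) = (idx m n).card := by simp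
      rw [hfr] at hcard
      obtain ⟨F, hF, hFT⟩ := h (⋃ S ∈ I, S) (by
        intro z hz
        simp only [Set.mem_iUnion] at hz
        obtain ⟨S, hS, hz⟩ := hz
        exact ((hs S).1 (hI hS)).1 hz) (by
        refine (Finset.set_ncard_biUnion_le I (fun S => S)).trans ?_
        calc ∑ S ∈ I, S.ncard ≤ ∑ S ∈ I, k' := Finset.sum_le_sum fun S hS => ((hs S).1 (hI hS)).2
          _ = I.card * k' := by simp
          _ ≤ _ := Nat.mul_le_mul_right _ hcard)
      refine ⟨fun β => mD β.1 F y, ?_⟩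
      simp only [Set.mem_iInter]
      intro S hS
      exact ⟨F, hF, fun z hz => hFT z (by simp only [Set.mem_iUnion]; exact ⟨S, hS, hz⟩), fun _ => rfl⟩
  obtain ⟨v, hv⟩ := hne
  obtain ⟨R, hR⟩ := pol_exists (m := m) y (fun β => if hβ : β ∈ idx m n then v ⟨β, hβ⟩ else 0)
  refine ⟨R, fun S hS hk => ?_⟩
  simp only [Set.mem_iInter] at hv
  obtain ⟨F, hF, hFS, hFv⟩ := hv S ((hs S).2 ⟨hS, hk⟩)
  refine ⟨F, hF, hFS, fun β hβ => ?_⟩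
  rw [hR β hβ, dif_pos hβ]
  exact hFv ⟨β, hβ⟩

lemma jet_taylor {F : Euc n → ℝ} {P : Pol m n} {x y : Euc n} {C ρ : ℝ} (hF : ContDiff ℝ (m : ℕ) F)
    (hC : ∀ z ∈ Metric.closedBall x ρ, ‖iteratedFDeriv ℝ m F z‖ ≤ C)
    (hJ : Jeq m x F P) (hρ : 0 < ρ) (hy : dist y x ≤ ρ) :
    Bd m (F - (P : Euc n → ℝ)) y (2 ^ m * C) ρ := by
  have htop : ∀ z ∈ Metric.closedBall x ρ, ‖iteratedFDeriv ℝ m (F - (P : Euc n → ℝ)) z‖ ≤ C := by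
    intro z hz
    rw [it_sub hF (pcd P m), ptop P, sub_zero]; exact hC z hz
  have hC0 : 0 ≤ C := (norm_nonneg _).trans (hC x (Metric.mem_closedBall_self hρ.le))
  refine Bd.taylor (cdSub hF (pcd P m)) hρ (x := x) ?_ htop hy
  intro k hk
  rcases hk.eq_or_lt with rfl | hk
  · simpa using htop x (Metric.mem_closedBall_self hρ.le)
  · rw [hJ.dn hF (pcd P m) hk, norm_zero]; positivity

/-- closeness of polynomial from closeness of function -/
lemma Bd.of_jet {F : Euc n → ℝ} {P R : Pol m n} {y : Euc n} {K ρ : ℝ} (hF : ContDiff ℝ (m : ℕ) F)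
    (hρ : 0 ≤ ρ) (hB : Bd m (F - (P : Euc n → ℝ)) y K ρ) (hJ : Jeq m y F R) :
    Bd m ((P - R : Pol m n) : Euc n → ℝ) y K ρ := by
  intro k hk
  have hK := hB.nonneg
  rcases hk.eq_or_lt with rfl | hk'
  · rw [ptop, norm_zero]; positivity
  have h1 := hJ.dn hF (pcd R m) hk'
  rw [it_sub (cd_le hF hk) (pcd R k), sub_eq_zero] at h1
  have h2 := hB k hk
  rw [it_sub (cd_le hF hk) (pcd P k), h1, norm_sub_rev] at h2
  rw [Submodule.coe_sub, it_sub (pcd P k) (pcd R k)]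
  exact h2

lemma H3 {E : Set (Euc n)} (hE : E.Finite) {f : Euc n → ℝ} {k k' : ℕ} (hk : Dn m n * k' ≤ k)
    {x y : Euc n} {C ρ : ℝ} (hρ : 0 < ρ) (hxy : dist y x ≤ ρ) {P : Pol m n}
    (hP : P ∈ Gam m E f k x C) :
    ∃ R ∈ Gam m E f k' y C, Bd m ((P - R : Pol m n) : Euc n → ℝ) y (2 ^ m * C) ρ := by
  have := helly_jet (m := m) hE f
    (fun F => Wit m f ∅ C F ∧ Bd m (F - (P : Euc n → ℝ)) y (2 ^ m * C) ρ)
    (fun F hF => hF.1.cd) (by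
      rintro F H ⟨hF, hF'⟩ ⟨hH, hH'⟩ a b ha hb hab
      refine ⟨hF.combo hH ha hb hab, ?_⟩
      have e : a • F + b • H - (P : Euc n → ℝ) =
          a • (F - (P : Euc n → ℝ)) + b • (H - (P : Euc n → ℝ)) := by
        have : (P : Euc n → ℝ) = a • (P : Euc n → ℝ) + b • (P : Euc n → ℝ) := by
          rw [← add_smul, hab, one_smul]
        rw [smul_sub, smul_sub]
        nth_rewrite 1 [this]
        abel
      rw [e]
      have c1 := cdSub hF.cd (pcd P m)
      have c2 := cdSub hH.cd (pcd P m)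
      have := (hF'.smul c1 a).add (cdSmul c1 a) (cdSmul c2 b) (hH'.smul c2 b)
      refine this.mono hρ.le ?_
      rw [abs_of_nonneg ha, abs_of_nonneg hb, ← add_mul, hab, one_mul]) k' y (by
      intro S hS hSk
      obtain ⟨F, hF, hJ⟩ := hP S hS (hSk.trans hk)
      exact ⟨F, ⟨hF.mono (Set.empty_subset _) le_rfl,
        jet_taylor hF.cd (fun z _ => hF.bd m le_rfl z) hJ hρ hxy⟩, hF.eq⟩)
  obtain ⟨R, hR⟩ := this
  refine ⟨R, fun S hS hSk => ?_, ?_⟩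
  · obtain ⟨F, hF, hFS, hJ⟩ := hR S hS hSk
    exact ⟨F, ⟨hF.1.cd, hF.1.bd, hF.1.nn, hFS⟩, hJ⟩
  · obtain ⟨F, hF, hFS, hJ⟩ := hR ∅ (Set.empty_subset _) (by simp)
    exact hF.2.of_jet hF.1.cd hρ.le hJ

end gam
end

noncomputable section
open scoped BigOperators ContDiff

section h2
variable {m n : ℕ}

lemma it_congr {F H : Euc n → ℝ} {x : Euc n} (h : F =ᶠ[nhds x] H) (k : ℕ) :
    iteratedFDeriv ℝ k F x = iteratedFDeriv ℝ k H x :=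
  (h.iteratedFDeriv ℝ k).self_of_nhds

lemma Bd.congr {F H : Euc n → ℝ} {x : Euc n} {K r : ℝ} (h : F =ᶠ[nhds x] H) (hB : Bd m H x K r) :
    Bd m F x K r := fun k hk => by rw [it_congr h k]; exact hB k hk

lemma mD_congr {F H : Euc n → ℝ} {x : Euc n} {β : Fin n → ℕ} (hF : ContDiff ℝ (deg β : ℕ) F)
    (hH : ContDiff ℝ (deg β : ℕ) H) (h : F =ᶠ[nhds x] H) : mD β F x = mD β H x := by
  rw [mD_eq_iter β hF, mD_eq_iter β hH, it_congr h]

lemma it_zero (k : ℕ) (x : Euc n) : iteratedFDeriv ℝ k (0 : Euc n → ℝ) x = 0 := by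
  have := it_smul (n := n) (F := 0) (k := k) contDiff_const 0 x
  simpa using this

lemma Bd.mul {φ G : Euc n → ℝ} {x : Euc n} {K C r : ℝ} (hr : 0 < r) (hC : 0 ≤ C)
    (hφ : ContDiff ℝ (m : ℕ) φ) (hG : ContDiff ℝ (m : ℕ) G)
    (h0 : ∀ k ≤ m, ‖iteratedFDeriv ℝ k φ x‖ ≤ C / r ^ k) (h1 : Bd m G x K r) :
    Bd m (φ * G) x (2 ^ m * C * K) r :=
  mul_bound hφ hG x h1.nonneg hC hr h0 h1

lemma xi_le (i : Fin n) (x y : Euc n) : |xi i x y| ≤ dist y x := by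
  rw [dist_eq_norm, ← Real.norm_eq_abs]
  exact PiLp.norm_apply_le (y - x) i

lemma xi_it (i : Fin n) (x y : Euc n) {r : ℝ} (hr : 0 < r) (hy : dist y x ≤ 2 * r) (k : ℕ) :
    ‖iteratedFDeriv ℝ k ((2 * r)⁻¹ • xi i x) y‖ ≤ 1 / r ^ k := by
  rw [it_smul (xi_contDiff i x), norm_smul, Real.norm_of_nonneg (by positivity)]
  rcases k with _ | k
  · rw [norm_iteratedFDeriv_zero, pow_zero, div_one, inv_mul_le_iff₀ (by positivity), mul_one]
    exact (xi_le i x y).trans hy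
  · have hf : fderiv ℝ (xi i x) = fun _ => (EuclideanSpace.proj i : Euc n →L[ℝ] ℝ) := by
      funext z
      exact (((EuclideanSpace.proj i : Euc n →L[ℝ] ℝ).hasFDerivAt).sub_const (x i)).fderiv
    rw [← norm_iteratedFDeriv_fderiv, hf]
    rcases k with _ | k
    · rw [norm_iteratedFDeriv_zero]
      have h1 : ‖(EuclideanSpace.proj i : Euc n →L[ℝ] ℝ)‖ ≤ 1 := by
        refine ContinuousLinearMap.opNorm_le_bound _ zero_le_one fun z => ?_
        rw [one_mul]
        exact PiLp.norm_apply_le z i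
      calc (2 * r)⁻¹ * ‖(EuclideanSpace.proj i : Euc n →L[ℝ] ℝ)‖ ≤ (2 * r)⁻¹ * 1 := by gcongr
        _ ≤ 1 / r ^ (0 + 1) := by
          rw [mul_one, zero_add, pow_one, one_div]
          gcongr
          linarith
    · rw [iteratedFDeriv_const_of_ne (by omega)]
      simp
      positivity

/-- cutoff constant -/
def cutC (m n : ℕ) : ℝ := (cut_exists m n).choose

lemma cutC_one (m n : ℕ) : 1 ≤ cutC m n := (cut_exists m n).choose_spec.1

lemma cutC_ex (m : ℕ) {n : ℕ} (x : Euc n) {r : ℝ} (hr : 0 < r) : ∃ φ, Cut m (cutC m n) x r φ :=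
  (cut_exists m n).choose_spec.2 x r hr

lemma Cut.ev_zero {C : ℝ} {x : Euc n} {r : ℝ} {φ : Euc n → ℝ} (h : Cut m C x r φ) {y : Euc n}
    (hy : 2 * r < dist y x) : φ =ᶠ[nhds y] 0 := by
  have : {z : Euc n | 2 * r < dist z x} ∈ nhds y :=
    (isOpen_lt continuous_const (continuous_id.dist continuous_const)).mem_nhds hy
  filter_upwards [this] with z hz
  exact h.zero z (le_of_lt hz)

lemma Cut.ev_one {C : ℝ} {x : Euc n} {r : ℝ} {φ : Euc n → ℝ} (h : Cut m C x r φ) {y : Euc n}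
    (hy : dist y x < r) : φ =ᶠ[nhds y] 1 := by
  have : {z : Euc n | dist z x < r} ∈ nhds y :=
    (isOpen_lt (continuous_id.dist continuous_const) continuous_const).mem_nhds hy
  filter_upwards [this] with z hz
  exact h.one z (le_of_lt hz)

/-- bound for multiplication -/
def gK (m n : ℕ) (C : ℝ) : ℝ :=
  2 ^ m * cutC m n * (2 ^ m * 1 * (2 ^ m * (2 ^ m * (2 * C) + 2 * (2 ^ m * (NN m n * 1)))))

lemma H2core {E : Set (Euc n)} {f : Euc n → ℝ} {k : ℕ} {x : Euc n} {C r s : ℝ} (hr : 0 < r)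
    (hr1 : r ≤ 1) (hs : |s| ≤ 1) {P Q Q' : Pol m n} (h1 : P + Q ∈ Gam m E f k x C)
    (h2 : P - Q ∈ Gam m E f k x C) (hQ : ∀ β ∈ idx m n, |cf m x r β Q| ≤ 1) (i : Fin n)
    (hQ' : ∀ β ∈ idx m n, mD β Q' x = β i * mD (β - Pi.single i 1) Q x / r) :
    P + (s * 2⁻¹) • Q' ∈ Gam m E f k x (C + gK m n C) := by
  intro S hS hk
  obtain ⟨F₁, hF₁, hJ₁⟩ := h1 S hS hk
  obtain ⟨F₂, hF₂, hJ₂⟩ := h2 S hS hk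
  obtain ⟨φ, hφ⟩ := cutC_ex m x hr
  have hcut := cutC_one m n
  have hC0 := hF₁.nonneg
  have hNN := NN_one m n
  have cD := cdSub hF₁.cd hF₂.cd
  set D := F₁ - F₂ with hD
  have cX : ContDiff ℝ (m : ℕ) ((2 * r)⁻¹ • xi i x) := cdSmul (xi_contDiff i x) _
  have cXD := cdMul cX cD
  have cψ := cdMul hφ.cd cXD
  have cS := cdAdd hF₁.cd hF₂.cd
  have hJD : Jeq m x D ((2 : ℝ) • Q : Pol m n) := by
    intro β hβ
    have hβ' := (mem_idx.1 hβ).le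
    rw [mD_sub (cd_le hF₁.cd hβ') (cd_le hF₂.cd hβ'), hJ₁ β hβ, hJ₂ β hβ, Submodule.coe_smul,
      mD_smul (pcd Q _), Submodule.coe_add, Submodule.coe_sub, mD_add (pcd P _) (pcd Q _),
      mD_sub (pcd P _) (pcd Q _)]
    ring
  have hQB : Bd m (Q : Euc n → ℝ) x (NN m n * 1) r := Bd_of_cf hr zero_le_one hQ
  -- bound of D
  have hDB : ∀ y, dist y x ≤ 2 * r →
      Bd m D y (2 ^ m * (2 ^ m * (2 * C) + 2 * (2 ^ m * (NN m n * 1)))) r := by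
    intro y hy
    have hb1 := jet_taylor (C := 2 * C) cD (fun z _ => by
      rw [it_sub hF₁.cd hF₂.cd]
      refine (norm_sub_le _ _).trans ?_
      have := hF₁.bd m le_rfl z
      have := hF₂.bd m le_rfl z
      linarith) hJD (by positivity : 0 < 2 * r) hy
    have hb2 := ((hQB.up hr.le (by linarith : r ≤ 2 * r)).move (by positivity) hy).smul (pcd Q m) 2
    rw [abs_two] at hb2
    have hb3 := hb1.add (cdSub cD (pcd _ m)) (cdSmul (pcd Q m) 2) hb2
    have e : D - (((2 : ℝ) • Q : Pol m n) : Euc n → ℝ) + (2 : ℝ) • (Q : Euc n → ℝ) = D := by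
      rw [Submodule.coe_smul, sub_add_cancel]
    rw [e] at hb3
    exact hb3.down hr.le (by positivity) (by norm_num : (1 : ℝ) ≤ 2) le_rfl
  have hψB : ∀ y, Bd m (φ * ((2 * r)⁻¹ • xi i x * D)) y (gK m n C) r := by
    intro y
    by_cases hy : dist y x ≤ 2 * r
    · have hb4 := Bd.mul hr zero_le_one cX cD (fun k _ => xi_it i x y hr hy k) (hDB y hy)
      exact Bd.mul hr (by positivity) hφ.cd cXD (fun k hk => hφ.bd k hk y) hb4
    · push Not at hy
      have : φ * ((2 * r)⁻¹ • xi i x * D) =ᶠ[nhds y] 0 := by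
        filter_upwards [hφ.ev_zero hy] with z hz
        simp [hz]
      refine Bd.congr this fun k _ => ?_
      rw [it_zero, norm_zero]
      unfold gK
      positivity
  have hgK : 0 ≤ gK m n C := (hψB x).nonneg
  refine ⟨(2⁻¹ : ℝ) • (F₁ + F₂) + (s * 2⁻¹) • (φ * ((2 * r)⁻¹ • xi i x * D)), ⟨?_, ?_, ?_, ?_⟩, ?_⟩
  · exact cdAdd (cdSmul cS _) (cdSmul cψ _)
  · intro j hj y
    have c1 := cd_le hF₁.cd hj
    have c2 := cd_le hF₂.cd hj
    rw [it_add (cdSmul (cd_le cS hj) _) (cdSmul (cd_le cψ hj) _), it_smul (cd_le cS hj),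
      it_smul (cd_le cψ hj), it_add c1 c2]
    refine (norm_add_le _ _).trans ?_
    rw [norm_smul, norm_smul, Real.norm_of_nonneg (by norm_num : (0 : ℝ) ≤ 2⁻¹)]
    have e1 := norm_add_le (iteratedFDeriv ℝ j F₁ y) (iteratedFDeriv ℝ j F₂ y)
    have e2 := hF₁.bd j hj y
    have e3 := hF₂.bd j hj y
    have e4 := hψB y j hj
    have e5 : gK m n C * r ^ (m - j) ≤ gK m n C * 1 := by
      gcongr
      exact pow_le_one₀ hr.le hr1
    have e6 : ‖s * 2⁻¹‖ ≤ 1 := by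
      rw [Real.norm_eq_abs, abs_mul, abs_of_pos (by norm_num : (0 : ℝ) < 2⁻¹)]
      linarith
    have e7 : ‖s * 2⁻¹‖ * ‖iteratedFDeriv ℝ j (φ * ((2 * r)⁻¹ • xi i x * D)) y‖ ≤ 1 * (gK m n C * 1) := by
      gcongr
      exact e4.trans e5
    linarith
  · intro y
    simp only [Pi.add_apply, Pi.smul_apply, smul_eq_mul, Pi.mul_apply, hD, Pi.sub_apply]
    have hψ1 : |φ y * ((2 * r)⁻¹ * xi i x y)| ≤ 1 := by
      by_cases hy : dist y x ≤ 2 * r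
      · have := xi_it i x y hr hy 0
        rw [norm_iteratedFDeriv_zero, pow_zero, div_one] at this
        simp only [Pi.smul_apply, smul_eq_mul, Real.norm_eq_abs] at this
        rw [abs_mul, abs_of_nonneg (hφ.nn y)]
        exact mul_le_one₀ (hφ.le y) (abs_nonneg _) this
      · rw [hφ.zero y (le_of_not_ge hy)]; simp
    have hψ2 : |s * (φ y * ((2 * r)⁻¹ * xi i x y))| ≤ 1 := by
      rw [abs_mul]; exact mul_le_one₀ hs (abs_nonneg _) hψ1
    have h3 := abs_le.1 hψ2
    have h4 := hF₁.nn y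
    have h5 := hF₂.nn y
    have e : 2⁻¹ * (F₁ y + F₂ y) + s * 2⁻¹ * (φ y * ((2 * r)⁻¹ * xi i x y * (F₁ y - F₂ y))) =
      2⁻¹ * ((1 + s * (φ y * ((2 * r)⁻¹ * xi i x y))) * F₁ y +
        (1 - s * (φ y * ((2 * r)⁻¹ * xi i x y))) * F₂ y) := by ring
    rw [e]
    have h6 : 0 ≤ (1 + s * (φ y * ((2 * r)⁻¹ * xi i x y))) * F₁ y := mul_nonneg (by linarith) h4
    have h7 : 0 ≤ (1 - s * (φ y * ((2 * r)⁻¹ * xi i x y))) * F₂ y := mul_nonneg (by linarith) h5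
    positivity
  · intro y hy
    simp only [Pi.add_apply, Pi.smul_apply, smul_eq_mul, Pi.mul_apply, hD, Pi.sub_apply,
      hF₁.eq y hy, hF₂.eq y hy]
    ring
  · intro β hβ
    have hβ' := (mem_idx.1 hβ).le
    rw [mD_combo cS cψ _ _ _ hβ, mD_add (cd_le hF₁.cd hβ') (cd_le hF₂.cd hβ'), hJ₁ β hβ, hJ₂ β hβ]
    have hev : φ * ((2 * r)⁻¹ • xi i x * D) =ᶠ[nhds x] (2 * r)⁻¹ • (xi i x * D) := by
      filter_upwards [hφ.ev_one (by simpa using hr : dist x x < r)] with z hz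
      simp [hz, mul_assoc]
    have cxD : ContDiff ℝ (m : ℕ) (xi i x * D) := cdMul (xi_contDiff i x) cD
    rw [mD_congr (cd_le cψ hβ') (cd_le (cdSmul cxD _) hβ') hev, mD_smul (cd_le cxD hβ'),
      mD_xi_mul i x β (cd_le cD hβ'), xi_self, zero_mul, zero_add]
    rw [Submodule.coe_add, Submodule.coe_add, Submodule.coe_smul,
      mD_add (pcd P _) (cdSmul (pcd Q' _) _),
      mD_smul (pcd Q' _), hQ' β hβ, Submodule.coe_sub,
      mD_add (pcd P _) (pcd Q _), mD_sub (pcd P _) (pcd Q _)]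
    have e : (β i : ℝ) * mD (β - Pi.single i 1) D x =
        β i * (2 * mD (β - Pi.single i 1) Q x) := by
      by_cases h0 : β i = 0
      · simp [h0]
      · have h3 := congrArg deg (sub_single_add (Nat.pos_of_ne_zero h0))
        rw [deg_add, deg_single] at h3
        rw [hJD _ (mem_idx.2 (by have := mem_idx.1 hβ; omega)), Submodule.coe_smul,
          mD_smul (pcd Q _)]
    rw [e]
    field_simp
    ring

lemma H2 {E : Set (Euc n)} {f : Euc n → ℝ} {k : ℕ} {x : Euc n} {r : ℝ} (hr : 0 < r)
    (hr1 : r ≤ 1) (P : Pol m n) :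
    MulX m (Gam m E f k x) (cf m x r) P (fun C => C + gK m n C) := by
  intro C _ Q hQ hc i
  obtain ⟨Q', hQ'⟩ := pol_exists (m := m) x (fun β => β i * mD (β - Pi.single i 1) Q x / r)
  refine ⟨Q', fun β hβ => ?_, ?_, ?_⟩
  · rw [cf_apply, cf_apply, hQ' β hβ]
    by_cases h0 : β i = 0
    · simp [h0]
    · have h3 := congrArg deg (sub_single_add (Nat.pos_of_ne_zero h0))
      rw [deg_add, deg_single] at h3
      have h4 := mem_idx.1 hβ
      have h5 : m - deg (β - Pi.single i 1) = (m - deg β) + 1 := by omega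
      rw [h5, pow_succ]
      field_simp
  · have := H2core hr hr1 (s := 1) (by simp) hQ.1 hQ.2 hc i hQ'
    simpa using this
  · have := H2core hr hr1 (s := -1) (by simp) hQ.1 hQ.2 hc i hQ'
    have e : P - (2⁻¹ : ℝ) • Q' = P + ((-1) * 2⁻¹ : ℝ) • Q' := by module
    rw [e]
    exact this

end h2
end

noncomputable section
open scoped BigOperators ContDiff

section patching
variable {m n : ℕ}

/-- Iterated convex gluing. -/
def patch {n : ℕ} (φ Fs : Euc n → Euc n → ℝ) : List (Euc n) → Euc n → ℝ
  | [] => 0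
  | i :: l => (1 - φ i) * patch φ Fs l + φ i * Fs i

lemma patch_cd {φ Fs : Euc n → Euc n → ℝ} (l : List (Euc n))
    (hφ : ∀ i ∈ l, ContDiff ℝ (m : ℕ) (φ i)) (hF : ∀ i ∈ l, ContDiff ℝ (m : ℕ) (Fs i)) :
    ContDiff ℝ (m : ℕ) (patch φ Fs l) := by
  induction l with
  | nil => exact contDiff_const
  | cons i l ih =>
    have h1 := ih (fun j hj => hφ j (List.mem_cons_of_mem _ hj)) (fun j hj => hF j (List.mem_cons_of_mem _ hj))
    exact cdAdd (cdMul (cdSub contDiff_const (hφ i List.mem_cons_self)) h1)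
      (cdMul (hφ i List.mem_cons_self) (hF i List.mem_cons_self))

lemma patch_nn {φ Fs : Euc n → Euc n → ℝ} (l : List (Euc n))
    (h0 : ∀ i ∈ l, ∀ y, 0 ≤ φ i y) (h1 : ∀ i ∈ l, ∀ y, φ i y ≤ 1) (hF : ∀ i ∈ l, ∀ y, 0 ≤ Fs i y) :
    ∀ y, 0 ≤ patch φ Fs l y := by
  induction l with
  | nil => intro y; exact le_rfl
  | cons i l ih =>
    intro y
    have h2 := ih (fun j hj => h0 j (List.mem_cons_of_mem _ hj)) (fun j hj => h1 j (List.mem_cons_of_mem _ hj))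
      (fun j hj => hF j (List.mem_cons_of_mem _ hj)) y
    have h3 := h0 i List.mem_cons_self y
    have h4 := h1 i List.mem_cons_self y
    have h5 := hF i List.mem_cons_self y
    simp only [patch, Pi.add_apply, Pi.mul_apply, Pi.sub_apply, Pi.one_apply]
    have := mul_nonneg (sub_nonneg.2 h4) h2
    positivity

lemma patch_eq {φ Fs : Euc n → Euc n → ℝ} {v : ℝ} {z : Euc n} (l : List (Euc n))
    (h : ∀ i ∈ l, φ i z = 0 ∨ Fs i z = v) (hc : ∃ i ∈ l, φ i z = 1) :
    patch φ Fs l z = v := by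
  induction l with
  | nil => obtain ⟨i, hi, _⟩ := hc; simp at hi
  | cons i l ih =>
    simp only [patch, Pi.add_apply, Pi.mul_apply, Pi.sub_apply, Pi.one_apply]
    by_cases h1 : φ i z = 1
    · rcases h i List.mem_cons_self with h2 | h2
      · rw [h1] at h2; norm_num at h2
      · rw [h1, h2]; ring
    · obtain ⟨j, hj, hj1⟩ := hc
      rcases List.mem_cons.1 hj with rfl | hj
      · exact absurd hj1 h1
      rw [ih (fun j hj => h j (List.mem_cons_of_mem _ hj)) ⟨j, hj, hj1⟩]
      rcases h i List.mem_cons_self with h2 | h2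
      · rw [h2]; ring
      · rw [h2]; ring

/-- growth constant per active patch -/
def pB (m n : ℕ) : ℝ := 1 + 2 * (2 ^ m * (cutC m n * 2 ^ m))

lemma pB_one (m n : ℕ) : 1 ≤ pB m n := by
  have := cutC_one m n
  unfold pB
  have : 0 ≤ 2 * (2 ^ m * (cutC m n * 2 ^ m)) := by positivity
  linarith

open Classical in
lemma patch_bd {φ Fs : Euc n → Euc n → ℝ} {ρ : Euc n → ℝ} {P : Euc n → ℝ} {z : Euc n} {K r : ℝ}
    (hr : 0 < r) (hP : ContDiff ℝ (m : ℕ) P) (l : List (Euc n))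
    (hρ : ∀ i ∈ l, 0 < ρ i)
    (hφ : ∀ i ∈ l, Cut m (cutC m n) i (ρ i) (φ i)) (hF : ∀ i ∈ l, ContDiff ℝ (m : ℕ) (Fs i))
    (ha : ∀ i ∈ l, dist z i ≤ 2 * ρ i → Bd m (Fs i - P) z K r ∧ r ≤ 2 * ρ i)
    (hc : (∃ i ∈ l, dist z i < ρ i) ∨ Bd m (0 - P) z K r) :
    Bd m (patch φ Fs l - P) z
      (K * pB m n ^ (l.countP (fun i => decide (dist z i ≤ 2 * ρ i)))) r := by
  induction l with
  | nil =>
    rcases hc with ⟨i, hi, _⟩ | hc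
    · simp at hi
    · simpa [patch] using hc
  | cons i l ih =>
    have hpB := pB_one m n
    have hcut := cutC_one m n
    have hi : i ∈ i :: l := List.mem_cons_self
    have cl : ContDiff ℝ (m : ℕ) (patch φ Fs l) :=
      patch_cd l (fun j hj => (hφ j (List.mem_cons_of_mem _ hj)).cd)
        (fun j hj => hF j (List.mem_cons_of_mem _ hj))
    by_cases h1 : dist z i < ρ i
    · have hK := (ha i hi (by linarith [hρ i hi])).1
      have hev : patch φ Fs (i :: l) - P =ᶠ[nhds z] Fs i - P := by
        filter_upwards [(hφ i hi).ev_one h1] with w hw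
        simp [patch, hw]
      refine (hK.mono hr.le ?_).congr hev
      exact le_mul_of_one_le_right hK.nonneg (one_le_pow₀ hpB)
    have ih' := ih (fun j hj => hρ j (List.mem_cons_of_mem _ hj))
      (fun j hj => hφ j (List.mem_cons_of_mem _ hj)) (fun j hj => hF j (List.mem_cons_of_mem _ hj))
      (fun j hj => ha j (List.mem_cons_of_mem _ hj)) (by
        rcases hc with ⟨j, hj, hj1⟩ | hc
        · rcases List.mem_cons.1 hj with rfl | hj
          · exact absurd hj1 h1
          · exact Or.inl ⟨j, hj, hj1⟩
        · exact Or.inr hc)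
    by_cases h2 : dist z i ≤ 2 * ρ i
    · obtain ⟨hK, hrρ⟩ := ha i hi h2
      have hK0 := hK.nonneg
      rw [List.countP_cons_of_pos (by simpa using h2)]
      set K' := K * pB m n ^ (l.countP (fun i => decide (dist z i ≤ 2 * ρ i))) with hK'
      have hKK : K ≤ K' := le_mul_of_one_le_right hK.nonneg (one_le_pow₀ hpB)
      have hφi : ∀ k ≤ m, ‖iteratedFDeriv ℝ k (φ i) z‖ ≤ cutC m n * 2 ^ m / r ^ k := by
        intro k hk
        refine ((hφ i hi).bd k hk z).trans ?_
        have hρi := hρ i hi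
        rw [div_le_div_iff₀ (by positivity) (by positivity), mul_assoc]
        gcongr
        calc r ^ k ≤ (2 * ρ i) ^ k := by gcongr
          _ = 2 ^ k * ρ i ^ k := mul_pow _ _ _
          _ ≤ 2 ^ m * ρ i ^ k := by
            gcongr
            norm_num
      have cFP := cdSub (hF i hi) hP
      have cpP := cdSub cl hP
      have e1 := (hK.mono hr.le hKK).sub cFP cpP ih'
      have e2 := Bd.mul hr (by positivity) (hφ i hi).cd (cdSub cFP cpP) hφi e1
      have e3 := ih'.add cpP (cdMul (hφ i hi).cd (cdSub cFP cpP)) e2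
      have e4 : patch φ Fs l - P + φ i * (Fs i - P - (patch φ Fs l - P)) =
          patch φ Fs (i :: l) - P := by
        simp only [patch]; ring
      rw [e4] at e3
      refine e3.mono hr.le (le_of_eq ?_)
      rw [pow_succ, ← mul_assoc K, ← hK']
      unfold pB
      ring
    · rw [List.countP_cons_of_neg (by simpa using h2)]
      refine ih'.congr ?_
      filter_upwards [(hφ i hi).ev_zero (not_le.1 h2)] with w hw
      simp [patch, hw]

/-- Packing. -/
lemma packing (n : ℕ) (R ε : ℝ) (hε : 0 < ε) : ∃ M : ℕ, ∀ u : Set (Euc n),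
    u ⊆ Metric.closedBall 0 R → (∀ x ∈ u, ∀ y ∈ u, x ≠ y → ε < dist x y) →
    u.Finite ∧ u.ncard ≤ M := by
  obtain ⟨t, ht, hcov⟩ := Metric.totallyBounded_iff.1
    (isCompact_closedBall (0 : Euc n) R).totallyBounded (ε / 2) (by positivity)
  refine ⟨t.ncard, fun u hu hsep => ?_⟩
  have h : ∀ x : Euc n, ∃ y, x ∈ u → y ∈ t ∧ dist x y < ε / 2 := by
    intro x
    by_cases hx : x ∈ u
    · have := hcov (hu hx)
      simp only [Set.mem_iUnion, Metric.mem_ball] at this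
      obtain ⟨y, hy, hxy⟩ := this
      exact ⟨y, fun _ => ⟨hy, hxy⟩⟩
    · exact ⟨0, fun h => absurd h hx⟩
  choose g hg using h
  have hinj : Set.InjOn g u := by
    intro x hx y hy hxy
    by_contra hne
    have h1 := hsep x hx y hy hne
    have h2 := (hg x hx).2
    have h3 := (hg y hy).2
    rw [← hxy, dist_comm] at h3
    have := dist_triangle x (g x) y
    linarith
  have hmaps : Set.MapsTo g u t := fun x hx => (hg x hx).1
  exact ⟨ht.of_injOn hmaps hinj, Set.ncard_le_ncard_of_injOn g hmaps hinj ht⟩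

lemma packing' (n : ℕ) : ∃ M : ℕ, ∀ (z : Euc n) (r : ℝ), 0 < r → ∀ u : Set (Euc n),
    (∀ x ∈ u, dist x z ≤ 4 * r) → (∀ x ∈ u, ∀ y ∈ u, x ≠ y → r / 10 < dist x y) →
    u.ncard ≤ M := by
  obtain ⟨M, hM⟩ := packing n 4 (1 / 10) (by norm_num)
  refine ⟨M, fun z r hr u hu hsep => ?_⟩
  let g : Euc n → Euc n := fun x => r⁻¹ • (x - z)
  have hd : ∀ x y, dist (g x) (g y) = dist x y / r := by
    intro x y
    simp only [g]
    rw [dist_smul₀, Real.norm_of_nonneg (by positivity), dist_sub_right]; ring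
  have hinj : Function.Injective g := by
    intro x y hxy
    have := hd x y
    rw [hxy, dist_self, eq_comm, div_eq_zero_iff, or_iff_left hr.ne'] at this
    exact dist_eq_zero.1 this
  have := (hM (g '' u) (by
    rintro _ ⟨x, hx, rfl⟩
    rw [Metric.mem_closedBall]
    have h0 : g z = 0 := by simp [g]
    rw [← h0, hd, div_le_iff₀ hr]
    exact hu x hx) (by
    rintro _ ⟨x, hx, rfl⟩ _ ⟨y, hy, rfl⟩ hne
    rw [hd, lt_div_iff₀ hr]
    have := hsep x hx y hy (fun h => hne (by rw [h]))
    linarith)).2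
  rwa [Set.ncard_image_of_injective u hinj] at this

/-- Patching theorem. -/
lemma PT (m n : ℕ) (K0 : ℝ) (hK0 : 0 ≤ K0) : ∃ K1 : ℝ, 0 ≤ K1 ∧
    ∀ (E : Set (Euc n)) (f : Euc n → ℝ) (s : Set (Euc n)) (ρ : Euc n → ℝ) (ρ0 ρ1 R : ℝ)
      (Fs Ps : Euc n → Euc n → ℝ),
      s ⊆ Metric.closedBall 0 R → 0 < ρ0 → (∀ x ∈ s, ρ0 ≤ ρ x ∧ ρ x ≤ ρ1) →
      (∀ x ∈ s, ContDiff ℝ (m : ℕ) (Fs x)) → (∀ x ∈ s, ∀ y, 0 ≤ Fs x y) →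
      (∀ x ∈ s, ContDiff ℝ (m : ℕ) (Ps x)) →
      (∀ x ∈ s, ∀ z ∈ E, dist z x ≤ 2 * ρ x → Fs x z = f z) →
      (∀ x ∈ s, ∀ x' ∈ s, ∀ z, dist z x ≤ 2 * ρ x → dist z x' ≤ 2 * ρ x' →
        ρ x ≤ 2 * ρ x' ∧ Bd m (Fs x' - Ps x) z K0 (ρ x)) →
      ∃ F, ContDiff ℝ (m : ℕ) F ∧ (∀ y, 0 ≤ F y) ∧ (∀ z ∈ E, z ∈ s → F z = f z) ∧
        (∀ z ∈ s, ∃ x ∈ s, dist z x ≤ ρ x ∧ Bd m (F - Ps x) z K1 (ρ x)) ∧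
        ∀ z r, 0 < r → (∀ x ∈ s, dist z x ≤ 2 * ρ x →
          r ≤ 2 * ρ x ∧ ρ x ≤ 2 * r ∧ Bd m (Fs x) z K0 r) → Bd m F z K1 r := by
  classical
  obtain ⟨M, hM⟩ := packing' n
  have hpB := pB_one m n
  refine ⟨K0 * pB m n ^ M, by positivity, ?_⟩
  intro E f s ρ ρ0 ρ1 R Fs Ps hs hρ0 hρ hFc hFn hPc hFf hcons
  obtain ⟨u, hus, hdisj, hcov⟩ := Vitali.exists_disjoint_subfamily_covering_enlargement_closedBall
    s (fun x => x) (fun x => ρ x / 5) ρ1 (fun a ha => by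
      have := hρ a ha
      linarith) 4 (by norm_num)
  have hpos : ∀ x ∈ s, 0 < ρ x := fun x hx => hρ0.trans_le (hρ x hx).1
  have hsep : ∀ x ∈ u, ∀ y ∈ u, x ≠ y → ρ x / 5 < dist x y := by
    intro x hx y hy hne
    by_contra h
    push Not at h
    refine Set.disjoint_left.1 (hdisj hx hy hne) (?_ : y ∈ _) ?_
    · rw [Metric.mem_closedBall, dist_comm]; exact h
    · exact Metric.mem_closedBall_self (by have := hpos y (hus hy); positivity)
  have hufin : u.Finite := by
    obtain ⟨M', hM'⟩ := packing n R (ρ0 / 10) (by positivity)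
    refine (hM' u (hus.trans hs) fun x hx y hy hne => ?_).1
    have h1 := hsep x hx y hy hne
    have h2 := (hρ x (hus hx)).1
    linarith
  set l := hufin.toFinset.toList with hl
  have hmem : ∀ i, i ∈ l ↔ i ∈ u := by intro i; simp [hl]
  have hcut : ∀ x : Euc n, ∃ φ, 0 < ρ x → Cut m (cutC m n) x (ρ x) φ := by
    intro x
    by_cases hx : 0 < ρ x
    · obtain ⟨φ, hφ⟩ := cutC_ex m x hx
      exact ⟨φ, fun _ => hφ⟩
    · exact ⟨0, fun h => absurd h hx⟩
  choose φ hφ' using hcut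
  have hls : ∀ i ∈ l, i ∈ s := fun i hi => hus ((hmem i).1 hi)
  have hφ : ∀ i ∈ l, Cut m (cutC m n) i (ρ i) (φ i) := fun i hi => hφ' i (hpos i (hls i hi))
  have hcover : ∀ z ∈ s, ∃ i ∈ l, dist z i < ρ i := by
    intro z hz
    obtain ⟨b, hb, hzb⟩ := hcov z hz
    have h1 : z ∈ Metric.closedBall b (4 * (ρ b / 5)) :=
      hzb (Metric.mem_closedBall_self (by have := hpos z hz; positivity))
    rw [Metric.mem_closedBall] at h1
    have := hpos b (hus hb)
    exact ⟨b, (hmem b).2 hb, by linarith⟩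
  have hcount : ∀ z r, 0 < r → (∀ x ∈ s, dist z x ≤ 2 * ρ x → r ≤ 2 * ρ x ∧ ρ x ≤ 2 * r) →
      l.countP (fun i => decide (dist z i ≤ 2 * ρ i)) ≤ M := by
    intro z r hr h
    have h1 := hM z r hr {i ∈ u | dist z i ≤ 2 * ρ i} (by
      rintro x ⟨hx, hxz⟩
      have := h x (hus hx) hxz
      rw [dist_comm]; linarith) (by
      rintro x ⟨hx, hxz⟩ y ⟨hy, -⟩ hne
      have h1 := h x (hus hx) hxz
      have h2 := hsep x hx y hy hne
      linarith)
    refine le_trans (le_of_eq ?_) h1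
    rw [List.countP_eq_length_filter]
    have h3 : {i ∈ u | dist z i ≤ 2 * ρ i} =
        ((l.filter (fun i => decide (dist z i ≤ 2 * ρ i))).toFinset : Set (Euc n)) := by
      ext i
      simp [hmem]
    rw [h3, Set.ncard_coe_finset, List.toFinset_card_of_nodup]
    exact (Finset.nodup_toList _).filter _
  have hbd : ∀ z r (P : Euc n → ℝ), 0 < r → ContDiff ℝ (m : ℕ) P →
      (∀ x ∈ s, dist z x ≤ 2 * ρ x → r ≤ 2 * ρ x ∧ ρ x ≤ 2 * r ∧ Bd m (Fs x - P) z K0 r) →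
      ((∃ i ∈ l, dist z i < ρ i) ∨ Bd m (0 - P) z K0 r) →
      Bd m (patch φ Fs l - P) z (K0 * pB m n ^ M) r := by
    intro z r P hr hP h hc
    have h1 := patch_bd hr hP l (fun i hi => hpos i (hls i hi)) hφ (fun i hi => hFc i (hls i hi))
      (fun i hi hd => ⟨(h i (hls i hi) hd).2.2, (h i (hls i hi) hd).1⟩) hc
    refine h1.mono hr.le ?_
    gcongr
    exact hcount z r hr fun x hx hd => ⟨(h x hx hd).1, (h x hx hd).2.1⟩
  refine ⟨patch φ Fs l, patch_cd l (fun i hi => (hφ i hi).cd) (fun i hi => hFc i (hls i hi)),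
    patch_nn l (fun i hi => (hφ i hi).nn) (fun i hi => (hφ i hi).le) (fun i hi => hFn i (hls i hi)),
    ?_, ?_, ?_⟩
  · intro z hzE hzs
    apply patch_eq l
    · intro i hi
      by_cases hd : dist z i ≤ 2 * ρ i
      · exact Or.inr (hFf i (hls i hi) z hzE hd)
      · exact Or.inl ((hφ i hi).zero z (le_of_not_ge hd))
    · obtain ⟨i, hi, hd⟩ := hcover z hzs
      exact ⟨i, hi, (hφ i hi).one z hd.le⟩
  · intro z hz
    obtain ⟨i, hi, hd⟩ := hcover z hz
    have his := hls i hi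
    have hip := hpos i his
    have hd2 : dist z i ≤ 2 * ρ i := by linarith
    refine ⟨i, his, hd.le, hbd z (ρ i) (Ps i) hip (hPc i his) ?_ (Or.inl ⟨i, hi, hd⟩)⟩
    intro x hx hdx
    have h1 := hcons i his x hx z hd2 hdx
    have h2 := hcons x hx i his z hdx hd2
    exact ⟨h1.1, h2.1, h1.2⟩
  · intro z r hr h
    have := hbd z r 0 hr contDiff_const (fun x hx hd => by simpa using h x hx hd) (Or.inr (by
      intro k hk
      have e : (0 : Euc n → ℝ) - 0 = 0 := sub_zero 0
      rw [e, it_zero, norm_zero]; positivity))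
    simpa using this

end patching
end

noncomputable section
open scoped BigOperators ContDiff

section czg
variable {m n : ℕ}

/-- The stopping condition. -/
def Good {n : ℕ} (E : Set (Euc n)) (OK : Euc n → ℝ → Prop) (x : Euc n) (r : ℝ) : Prop :=
  (∀ y ∈ E, ∀ y' ∈ E, dist y x ≤ r → dist y' x ≤ r → y = y') ∨ ∀ y ∈ E, dist y x ≤ r → OK y r

lemma Good.shrink {E : Set (Euc n)} {OK : Euc n → ℝ → Prop}
    (hOK : ∀ y r r', 0 < r' → r' ≤ r → OK y r → OK y r') {x x' : Euc n} {r r' : ℝ} (hr' : 0 < r')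
    (h : dist x' x + r' ≤ r) (hG : Good E OK x r) : Good E OK x' r' := by
  have h1 : ∀ y, dist y x' ≤ r' → dist y x ≤ r := by
    intro y hy
    have := dist_triangle y x' x
    linarith
  have h2 : r' ≤ r := by have := dist_nonneg (x := x') (y := x); linarith
  rcases hG with hG | hG
  · exact Or.inl fun y hy y' hy' hd hd' => hG y hy y' hy' (h1 y hd) (h1 y' hd')
  · exact Or.inr fun y hy hd => hOK y r r' hr' h2 (hG y hy (h1 y hd))

lemma scale_ex {E : Set (Euc n)} (hE : E.Finite) {OK : Euc n → ℝ → Prop}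
    (hOK : ∀ y r r', 0 < r' → r' ≤ r → OK y r → OK y r') {M : ℝ} (hM : 0 < M) :
    ∃ (r : Euc n → ℝ) (r0 : ℝ), 0 < r0 ∧ ∀ x, r0 ≤ r x ∧ r x ≤ M ∧ Good E OK x (r x) ∧
      (r x < M → 2 * r x ≤ M ∧ ¬ Good E OK x (2 * r x)) ∧
      ∀ x', dist x' x ≤ r x / 2 → r x ≤ 2 * r x' := by
  classical
  obtain ⟨ε, hε, hsep⟩ : ∃ ε > 0, ∀ y ∈ E, ∀ y' ∈ E, dist y y' < ε → y = y' := by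
    by_cases hnt : E.Nontrivial
    · refine ⟨E.infsep, (Set.Finite.infsep_pos_iff_nontrivial hE).2 hnt, ?_⟩
      intro y hy y' hy' hd
      by_contra hne
      exact absurd (Set.infsep_le_dist_of_mem hy hy' hne) (not_le.2 hd)
    · rw [Set.not_nontrivial_iff] at hnt
      exact ⟨1, one_pos, fun y hy y' hy' _ => hnt hy hy'⟩
  let q : ℕ → ℝ := fun j => M * (1 / 2) ^ j
  have hq : ∀ j, 0 < q j := fun j => by positivity
  have hq1 : ∀ j, q (j + 1) = q j / 2 := fun j => by simp only [q, pow_succ]; ring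
  have hqm : ∀ i j, i ≤ j → q j ≤ q i := by
    intro i j hij
    simp only [q]
    have : ((1 : ℝ) / 2) ^ j ≤ (1 / 2) ^ i := pow_le_pow_of_le_one (by norm_num) (by norm_num) hij
    gcongr
  obtain ⟨J, hJ⟩ : ∃ J, q J < ε / 2 := by
    obtain ⟨J, hJ⟩ := exists_pow_lt_of_lt_one (show 0 < ε / 2 / M by positivity)
      (by norm_num : (1 : ℝ) / 2 < 1)
    refine ⟨J, ?_⟩
    rw [lt_div_iff₀ hM] at hJ
    simp only [q]; linarith
  have hex : ∀ x, Good E OK x (q J) := by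
    intro x
    refine Or.inl fun y hy y' hy' hd hd' => hsep y hy y' hy' ?_
    have := dist_triangle_right y y' x
    linarith
  have hex' : ∀ x, ∃ j, Good E OK x (q j) := fun x => ⟨J, hex x⟩
  refine ⟨fun x => q (Nat.find (hex' x)), q J, hq J, fun x => ⟨?_, ?_, ?_, ?_, ?_⟩⟩
  · exact hqm _ _ (Nat.find_min' (hex' x) (hex x))
  · have := hqm 0 _ (Nat.zero_le (Nat.find (hex' x)))
    simpa [q] using this
  · exact Nat.find_spec (hex' x)
  · intro hlt
    have hlt' : q (Nat.find (hex' x)) < M := hlt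
    show 2 * q (Nat.find (hex' x)) ≤ M ∧ ¬ Good E OK x (2 * q (Nat.find (hex' x)))
    rcases h : Nat.find (hex' x) with _ | j
    · rw [h] at hlt'; simp [q] at hlt'
    · have e : 2 * q (j + 1) = q j := by rw [hq1]; ring
      rw [e]
      refine ⟨?_, Nat.find_min (hex' x) (by omega)⟩
      have := hqm 0 j (Nat.zero_le _)
      simpa [q] using this
  · intro x' hd
    have hd' : dist x' x ≤ q (Nat.find (hex' x)) / 2 := hd
    show q (Nat.find (hex' x)) ≤ 2 * q (Nat.find (hex' x'))
    have h1 : Good E OK x' (q (Nat.find (hex' x) + 1)) := by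
      refine (Nat.find_spec (hex' x)).shrink hOK (hq _) ?_
      rw [hq1]; linarith
    have h2 := Nat.find_min' (hex' x') h1
    have h3 := hqm _ _ h2
    rw [hq1] at h3
    linarith

end czg
end

noncomputable section
open scoped BigOperators ContDiff

section czg2
variable {m n : ℕ}

lemma Bd_zero (x : Euc n) {K r : ℝ} (hK : 0 ≤ K) (hr : 0 ≤ r) :
    Bd m (((0 : Pol m n) : Pol m n) : Euc n → ℝ) x K r := by
  intro k hk
  have h1 := it_smul (F := ((0 : Pol m n) : Euc n → ℝ)) (pcd (0 : Pol m n) k) 0 x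
  have h2 : (0 : ℝ) • ((0 : Pol m n) : Euc n → ℝ) = ((0 : Pol m n) : Euc n → ℝ) := by
    funext z; simp
  rw [h2, zero_smul] at h1
  rw [h1, norm_zero]
  positivity

lemma Bd.psub {x : Euc n} {P Q R : Pol m n} {K K' r : ℝ}
    (h1 : Bd m ((P - R : Pol m n) : Euc n → ℝ) x K r)
    (h2 : Bd m ((Q - R : Pol m n) : Euc n → ℝ) x K' r) :
    Bd m ((P - Q : Pol m n) : Euc n → ℝ) x (K + K') r := by
  have := h1.sub (pcd _ m) (pcd _ m) h2
  have e : ((P - Q : Pol m n) : Euc n → ℝ) = ((P - R : Pol m n) : Euc n → ℝ) - ((Q - R : Pol m n) : Euc n → ℝ) := by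
    funext z; simp
  rw [e]; exact this

lemma Bd.fadd {x : Euc n} {F : Euc n → ℝ} (hF : ContDiff ℝ (m : ℕ) F) {P R : Pol m n} {K K' r : ℝ}
    (h1 : Bd m (F - (P : Euc n → ℝ)) x K r)
    (h2 : Bd m ((P - R : Pol m n) : Euc n → ℝ) x K' r) :
    Bd m (F - (R : Euc n → ℝ)) x (K + K') r := by
  have := h1.add (cdSub hF (pcd _ m)) (pcd _ m) h2
  have e : F - (R : Euc n → ℝ) = (F - (P : Euc n → ℝ)) + ((P - R : Pol m n) : Euc n → ℝ) := by
    funext z; simp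
  rw [e]; exact this

set_option maxHeartbeats 2000000 in
/-- The Calderon-Zygmund gluing lemma. -/
lemma CZG (m n : ℕ) (K ci c1 : ℝ) (hK : 0 ≤ K) (hci : 0 < ci) (hc1 : 0 < c1) (hc11 : c1 ≤ 1) :
    ∃ c Ch : ℝ, 0 < c ∧ c ≤ 1 ∧ ∀ (E : Set (Euc n)) (f : Euc n → ℝ) (x0 : Euc n) (δ : ℝ)
      (Pf : Euc n → Pol m n) (P0 : Pol m n) (OK : Euc n → ℝ → Prop), E.Finite → 0 < δ →
      (∀ y r r', 0 < r' → r' ≤ r → OK y r → OK y r') →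
      (∀ y ∈ E, ∀ r, dist y x0 ≤ c1 * δ → 0 < r → r ≤ c1 * δ → OK y r →
        ∃ F, ContDiff ℝ (m : ℕ) F ∧ (∀ z, 0 ≤ F z) ∧ (∀ z ∈ E, dist z y ≤ ci * r → F z = f z) ∧
          ∀ z, dist z y ≤ ci * r → Bd m (F - (Pf y : Euc n → ℝ)) z K r) →
      (∀ y ∈ E, ∀ r, dist y x0 ≤ c1 * δ → 0 < r → r ≤ c1 * δ →
        ∃ F, ContDiff ℝ (m : ℕ) F ∧ (∀ z, 0 ≤ F z) ∧ F y = f y ∧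
          ∀ z, dist z y ≤ r → Bd m (F - (Pf y : Euc n → ℝ)) z K r) →
      (∃ F, ContDiff ℝ (m : ℕ) F ∧ (∀ z, 0 ≤ F z) ∧
          ∀ z, dist z x0 ≤ δ → Bd m (F - (P0 : Euc n → ℝ)) z K δ) →
      (∀ y ∈ E, ∀ y' ∈ E, ∀ r, dist y x0 ≤ c1 * δ → dist y' x0 ≤ c1 * δ → 0 < r → r ≤ c1 * δ →
        dist y' y ≤ 4 * r → ¬ OK y r → Bd m ((Pf y' - Pf y : Pol m n) : Euc n → ℝ) y K r) →
      (∀ y ∈ E, dist y x0 ≤ c1 * δ → Bd m ((Pf y - P0 : Pol m n) : Euc n → ℝ) y K δ) →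
      ∃ F, ContDiff ℝ (m : ℕ) F ∧ (∀ z, 0 ≤ F z) ∧ (∀ z ∈ E, dist z x0 ≤ c * δ → F z = f z) ∧
          ∀ z, dist z x0 ≤ c * δ → Bd m (F - (P0 : Euc n → ℝ)) z Ch δ := by
  set θ : ℝ := min (1 / 8) (ci / 4) with hθ
  have hθ0 : 0 < θ := lt_min (by norm_num) (by positivity)
  have hθ8 : θ ≤ 1 / 8 := min_le_left _ _
  have hθi : θ ≤ ci / 4 := min_le_right _ _
  set K3 : ℝ := (8 / c1) ^ m * K with hK3
  set K4 : ℝ := (16 / c1) ^ m * (2 ^ m * K + 2 ^ m * K) with hK4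
  set K5 : ℝ := (θ⁻¹) ^ m * (2 ^ m * K3 + K4) with hK5
  have h8 : (8 : ℝ) ≤ 8 / c1 := by rw [le_div_iff₀ hc1]; linarith
  have h16 : (16 : ℝ) ≤ 16 / c1 := by rw [le_div_iff₀ hc1]; linarith
  have hK3' : 0 ≤ K3 := by positivity
  have hK4' : 0 ≤ K4 := by positivity
  have hK5' : 0 ≤ K5 := by positivity
  obtain ⟨K1, hK1, HPT⟩ := PT m n K5 hK5'
  refine ⟨c1 / 8, K1 + 2 ^ m * K, by positivity, by linarith, ?_⟩
  intro E f x0 δ Pf P0 OK hE hδ ha hb hc hd he hf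
  set M : ℝ := c1 * δ / 8 with hM
  have hM0 : 0 < M := by positivity
  have hMδ : 8 * M ≤ δ := by rw [hM]; nlinarith
  have hM8 : c1 * δ = 8 * M := by rw [hM]; ring
  have hcM : c1 / 8 * δ = M := by rw [hM]; ring
  rw [hcM]
  rw [hM8] at hb hc he hf
  obtain ⟨r, r0, hr0, hr⟩ := scale_ex hE ha hM0
  have hrpos : ∀ x, 0 < r x := fun x => hr0.trans_le (hr x).1
  have hrM : ∀ x, r x ≤ M := fun x => (hr x).2.1
  have near : ∀ x y, dist x x0 ≤ M → dist y x ≤ 2 * r x → dist y x0 ≤ 8 * M := by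
    intro x y h1 h2
    have := dist_triangle y x x0
    have := hrM x
    linarith
  -- pieces
  have piece : ∀ x, dist x x0 ≤ M → ∃ (F : Euc n → ℝ) (P : Pol m n), ContDiff ℝ (m : ℕ) F ∧
      (∀ z, 0 ≤ F z) ∧ (∀ z ∈ E, dist z x ≤ 2 * (θ * r x) → F z = f z) ∧
      (∀ z, dist z x ≤ 2 * (θ * r x) → Bd m (F - (P : Euc n → ℝ)) z K3 (r x)) ∧
      ((P = P0 ∧ r x = M) ∨ ∃ y ∈ E, dist y x ≤ 2 * r x ∧ P = Pf y) := by
    intro x hx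
    have hrp := hrpos x
    have hrm := hrM x
    have hθr : θ * r x ≤ r x / 8 := by nlinarith
    have hθr0 : 0 < θ * r x := by positivity
    have hKK3 : K ≤ K3 := by
      rw [hK3]
      have : 1 ≤ (8 / c1) ^ m := one_le_pow₀ (by linarith)
      nlinarith
    by_cases h2 : ∃ y ∈ E, ∃ y' ∈ E, dist y x ≤ 2 * (θ * r x) ∧ dist y' x ≤ 2 * (θ * r x) ∧ y ≠ y'
    · obtain ⟨y, hy, y', hy', hyd, hyd', hne⟩ := h2
      have hOK : OK y (r x) := by
        rcases (hr x).2.2.1 with hg | hg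
        · exact absurd (hg y hy y' hy' (by linarith) (by linarith)) hne
        · exact hg y hy (by linarith)
      obtain ⟨F, F1, F2, F3, F4⟩ := hb y hy (r x) (near x y hx (by linarith)) hrp (by linarith) hOK
      have hzz : ∀ z, dist z x ≤ 2 * (θ * r x) → dist z y ≤ ci * r x := by
        intro z hz
        have := dist_triangle_right z y x
        have : θ * r x ≤ ci / 4 * r x := by gcongr
        linarith
      exact ⟨F, Pf y, F1, F2, fun z hz hzd => F3 z hz (hzz z hzd),
        fun z hz => (F4 z (hzz z hz)).mono hrp.le hKK3, Or.inr ⟨y, hy, by linarith, rfl⟩⟩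
    · push Not at h2
      by_cases h1 : ∃ y ∈ E, dist y x ≤ 2 * (θ * r x)
      · obtain ⟨y, hy, hyd⟩ := h1
        obtain ⟨F, F1, F2, F3, F4⟩ := hc y hy (r x) (near x y hx (by linarith)) hrp (by linarith)
        refine ⟨F, Pf y, F1, F2, fun z hz hzd => ?_, fun z hz => (F4 z ?_).mono hrp.le hKK3,
          Or.inr ⟨y, hy, by linarith, rfl⟩⟩
        · rw [← h2 y hy z hz hyd hzd]; exact F3
        · have := dist_triangle_right z y x
          linarith
      · push Not at h1
        rcases hrm.eq_or_lt with hrE | hrL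
        · obtain ⟨F, F1, F2, F4⟩ := hd
          refine ⟨F, P0, F1, F2, fun z hz hzd => absurd (h1 z hz) (not_lt.2 hzd), fun z hz => ?_,
            Or.inl ⟨rfl, hrE⟩⟩
          refine (F4 z ?_).down hrp.le hδ.le (by linarith) ?_
          · have := dist_triangle z x x0
            linarith
          · rw [hrE, hM]; field_simp; rfl
        · obtain ⟨h3, h4⟩ := (hr x).2.2.2.1 hrL
          unfold Good at h4
          push Not at h4
          obtain ⟨-, y, hy, hyd, -⟩ := h4
          obtain ⟨F, F1, F2, F3, F4⟩ := hc y hy (4 * r x) (near x y hx (by linarith)) (by linarith)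
            (by linarith)
          refine ⟨F, Pf y, F1, F2, fun z hz hzd => absurd (h1 z hz) (not_lt.2 hzd), fun z hz => ?_,
            Or.inr ⟨y, hy, by linarith, rfl⟩⟩
          refine (F4 z ?_).down hrp.le (by linarith) (by linarith) ?_
          · have := dist_triangle_right z y x
            linarith
          · nlinarith
  choose! Fs Ps pcd1 pnn peq pbd palt using piece
  -- comparison with P0
  have toP0 : ∀ x, dist x x0 ≤ M → ∀ z, dist z x ≤ 2 * (θ * r x) →
      Bd m ((Ps x - P0 : Pol m n) : Euc n → ℝ) z (2 ^ m * K) δ := by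
    intro x hx z hz
    have hrp := hrpos x
    have hrm := hrM x
    have hθr : θ * r x ≤ r x / 8 := by nlinarith
    rcases palt x hx with ⟨h, -⟩ | ⟨y, hy, hyd, h⟩
    · rw [h, sub_self]
      exact Bd_zero z (by positivity) hδ.le
    · rw [h]
      refine (hf y hy (near x y hx hyd)).move hδ ?_
      have := dist_triangle_right z y x
      linarith
  have cons : ∀ x, dist x x0 ≤ M → ∀ x', dist x' x0 ≤ M → ∀ z, dist z x ≤ 2 * (θ * r x) →
      dist z x' ≤ 2 * (θ * r x') → r x ≤ 2 * r x' → r x' ≤ 2 * r x →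
      Bd m ((Ps x' - Ps x : Pol m n) : Euc n → ℝ) z K4 (r x) := by
    intro x hx x' hx' z hz hz' h1 h2
    have hrp := hrpos x
    have hrm := hrM x
    have hθr : θ * r x ≤ r x / 8 := by nlinarith
    have hrp' := hrpos x'
    have hrm' := hrM x'
    have hθr' : θ * r x' ≤ r x' / 8 := by nlinarith
    by_cases hbig : M ≤ 2 * r x
    · refine ((toP0 x' hx' z hz').psub (toP0 x hx z hz)).down hrp.le hδ.le (by linarith) ?_
      have : 16 / c1 * r x ≥ 16 / c1 * (M / 2) := by gcongr; linarith
      have e : 16 / c1 * (M / 2) = δ := by rw [hM]; field_simp; norm_num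
      linarith
    · push Not at hbig
      have hlt : r x < M := by linarith
      have hlt' : r x' < M := by linarith
      obtain ⟨h3, h4⟩ := (hr x).2.2.2.1 hlt
      unfold Good at h4
      push Not at h4
      obtain ⟨-, y, hy, hyd, hyOK⟩ := h4
      rcases palt x hx with ⟨-, h⟩ | ⟨y1, hy1, hyd1, e1⟩
      · linarith
      rcases palt x' hx' with ⟨-, h⟩ | ⟨y2, hy2, hyd2, e2⟩
      · linarith
      rw [e1, e2]
      have t1 := dist_triangle_right y1 y x
      have t2 := dist_triangle_right y2 z x'
      have t3 := dist_triangle_right y z x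
      have t4 := dist_triangle_right y2 y z
      have hzy : dist z y ≤ 4 * r x := by rw [dist_comm]; linarith
      have b1 := (((he y hy y1 hy1 (2 * r x) (near x y hx hyd) (near x y1 hx hyd1) (by linarith)
        (by linarith) (by linarith) hyOK).up (by linarith) (by linarith : 2 * r x ≤ 4 * r x)).move
        (by linarith) hzy)
      have b2 := (((he y hy y2 hy2 (2 * r x) (near x y hx hyd) (near x' y2 hx' hyd2) (by linarith)
        (by linarith) (by linarith) hyOK).up (by linarith) (by linarith : 2 * r x ≤ 4 * r x)).move
        (by linarith) hzy)
      refine (b2.psub b1).down hrp.le (by linarith) (by linarith) ?_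
      nlinarith
  obtain ⟨F, F1, F2, F3, F4, -⟩ := HPT E f (Metric.closedBall x0 M) (fun x => θ * r x) (θ * r0) (θ * M)
    (M + dist x0 0) Fs (fun x => (Ps x : Euc n → ℝ)) (Metric.closedBall_subset_closedBall' le_rfl)
    (by positivity) (fun x _ => ⟨by have := (hr x).1; gcongr, by have := hrM x; gcongr⟩)
    (fun x hx => pcd1 x hx) (fun x hx => pnn x hx) (fun x _ => pcd _ m)
    (fun x hx z hz hzd => peq x hx z hz hzd) (by
      intro x hx x' hx' z hz hz'
      have hrp := hrpos x
      have hθr : θ * r x ≤ r x / 8 := by nlinarith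
      have hrp' := hrpos x'
      have hθr' : θ * r x' ≤ r x' / 8 := by nlinarith
      have hz1 : dist z x ≤ 2 * (θ * r x) := hz
      have hz1' : dist z x' ≤ 2 * (θ * r x') := hz'
      have t1 := dist_triangle_left x x' z
      have t2 := dist_comm x x'
      have h1 : r x ≤ 2 * r x' := by
        by_cases h : r x ≤ r x'
        · linarith
        · exact (hr x).2.2.2.2 x' (by linarith)
      have h2 : r x' ≤ 2 * r x := by
        by_cases h : r x' ≤ r x
        · linarith
        · exact (hr x').2.2.2.2 x (by linarith)
      refine ⟨by show θ * r x ≤ 2 * (θ * r x'); nlinarith, ?_⟩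
      have b1 := (pbd x' hx' z hz1').down hrp.le hrp'.le (by norm_num) h2
      have b2 := cons x hx x' hx' z hz1 hz1' h1 h2
      refine (b1.fadd (pcd1 x' hx') b2).down (by positivity) hrp.le ?_ ?_
      · rw [one_le_inv₀ hθ0]; linarith
      · show r x ≤ θ⁻¹ * (θ * r x)
        rw [inv_mul_cancel_left₀ hθ0.ne'])
  refine ⟨F, F1, F2, fun z hz hzd => F3 z hz hzd, ?_⟩
  intro z hz
  obtain ⟨x, hx, hzx, hB⟩ := F4 z hz
  have hrp := hrpos x
  have hrm := hrM x
  have hθr : θ * r x ≤ r x / 8 := by nlinarith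
  have hθr0 : 0 < θ * r x := by positivity
  have hzx' : dist z x ≤ θ * r x := hzx
  exact ((hB.up hθr0.le (by linarith)).fadd F1 (toP0 x hx z (by linarith)))

end czg2
end

noncomputable section
open scoped BigOperators ContDiff

section main
variable {m n : ℕ}

lemma WB.scale {G : ℝ → Set (Pol m n)} (hG : CF G) {y : Euc n} {r r' : ℝ} (hr' : 0 < r')
    (hrr : r' ≤ r) {A : Finset (Fin n → ℕ)} {P : Pol m n} {C : ℝ} {Q : (Fin n → ℕ) → Pol m n}
    (h : WB m G (cf m y r) A P C Q) :
    WB m G (cf m y r') A P C (fun α => (r' / r) ^ (m - deg α) • Q α) := by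
  have hr : 0 < r := hr'.trans_le hrr
  have hq : r' / r ≤ 1 := (div_le_one hr).2 hrr
  have hq0 : 0 < r' / r := by positivity
  have key : ∀ α β : Fin n → ℕ, cf m y r' β ((r' / r) ^ (m - deg α) • Q α) =
      (r' / r) ^ (m - deg α) * ((r / r') ^ (m - deg β) * cf m y r β (Q α)) := by
    intro α β
    rw [map_smul, smul_eq_mul, cf_apply, cf_apply, div_pow r r']
    congr 1
    field_simp
  refine ⟨h.sub, h.one, h.mem, ?_, ?_, ?_⟩
  · intro α hα
    have := TT_smul hG h.mem (h.tt α hα) (t := (r' / r) ^ (m - deg α)) (by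
      rw [abs_of_pos (by positivity)]; exact pow_le_one₀ hq0.le hq)
    rwa [smul_comm] at this
  · intro α hα β hβ
    rw [key, h.del α hα β hβ]
    split_ifs with he
    · subst he
      rw [mul_one, ← mul_pow]
      have : r' / r * (r / r') = 1 := by field_simp
      rw [this, one_pow]
    · simp
  · intro α hα β hβ hk
    rw [key, abs_mul, abs_mul, abs_of_pos (by positivity : 0 < (r' / r) ^ (m - deg α)),
      abs_of_pos (by positivity : 0 < (r / r') ^ (m - deg β)), ← mul_assoc]
    have hd := deg_le_of_kap hβ hk
    have h1 : (r' / r) ^ (m - deg α) * (r / r') ^ (m - deg β) ≤ 1 := by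
      have e : (r / r') ^ (m - deg β) = ((r' / r) ^ (m - deg β))⁻¹ := by
        rw [← inv_pow, inv_div]
      rw [e, ← div_eq_mul_inv, div_le_one (by positivity)]
      exact pow_le_pow_of_le_one hq0.le hq (by omega)
    have h2 := h.bd α hα β hβ hk
    calc _ ≤ 1 * |cf m y r β (Q α)| := by gcongr
      _ ≤ C := by rw [one_mul]; exact h2

lemma WB.anti {V : Type*} [AddCommGroup V] [Module ℝ V] {G G' : ℝ → Set V}
    {c : (Fin n → ℕ) → V →ₗ[ℝ] ℝ} {A : Finset (Fin n → ℕ)} {P : V} {C : ℝ}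
    {Q : (Fin n → ℕ) → V} (hGG : ∀ C, G C ⊆ G' C)
    (h : WB m G c A P C Q) : WB m G' c A P C Q :=
  ⟨h.sub, h.one, hGG _ h.mem, fun α hα => ⟨hGG _ (h.tt α hα).1, hGG _ (h.tt α hα).2⟩, h.del, h.bd⟩

lemma cf_shrink {y : Euc n} {δ c1 K : ℝ} (hδ : 0 < δ) (hc0 : 0 < c1) (hc1 : c1 ≤ 1) {P : Pol m n}
    (h : Bd m (P : Euc n → ℝ) y K (c1 * δ)) {β : Fin n → ℕ} (hβ : β ∈ idx m n) :
    |cf m y δ β P| ≤ c1 * K := by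
  have hβ' := mem_idx.1 hβ
  have hK := h.nonneg
  rw [cf_apply, abs_div, abs_of_pos (by positivity : 0 < δ ^ (m - deg β)), div_le_iff₀ (by positivity)]
  refine (abs_mD_le β (pcd P _) y).trans ((h _ hβ'.le).trans ?_)
  rw [mul_pow]
  have : c1 ^ (m - deg β) ≤ c1 := by
    calc c1 ^ (m - deg β) ≤ c1 ^ 1 := pow_le_pow_of_le_one hc0.le hc1 (by omega)
      _ = c1 := pow_one _
  have : c1 ^ (m - deg β) * δ ^ (m - deg β) ≤ c1 * δ ^ (m - deg β) := by gcongr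
  nlinarith

/-- The main local statement. -/
def MainAt (m n N : ℕ) : Prop := ∀ C : ℝ, ∃ (k : ℕ) (c Ch : ℝ), 0 < c ∧ c ≤ 1 ∧
  ∀ (E : Set (Euc n)) (f : Euc n → ℝ) (A : Finset (Fin n → ℕ)) (x0 : Euc n) (P0 : Pol m n) (δ : ℝ)
    (Q : (Fin n → ℕ) → Pol m n), E.Finite → Mono m A → 0 < δ → δ ≤ 1 →
    wt m (idx m n) < wt m A + N →
    WB m (Gam m E f k x0) (cf m x0 δ) A P0 C Q → SBd m (cf m x0 δ) A C Q →
    ∃ F, ContDiff ℝ (m : ℕ) F ∧ (∀ z, 0 ≤ F z) ∧ (∀ z ∈ E, dist z x0 ≤ c * δ → F z = f z) ∧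
      ∀ z, dist z x0 ≤ c * δ → Bd m (F - (P0 : Euc n → ℝ)) z Ch δ

lemma main_zero (m n : ℕ) : MainAt m n 0 := by
  intro C
  refine ⟨0, 1, 1, one_pos, le_rfl, ?_⟩
  intro E f A x0 P0 δ Q hE hA hδ hδ1 hw h hs
  exact absurd (wt_le h.sub) (by omega)

set_option maxHeartbeats 2000000 in
lemma main_step (m n N : ℕ) (IH : MainAt m n N) : MainAt m n (N + 1) := by
  intro C
  by_cases hC : 1 ≤ C
  swap
  · exact ⟨0, 1, 1, one_pos, le_rfl, fun E f A x0 P0 δ Q _ _ _ _ _ h _ => absurd h.one hC⟩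
  have hNN := NN_one m n
  have hLL := LL_one m n
  have h2m : (1 : ℝ) ≤ 2 ^ m := one_le_pow₀ (by norm_num)
  have h4m : (1 : ℝ) ≤ 4 ^ m := one_le_pow₀ (by norm_num)
  set D : ℝ := 2 ^ m * NN m n * (8 * LL m n ^ 3 * C ^ 2) with hD
  have hD1 : 1 ≤ D := by
    have a1 : 1 ≤ LL m n ^ 3 := one_le_pow₀ hLL
    have a2 : 1 ≤ C ^ 2 := one_le_pow₀ hC
    have a3 : 1 ≤ 2 ^ m * NN m n := one_le_mul_of_one_le_of_one_le h2m hNN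
    have a4 : 1 ≤ 8 * LL m n ^ 3 := by linarith
    exact one_le_mul_of_one_le_of_one_le a3 (one_le_mul_of_one_le_of_one_le a4 a2)
  set c1 : ℝ := D⁻¹ with hc1
  have hc10 : 0 < c1 := by positivity
  have hc11 : c1 ≤ 1 := inv_le_one_of_one_le₀ hD1
  set κ : ℝ := 2 ^ m * NN m n * c1 with hκ
  have hκ0 : 0 ≤ κ := by positivity
  have hκ1 : κ * (8 * LL m n ^ 3 * C ^ 2) ≤ 1 := by
    have : κ * (8 * LL m n ^ 3 * C ^ 2) = D * D⁻¹ := by rw [hκ, hD, hc1, hD]; ring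
    rw [this, mul_inv_cancel₀ (by positivity)]
  set C1 : ℝ := 4 * LL m n ^ 2 * C with hC1
  have hC11 : 1 ≤ C1 := by
    have a1 : 1 ≤ LL m n ^ 2 := one_le_pow₀ hLL
    exact one_le_mul_of_one_le_of_one_le (by linarith) hC
  set CZZ : ℝ := 4 ^ m * (2 ^ m * C1) with hCZZ
  have hCZ1 : C1 ≤ CZZ := by
    have : 1 * (1 * C1) ≤ 4 ^ m * (2 ^ m * C1) := by gcongr
    linarith
  set C2 : ℝ := CZ CZZ with hC2
  set C3 : ℝ := max C1 C2 with hC3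
  set C4 : ℝ := max C2 (CZ C3) with hC4
  set N2 : ℝ := max (NZ m n C3) 1 with hN2
  obtain ⟨C5, HR⟩ := chgLabel m n (fun C => C + gK m n C) (wt m (idx m n)) C4
  obtain ⟨ki, ci, Ci, hci0, hci1, HI⟩ := IH C5
  set k2 : ℕ := max ki 1 with hk2
  set k1 : ℕ := Dn m n * k2 with hk1
  have hDn : 1 ≤ Dn m n := by unfold Dn; omega
  have hk12 : k2 ≤ k1 := by rw [hk1]; nlinarith
  have hk11 : 1 ≤ k1 := (le_max_right _ _).trans hk12
  set Kb : ℝ := |Ci| + 2 ^ m * (NN m n * N2) with hKb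
  have hN20 : 1 ≤ N2 := le_max_right _ _
  have hKb0 : 0 ≤ Kb := by positivity
  have hNZ0 : 0 ≤ NZ m n CZZ := by
    unfold NZ
    have : 0 ≤ CZZ := by linarith
    positivity
  set K : ℝ := Kb + 2 ^ m * C1 + 2 ^ m * C + NN m n * NZ m n CZZ + NN m n with hK
  have p1 : 0 ≤ 2 ^ m * C1 := by positivity
  have p2 : 0 ≤ 2 ^ m * C := by positivity
  have p3 : 0 ≤ NN m n * NZ m n CZZ := by positivity
  have hK0 : 0 ≤ K := by linarith
  obtain ⟨c, Ch, hc0, hcle, HG⟩ := CZG m n K ci c1 hK0 hci0 hc10 hc11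
  refine ⟨Dn m n * k1, c, Ch, hc0, hcle, ?_⟩
  intro E f A x0 P0 δ Q hE hA hδ hδ1 hw hWB hSB
  have hcδ0 : 0 < c1 * δ := by positivity
  have hcδ : c1 * δ ≤ δ := by nlinarith
  -- transported bases
  have tr : ∀ y, dist y x0 ≤ c1 * δ → ∃ (P' : Pol m n) (Q' : (Fin n → ℕ) → Pol m n),
      WB m (Gam m E f k1 y) (cf m y δ) A P' C1 Q' ∧
      VA A (P' - P0) ∧ ∀ β ∈ idx m n, |cf m y δ β (P' - P0)| ≤ 1 := by
    intro y hy
    obtain ⟨P', Q', t1, -, t2, t3⟩ := transport (Gam_CF E f k1 y) hWB hSB (c' := cf m y δ) hκ0 hκ1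
      (by
        intro R hR
        obtain ⟨R', hR', hB⟩ := H3 hE (le_refl (Dn m n * k1)) hcδ0 hy hR
        refine ⟨R', hR', fun β hβ => (cf_shrink hδ hc10 hc11 hB hβ).trans ?_⟩
        have : 1 * (c1 * (2 ^ m * C)) ≤ NN m n * (c1 * (2 ^ m * C)) := by gcongr
        rw [hκ]; linarith)
      (by
        intro W B hB hW β hβ
        exact cf_diff hδ hB hW hc11 hy hβ)
    refine ⟨P', Q', t1, VA_of_point hA hWB.sub (x := y) fun α hα => ?_, t3⟩
    exact (cf_zero_iff hδ).1 (t2 α hα)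
  choose! Pf Qf tWB tVA tcf using tr
  set OK : Euc n → ℝ → Prop := fun y r => ∃ A' b Q', wt m A < wt m A' ∧
    WB m (Gam m E f k2 y) (cf m y r) A' b C2 Q' ∧ VA A (b - Pf y) with hOK
  have base : ∀ y r, dist y x0 ≤ c1 * δ → 0 < r → r ≤ c1 * δ →
      ∃ Q', WB m (Gam m E f k2 y) (cf m y r) A (Pf y) C1 Q' := fun y r hy hr0 hr =>
    ⟨_, ((tWB y hy).anti (fun C => Gam_anti hk12 y C)).scale (Gam_CF E f k2 y) hr0 (hr.trans hcδ)⟩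
  refine HG E f x0 δ Pf P0 OK hE hδ ?_ ?_ ?_ ?_ ?_ ?_
  · rintro y r r' hr' hrr ⟨A', b, Q', h1, h2, h3⟩
    exact ⟨A', b, _, h1, h2.scale (Gam_CF E f k2 y) hr' hrr, h3⟩
  · rintro y - r hy hr0 hr ⟨A', b, Q', h1, h2, h3⟩
    have hG := Gam_CF (m := m) E f k2 y
    obtain ⟨Q0, hb0⟩ := base y r hy hr0 hr
    have hb3 := hb0.mono hG (le_max_left C1 C2)
    have hbmem : b ∈ Gam m E f k2 y C3 := hG.mono _ _ (le_max_right C1 C2) h2.mem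
    have step : ∃ A' b Q', wt m A < wt m A' ∧ WB m (Gam m E f k2 y) (cf m y r) A' b C4 Q' ∧
        ∀ β ∈ idx m n, |cf m y r β (b - Pf y)| ≤ N2 := by
      rcases hb3.Z hG hbmem (Ph := b) (fun α hα => (cf_zero_iff hr0).2 (h3 α hα y)) (by
        intro β _
        rw [sub_self, map_zero, abs_zero]
        exact hb3.one.trans' zero_le_one) with hz | ⟨A'', b', Q'', -, g1, g2, -, g4⟩
      · exact ⟨A', b, Q', h1, h2.mono hG (le_max_left _ _), fun β hβ => (hz β hβ).trans (le_max_left _ _)⟩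
      · exact ⟨A'', b', Q'', g1, g2.mono hG (le_max_right _ _), fun β hβ => (g4 β hβ).trans hN20⟩
    obtain ⟨A1, b1, Q1, s1, s2, s3⟩ := step
    obtain ⟨A2, Q2, u1, u2, u3, u4⟩ := HR (Pol m n) (Gam m E f k2 y) (cf m y r) A1 b1 Q1 hG
      (H2 hr0 (by linarith) b1) s2 (by omega)
    obtain ⟨F, F1, F2, F3, F4⟩ := HI E f A2 y b1 r Q2 hE u1 hr0 (by linarith) (by omega)
      (u3.anti (fun C => Gam_anti (le_max_left _ _) y C)) u4
    refine ⟨F, F1, F2, F3, fun z hz => ?_⟩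
    have hzr : dist z y ≤ r := hz.trans (by nlinarith)
    have v1 := (Bd_of_cf hr0 (by linarith) s3).move hr0 hzr
    refine ((F4 z hz).fadd F1 v1).mono hr0.le ?_
    have := le_abs_self Ci
    linarith
  · intro y hyE r hy hr0 hr
    obtain ⟨F, hF, hJ⟩ := (tWB y hy).mem {y} (by simpa using hyE) (by simpa using hk11)
    refine ⟨F, hF.cd, hF.nn, hF.eq y rfl, fun z hz => ?_⟩
    exact (jet_taylor hF.cd (fun w _ => hF.bd m le_rfl w) hJ hr0 hz).mono hr0.le (by linarith)
  · obtain ⟨F, hF, hJ⟩ := hWB.mem ∅ (Set.empty_subset _) (by simp)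
    refine ⟨F, hF.cd, hF.nn, fun z hz => ?_⟩
    exact (jet_taylor hF.cd (fun w _ => hF.bd m le_rfl w) hJ hδ hz).mono hδ.le (by linarith)
  · intro y _ y' _ r hy hy' hr0 hr hd hnot
    have hG := Gam_CF (m := m) E f k2 y
    obtain ⟨R, hR, hRB⟩ := H3 hE (le_refl (Dn m n * k2)) (by linarith : 0 < 4 * r)
      (by rw [dist_comm]; exact hd) (tWB y' hy').mem
    obtain ⟨Q0, hb0⟩ := base y r hy hr0 hr
    have hVA : VA A (Pf y' - Pf y) := by
      have := (tVA y' hy').sub (tVA y hy)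
      rwa [sub_sub_sub_cancel_right] at this
    have hRB' := hRB.down hr0.le (by linarith) (by norm_num) (le_refl (4 * r))
    rcases (hb0.mono hG hCZ1).Z hG (hG.mono _ _ hCZ1 hR) (Ph := Pf y')
      (fun α hα => (cf_zero_iff hr0).2 (hVA α hα y)) (fun β hβ => hRB'.cf hr0 hβ) with
      hz | ⟨A'', b', Q'', -, g1, g2, g3, -⟩
    · exact (Bd_of_cf hr0 hNZ0 hz).mono hr0.le (by linarith)
    · exact absurd ⟨A'', b', Q'', g1, g2, VA_of_point hA hWB.sub (x := y) fun α hα =>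
        (cf_zero_iff hr0).1 (g3 α hα)⟩ hnot
  · intro y _ hy
    exact (Bd_of_cf hδ zero_le_one (tcf y hy)).mono hδ.le (by linarith)

lemma main_all (m n N : ℕ) : MainAt m n N := by
  induction N with
  | zero => exact main_zero m n
  | succ N ih => exact main_step m n N ih

end main
end

/-- **Finiteness principle for nonnegative `C^m` interpolation** (Theorem, part (A)). -/
theorem nonneg_Cm_interpolation_finiteness (m n : ℕ) (hm : 0 < m) (hn : 0 < n) :
    ∃ (kSharp : ℕ) (CSharp : ℝ), 0 < CSharp ∧
      ∀ (E : Set (Euc n)), E.Finite → ∀ f : Euc n → ℝ, (∀ x ∈ E, 0 ≤ f x) →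
        (∀ S : Set (Euc n), S ⊆ E → S.ncard ≤ kSharp →
          ∃ FS : Euc n → ℝ, CmNormLe m n FS 1 ∧ (∀ y, 0 ≤ FS y) ∧ ∀ x ∈ S, FS x = f x) →
        ∃ F : Euc n → ℝ, CmNormLe m n F CSharp ∧ (∀ y, 0 ≤ F y) ∧ ∀ x ∈ E, F x = f x := by
  have hNN := NN_one m n
  have h2m : (1 : ℝ) ≤ 2 ^ m := one_le_pow₀ (by norm_num)
  obtain ⟨k, c, Ch, hc0, hc1, HM⟩ := main_all m n (wt m (idx m n) + 1) (NN m n)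
  set B : ℝ := |Ch| + 2 ^ m * NN m n + NN m n with hB
  have hB0 : 0 ≤ B := by positivity
  have hl : 1 ≤ 2 / c := by rw [le_div_iff₀ hc0]; linarith
  obtain ⟨K1, hK1, HPT⟩ := PT m n ((2 / c) ^ m * B) (by positivity)
  refine ⟨Dn m n * k, K1 + 1, by positivity, ?_⟩
  intro E hE f hf hS
  have hS' : ∀ S ⊆ E, S.ncard ≤ Dn m n * k → ∃ F, Wit m f ∅ (NN m n) F ∧ ∀ z ∈ S, F z = f z := by
    intro S hSE hSk
    obtain ⟨F, h1, h2, h3⟩ := hS S hSE hSk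
    have hcd : ContDiff ℝ (m : ℕ) F := by exact_mod_cast h1.1
    refine ⟨F, ⟨hcd, ?_, h2, by simp⟩, h3⟩
    intro j hj y
    have := dn_le_NN hj (cd_le hcd hj) y zero_le_one (fun α hα => h1.2 α (by omega) y)
    linarith
  have loc : ∀ x0 ∈ E, ∃ F, ContDiff ℝ (m : ℕ) F ∧ (∀ z, 0 ≤ F z) ∧
      (∀ z ∈ E, dist z x0 ≤ c → F z = f z) ∧
      ∀ z, dist z x0 ≤ c → Bd m F z ((2 / c) ^ m * B) (c / 2) := by
    intro x0 hx0
    obtain ⟨R, hR⟩ := helly_jet (m := m) hE f (fun F => Wit m f ∅ (NN m n) F) (fun F h => h.cd)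
      (fun F H hF hH a b ha hb hab => hF.combo hH ha hb hab) k x0 hS'
    have hRG : R ∈ Gam m E f k x0 (NN m n) := by
      intro S hSE hSk
      obtain ⟨F, h1, h2, h3⟩ := hR S hSE hSk
      exact ⟨F, ⟨h1.cd, h1.bd, h1.nn, h2⟩, h3⟩
    obtain ⟨F, F1, F2, F3, F4⟩ := HM E f ∅ x0 R 1 (fun _ => 0) hE (by intro α hα; simp at hα) one_pos
      le_rfl (by omega) ⟨by simp, hNN, hRG, by simp, by simp, by simp⟩ (by intro α hα; simp at hα)
    rw [mul_one] at F3 F4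
    obtain ⟨H, hH, hJ⟩ := hRG ∅ (Set.empty_subset _) (by simp)
    refine ⟨F, F1, F2, F3, fun z hz => ?_⟩
    have b1 := F4 z hz
    have b2 := jet_taylor hH.cd (fun w _ => hH.bd m le_rfl w) hJ one_pos (hz.trans hc1)
    have b3 : Bd m H z (NN m n) 1 := by
      intro j hj
      rw [one_pow, mul_one]
      exact hH.bd j hj z
    have b4 := (b1.sub (cdSub F1 (pcd R m)) (cdSub hH.cd (pcd R m)) b2).add
      (cdSub (cdSub F1 (pcd R m)) (cdSub hH.cd (pcd R m))) hH.cd b3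
    have e : (F - (R : Euc n → ℝ)) - (H - (R : Euc n → ℝ)) + H = F := by
      funext w; simp
    rw [e] at b4
    have b5 : Bd m F z B 1 := b4.mono zero_le_one (by have := le_abs_self Ch; linarith)
    exact b5.down (by positivity) zero_le_one hl (by field_simp; exact le_rfl)
  choose! Fs l1 l2 l3 l4 using loc
  obtain ⟨R, hR⟩ := hE.isBounded.subset_closedBall (0 : Euc n)
  have hcc : ∀ z x : Euc n, dist z x ≤ 2 * (c / 2) → dist z x ≤ c := fun z x h => by linarith
  obtain ⟨F, F1, F2, F3, -, F5⟩ := HPT E f E (fun _ => c / 2) (c / 2) (c / 2) R Fs (fun _ => 0) hR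
    (by positivity) (fun _ _ => ⟨le_rfl, le_rfl⟩) l1 l2 (fun _ _ => contDiff_const)
    (fun x hx z hz hd => l3 x hx z hz (hcc z x hd)) (by
      intro x hx x' hx' z hz hz'
      refine ⟨by linarith, ?_⟩
      rw [sub_zero]
      exact l4 x' hx' z (hcc z x' hz'))
  refine ⟨F, ⟨by exact_mod_cast F1, ?_⟩, F2, fun x hx => F3 x hx hx⟩
  intro α hα x
  have h1 := F5 x (c / 2) (by positivity) (fun y hy hd =>
    ⟨by linarith, by linarith, l4 y hy x (hcc x y hd)⟩)
  refine (abs_mD_le α (cd_le F1 hα) x).trans ((h1 _ hα).trans ?_)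
  have : (c / 2) ^ (m - deg α) ≤ 1 := pow_le_one₀ (by positivity) (by linarith)
  nlinarith
end
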